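/- arXiv:2208.14126 — 2 statements merged into one kernel-verified Lean document; each statement's English description precedes it below -/
import Mathlib

section
/- A minimal graph story S = (G, 5, τ) is 1-reroute realizable if and only if G does not contain K_5 as a subgraph. In particular, every minimal graph story with ω = 5 whose graph does not contain K_5 admits a 1-reroute realization on any arbitrarily chosen set of 5 points. -/
open Set

namespace GraphStories

/-- Points of the plane. -/
abbrev Pt : Type := ℝ × ℝ

/-- The vertex set of the window graph `G_i` (time `i` is 1-indexed, vertex
`v_j : Fin n` sits at position `j+1` in the ordering `τ`):
`v_j ∈ G_i` iff `max{1, i-ω+1} ≤ j+1 ≤ i`. -/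
def window (n ω i : ℕ) : Set (Fin n) := {j | j.val + 1 ≤ i ∧ i ≤ j.val + ω}

/-- All edges of `G` are visible: `|i - j| < ω` for every edge `(v_i, v_j)`. -/
def Visible (n ω : ℕ) (G : SimpleGraph (Fin n)) : Prop :=
  ∀ u v : Fin n, G.Adj u v → u.val < v.val + ω ∧ v.val < u.val + ω

/-- The data of a drawing: a position for every vertex, and a parametrized curve
for every (ordered) pair of vertices (only the data attached to the vertices and
edges of the relevant subgraph is meaningful). -/
structure RawDrawing (n : ℕ) where
  pos : Fin n → Pt
  curve : Fin n → Fin n → ℝ → Pt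

/-- `γ` (restricted to `[0,1]`) is a Jordan arc from `a` to `b`. -/
def IsArcFrom (γ : ℝ → Pt) (a b : Pt) : Prop :=
  ContinuousOn γ (Icc 0 1) ∧ InjOn γ (Icc 0 1) ∧ γ 0 = a ∧ γ 1 = b

/-- The set of points of an arc. -/
def arcBody (γ : ℝ → Pt) : Set Pt := γ '' Icc (0 : ℝ) 1

/-- The set of interior points of an arc (endpoints removed). -/
def arcInterior (γ : ℝ → Pt) : Set Pt := γ '' Ioo (0 : ℝ) 1

/-- `D` is a planar drawing of the subgraph of `G` induced by `S`, with the
vertices mapped to (distinct) points of `P` and the edges drawn as Jordan arcs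
which pairwise do not intersect except at common endpoints. -/
structure IsPlanarDrawingOn (n : ℕ) (G : SimpleGraph (Fin n)) (S : Set (Fin n))
    (P : Set Pt) (D : RawDrawing n) : Prop where
  pos_mem : ∀ v ∈ S, D.pos v ∈ P
  pos_inj : InjOn D.pos S
  curve_symm : ∀ u v : Fin n, D.curve v u = fun t => D.curve u v (1 - t)
  arc : ∀ u ∈ S, ∀ v ∈ S, G.Adj u v → IsArcFrom (D.curve u v) (D.pos u) (D.pos v)
  vertex_off_arc : ∀ u ∈ S, ∀ v ∈ S, G.Adj u v → ∀ w ∈ S,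
      D.pos w ∉ arcInterior (D.curve u v)
  no_cross : ∀ u ∈ S, ∀ v ∈ S, ∀ x ∈ S, ∀ y ∈ S, G.Adj u v → G.Adj x y →
      s(u, v) ≠ s(x, y) →
      arcInterior (D.curve u v) ∩ arcInterior (D.curve x y) = ∅

/-- `D` is a planar drawing of the subgraph of `G` induced by `S` (anywhere in
the plane). -/
def IsPlanarDrawing (n : ℕ) (G : SimpleGraph (Fin n)) (S : Set (Fin n))
    (D : RawDrawing n) : Prop :=
  IsPlanarDrawingOn n G S univ D

/-- A realization of the graph story `(G, ω, k, τ)` on the point set `P`: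
a sequence `Γ_1, …, Γ_n` of planar drawings of the window graphs `G_1, …, G_n`
on `P` (property R1) such that consecutive drawings restrict identically
(vertex positions and edge arcs) to the common subgraph `G_{i-1} ∩ G_i`
(property R2). -/
structure Realization (n ω : ℕ) (G : SimpleGraph (Fin n)) (P : Set Pt) where
  Γ : ℕ → RawDrawing n
  planar : ∀ i, 1 ≤ i → i ≤ n → IsPlanarDrawingOn n G (window n ω i) P (Γ i)
  pos_eq : ∀ i, 2 ≤ i → i ≤ n → ∀ v ∈ window n ω (i - 1) ∩ window n ω i,
      (Γ i).pos v = (Γ (i - 1)).pos v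
  curve_eq : ∀ i, 2 ≤ i → i ≤ n →
      ∀ u ∈ window n ω (i - 1) ∩ window n ω i,
      ∀ v ∈ window n ω (i - 1) ∩ window n ω i,
      G.Adj u v → (Γ i).curve u v = (Γ (i - 1)).curve u v

/-- The story `(G, ω, k, τ)` admits a realization on the point set `P`. -/
def RealizableOn (n ω : ℕ) (G : SimpleGraph (Fin n)) (P : Set Pt) : Prop :=
  Nonempty (Realization n ω G P)

/-- The story `(G, ω, k, τ)` is realizable: it admits a realization on some set
of `ω + k` points. -/
def Realizable (n ω k : ℕ) (G : SimpleGraph (Fin n)) : Prop :=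
  ∃ P : Finset Pt, P.card = ω + k ∧ RealizableOn n ω G ↑P


/-- The set of points of the plane used by the drawing `D` of the subgraph of
`G` induced by `S` (vertex points and edge arcs). -/
def drawingImage (n : ℕ) (G : SimpleGraph (Fin n)) (S : Set (Fin n))
    (D : RawDrawing n) : Set Pt :=
  (D.pos '' S) ∪
    ⋃ (u : Fin n) (v : Fin n) (_ : u ∈ S) (_ : v ∈ S) (_ : G.Adj u v),
      arcBody (D.curve u v)

/-- The two drawings `D, D'` of the subgraph of `G` induced by `S`, carrying the
respective sets `Q, Q'` of marked points, determine the same (face-weighted)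
planar embedding: some self-homeomorphism of the plane maps the first drawing
onto the second, vertex-by-vertex and arc-by-arc, and maps the first set of
marked points onto the second (so corresponding faces carry equally many
marked points).  Weights of faces are represented by marked points lying
inside them. -/
def SameMarkedEmbedding (n : ℕ) (G : SimpleGraph (Fin n)) (S : Set (Fin n))
    (D D' : RawDrawing n) (Q Q' : Set Pt) : Prop :=
  ∃ φ : Homeomorph Pt Pt,
    (∀ v ∈ S, φ (D.pos v) = D'.pos v) ∧
    (∀ u ∈ S, ∀ v ∈ S, G.Adj u v →
        φ '' arcBody (D.curve u v) = arcBody (D'.curve u v)) ∧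
    φ '' Q = Q'

/-- A face-`k`-weighted planar embedding of the subgraph of `G` induced by `S`,
represented by a planar drawing together with `k` marked points placed off the
drawing (the weight of a face is the number of marked points it contains). -/
structure WeightedDrawing (n k : ℕ) (G : SimpleGraph (Fin n)) (S : Set (Fin n)) where
  D : RawDrawing n
  planar : IsPlanarDrawing n G S D
  marks : Finset Pt
  marks_card : marks.card = k
  marks_off : ∀ p ∈ marks, p ∉ drawingImage n G S D

/-- Compatibility of two consecutive face-`k`-weighted planar embeddings
`W` of `G_{i-1}` and `W'` of `G_i`: removing the vertex `v_{i-ω}` from `W`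
(replacing it by one extra marked point, accounting for the weight increase of
the merged face) yields the same face-`(k+1)`-weighted planar embedding of
`G_{i-1} ∩ G_i` as removing `v_i` from `W'`. -/
def CompatiblePair (n ω k : ℕ) (G : SimpleGraph (Fin n)) (i : ℕ)
    (W : WeightedDrawing n k G (window n ω (i - 1)))
    (W' : WeightedDrawing n k G (window n ω i)) : Prop :=
  ∃ a b : Fin n, a.val + 1 + ω = i ∧ b.val + 1 = i ∧
    SameMarkedEmbedding n G (window n ω (i - 1) ∩ window n ω i) W.D W'.D
      (↑W.marks ∪ {W.D.pos a}) (↑W'.marks ∪ {W'.D.pos b})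

/-- The face (connected component of the complement of the drawing) containing
the point `p`. -/
def faceOf (X : Set Pt) (p : Pt) : Set Pt := connectedComponentIn Xᶜ p

/-- The drawing `D'` is obtained from the drawing `D` (both of the subgraph of
`G` induced by `S`) by rerouting the edge `e` with respect to the point `p`:
everything but the arc of `e` is unchanged, the planar embedding is preserved,
and `p` — which lies in a face `f` incident to `e` before the rerouting — lies
in the other face `f'` incident to `e` after the rerouting. -/
def IsRerouteStep (n : ℕ) (G : SimpleGraph (Fin n)) (S : Set (Fin n))
    (D D' : RawDrawing n) (e : Sym2 (Fin n)) (p : Pt) : Prop :=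
  ∃ u v : Fin n, e = s(u, v) ∧ u ∈ S ∧ v ∈ S ∧ G.Adj u v ∧
    p ∉ drawingImage n G S D ∧ p ∉ drawingImage n G S D' ∧
    arcInterior (D.curve u v) ⊆ closure (faceOf (drawingImage n G S D) p) ∧
    arcInterior (D'.curve u v) ⊆ closure (faceOf (drawingImage n G S D') p) ∧
    faceOf (drawingImage n G S D) p ≠ faceOf (drawingImage n G S D') p ∧
    SameMarkedEmbedding n G S D D' ∅ ∅

/-- An `h`-reroute realization of the story `(G, ω, k, τ)` on the point set
`P`: a sequence of planar drawings of the window graphs on `P` (property R1)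
such that the restriction of `Γ_i` to `G_{i-1} ∩ G_i` is obtained from the
restriction of `Γ_{i-1}` by rerouting at most `h` distinct edges with respect
to points of `P`. -/
structure RerouteRealization (n ω h : ℕ) (G : SimpleGraph (Fin n)) (P : Set Pt) where
  Γ : ℕ → RawDrawing n
  planar : ∀ i, 1 ≤ i → i ≤ n → IsPlanarDrawingOn n G (window n ω i) P (Γ i)
  pos_eq : ∀ i, 2 ≤ i → i ≤ n → ∀ v ∈ window n ω (i - 1) ∩ window n ω i,
      (Γ i).pos v = (Γ (i - 1)).pos v
  reroute : ∀ i, 2 ≤ i → i ≤ n →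
      ∃ F : Finset (Sym2 (Fin n)), F.card ≤ h ∧
        (∀ u ∈ window n ω (i - 1) ∩ window n ω i,
         ∀ v ∈ window n ω (i - 1) ∩ window n ω i,
            G.Adj u v → s(u, v) ∉ F → (Γ i).curve u v = (Γ (i - 1)).curve u v) ∧
        (∀ e ∈ F, ∃ p ∈ P,
            IsRerouteStep n G (window n ω (i - 1) ∩ window n ω i)
              (Γ (i - 1)) (Γ i) e p)

/-- The story is `h`-reroute realizable (with `k` extra points). -/
def RerouteRealizable (n ω k h : ℕ) (G : SimpleGraph (Fin n)) : Prop :=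
  ∃ P : Finset Pt, P.card = ω + k ∧ Nonempty (RerouteRealization n ω h G ↑P)

/-- `G` contains `K₅` (as a subgraph). -/
def ContainsK5 (n : ℕ) (G : SimpleGraph (Fin n)) : Prop :=
  ∃ f : Fin 5 → Fin n, Function.Injective f ∧ ∀ i j, i ≠ j → G.Adj (f i) (f j)

/-! A `K₅` in `G` lies in the window of its last vertex, so it would be drawn there. This is
impossible: the logarithms of the differences of the curves of two disjoint edges are single-valued,
and summing their increments around all such pairs contradicts the parity of the winding numbers.

Conversely, if there is no `K₅`, label the `i`-th vertex by `i` modulo `5` and fix a point for each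
label. Every window graph is then contained in `K₅` without an edge, and a drawing of the latter on
the five points is maintained. Up to a homeomorphism of the plane, it is always the same
straight-line drawing. When the vertex labelled `r` is replaced, the edges at `r` may be redrawn
freely, as none of them survives. If the missing edge has `r` as an end, it can be moved to any
other place by dragging `r`, in the straight-line drawing, across at most one edge between other
vertices. Undoing the motion of `r` by a homeomorphism, this is a rerouting of that edge with
respect to the point of `r`. If `r` is not an end of the missing edge, nothing has to be changed. -/

section Logarithms

open Complex

variable {X : Type*} [TopologicalSpace X] [SimplyConnectedSpace X] [LocallyPathConnectedSpace X]

theorem exists_continuous_log (F : C(X, ℂ)) (hF : ∀ x, F x ≠ 0) :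
    ∃ L : C(X, ℂ), ∀ x, exp (L x) = F x := by
  obtain ⟨a⟩ : Nonempty X := inferInstance
  obtain ⟨L, ⟨-, hL⟩, -⟩ :=
    isCoveringMapOn_exp.existsUnique_continuousMap_lifts F (a₀ := a) (exp_log (hF a)) hF
  exact ⟨L, congrFun hL⟩

theorem sub_eq_sub_of_exp_eq_const_mul {L L' : X → ℂ} (hL : Continuous L) (hL' : Continuous L')
    {k : ℂ} (h : ∀ x, exp (L x) = k * exp (L' x)) (a b : X) : L b - L a = L' b - L' a := by
  have hk : exp (L a - L' a) = k := by
    rw [exp_sub, h a, mul_div_cancel_right₀ _ (exp_ne_zero _)]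
  let L₁ : C(X, ℂ) := ⟨L, hL⟩
  let L₂ : C(X, ℂ) := ⟨fun x => L' x + (L a - L' a), by fun_prop⟩
  have h_eq : L₁ = L₂ :=
    (isCoveringMapOn_exp.existsUnique_continuousMap_lifts
      (⟨fun x => exp (L x), by fun_prop⟩ : C(X, ℂ)) rfl fun x => exp_ne_zero _).unique
      (y₁ := L₁) (y₂ := L₂) ⟨rfl, rfl⟩
      ⟨add_sub_cancel _ _, funext fun x => by
        simp only [L₂, Function.comp_apply, ContinuousMap.coe_mk, exp_add, hk, h x, mul_comm]⟩
  have h_b : L b = L' b + (L a - L' a) := congrArg (fun L : C(X, ℂ) => L b) h_eq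
  linear_combination h_b

open Classical in
/-- The increment over `[0, 1]` of a continuous logarithm of the curve `F`, that is, the integral
of `dF / F` along it; the junk value is `0` if `F` has no continuous logarithm. -/
noncomputable def logIncrement (F : ℝ → ℂ) : ℂ :=
  if h : ∃ L : ℝ → ℂ, Continuous L ∧ ∀ t, exp (L t) = F t then h.choose 1 - h.choose 0 else 0

theorem logIncrement_eq {F L : ℝ → ℂ} {k : ℂ} (hL : Continuous L)
    (h : ∀ t, F t = k * exp (L t)) (hk : k ≠ 0) : logIncrement F = L 1 - L 0 := by
  have hF : ∃ L : ℝ → ℂ, Continuous L ∧ ∀ t, exp (L t) = F t :=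
    ⟨fun t => log k + L t, by fun_prop, fun t => by rw [exp_add, exp_log hk, h]⟩
  rw [logIncrement, dif_pos hF]
  exact sub_eq_sub_of_exp_eq_const_mul hF.choose_spec.1 hL
    (fun t => (hF.choose_spec.2 t).trans (h t)) 0 1

theorem exp_logIncrement {F : ℝ → ℂ} (hF : Continuous F) (h0 : ∀ t, F t ≠ 0) :
    exp (logIncrement F) = F 1 / F 0 := by
  obtain ⟨L, hL⟩ := exists_continuous_log ⟨F, hF⟩ h0
  rw [logIncrement_eq (k := 1) L.continuous (fun t => by simp [hL]) one_ne_zero, exp_sub, hL, hL]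
  rfl

/-- The logarithm of `f s - g t` over the whole square has total increment zero around the
boundary. -/
theorem logIncrement_add_logIncrement_of_disjoint {f g : ℝ → ℂ} (hf : Continuous f)
    (hg : Continuous g) (hfg : ∀ s t, f s ≠ g t) :
    logIncrement (fun s => f s - g 0) + logIncrement (fun t => g t - f 1) =
      logIncrement (fun s => f s - g 1) + logIncrement (fun t => g t - f 0) := by
  obtain ⟨L, hL⟩ := exists_continuous_log (⟨fun x : ℝ × ℝ => f x.1 - g x.2, by fun_prop⟩)
    fun x => sub_ne_zero.mpr (hfg _ _)
  simp only [ContinuousMap.coe_mk] at hL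
  have horizontal (t : ℝ) : logIncrement (fun s => f s - g t) = L (1, t) - L (0, t) :=
    logIncrement_eq (L := fun s => L (s, t)) (k := 1) (by fun_prop) (fun s => by simp [hL])
      one_ne_zero
  have vertical (s : ℝ) : logIncrement (fun t => g t - f s) = L (s, 1) - L (s, 0) :=
    logIncrement_eq (L := fun t => L (s, t)) (k := -1) (by fun_prop) (fun t => by simp [hL])
      (by norm_num)
  rw [horizontal, horizontal, vertical, vertical]
  ring

end Logarithms

section CompleteGraph

open Complex

/-- Curves drawing `K₅` in the plane, the edges without a common end being disjoint. -/
structure IsCompleteDrawing (z : Fin 5 → ℂ) (γ : Fin 5 → Fin 5 → ℝ → ℂ) : Prop where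
  continuous : ∀ i j, i ≠ j → Continuous (γ i j)
  source : ∀ i j, i ≠ j → γ i j 0 = z i
  target : ∀ i j, i ≠ j → γ i j 1 = z j
  disjoint : ∀ i j k l, [i, j, k, l].Nodup → ∀ s t, γ i j s ≠ γ k l t

/-- The sign recording the order of two labels. -/
def orderSign (u v : Fin 5) : ℤ := if u < v then -1 else 1

/-- A logarithm of `z v - z u`; the logarithms of the two directions of an edge are chosen to differ
by `± π i`, the sign being `orderSign u v`. -/
noncomputable def directionLog (z : Fin 5 → ℂ) (u v : Fin 5) : ℂ :=
  if u < v then log (z v - z u) else log (z u - z v) + Real.pi * I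

theorem exp_directionLog {z : Fin 5 → ℂ} (hz : Function.Injective z) {u v : Fin 5} (h : u ≠ v) :
    exp (directionLog z u v) = z v - z u := by
  unfold directionLog
  split_ifs
  · exact exp_log (sub_ne_zero.mpr (hz.ne h.symm))
  · rw [exp_add, exp_pi_mul_I, exp_log (sub_ne_zero.mpr (hz.ne h))]
    ring

theorem directionLog_sub_swap (z : Fin 5 → ℂ) {u v : Fin 5} (huv : u ≠ v) :
    directionLog z u v - directionLog z v u = orderSign u v * (Real.pi * I) := by
  rcases lt_or_gt_of_ne huv with h | h <;> simp [directionLog, orderSign, h, h.not_gt]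

namespace IsCompleteDrawing

variable {z : Fin 5 → ℂ} {γ : Fin 5 → Fin 5 → ℝ → ℂ}

theorem curve_ne_vertex (hγ : IsCompleteDrawing z γ) {i j k : Fin 5} (h : [i, j, k].Nodup)
    (s : ℝ) : γ i j s ≠ z k := by
  have exists_fourth : ∀ i j k : Fin 5, [i, j, k].Nodup → ∃ l, [i, j, k, l].Nodup := by decide
  obtain ⟨l, hl⟩ := exists_fourth i j k h
  have hkl : k ≠ l := by
    rintro rfl
    simp at hl
  exact hγ.source k l hkl ▸ hγ.disjoint i j k l hl s 0

theorem injective (hγ : IsCompleteDrawing z γ) : Function.Injective z := by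
  intro i k h
  by_contra hik
  have exists_third : ∀ i k : Fin 5, i ≠ k → ∃ j, i ≠ j ∧ [i, j, k].Nodup := by decide
  obtain ⟨j, hij, hj⟩ := exists_third i k hik
  exact hγ.curve_ne_vertex hj 0 ((hγ.source i j hij).trans h)

theorem exists_winding (hγ : IsCompleteDrawing z γ) {v a b : Fin 5} (h : [a, b, v].Nodup) :
    ∃ m : ℤ, logIncrement (fun s => γ a b s - z v) =
      directionLog z v b - directionLog z v a + m * (2 * Real.pi * I) := by
  obtain ⟨⟨hab, hav⟩, hbv⟩ : (a ≠ b ∧ a ≠ v) ∧ b ≠ v := by simpa using h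
  rw [← exp_eq_exp_iff_exists_int, exp_sub,
    exp_logIncrement (F := fun s => γ a b s - z v) ((hγ.continuous a b hab).sub continuous_const)
      fun s => sub_ne_zero.mpr (hγ.curve_ne_vertex h s),
    hγ.source a b hab, hγ.target a b hab, exp_directionLog hγ.injective hbv.symm,
    exp_directionLog hγ.injective hav.symm]

theorem exists_winding_relation (hγ : IsCompleteDrawing z γ) :
    ∃ N : Fin 5 → Fin 5 → Fin 5 → ℤ, ∀ a b c d, [a, b, c, d].Nodup →
      2 * (N c a b + N b c d - N d a b - N a c d) =
        -(orderSign c b + orderSign a c + orderSign b d + orderSign d a) := by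
  have winding (v a b : Fin 5) : ∃ m : ℤ, [a, b, v].Nodup →
      logIncrement (fun s => γ a b s - z v) =
        directionLog z v b - directionLog z v a + m * (2 * Real.pi * I) := by
    by_cases h : [a, b, v].Nodup
    · exact (hγ.exists_winding h).imp fun _ hm _ => hm
    · exact ⟨0, fun h' => absurd h' h⟩
  choose N hN using winding
  refine ⟨N, fun a b c d h => ?_⟩
  have h_triples : [a, b, c].Nodup ∧ [a, b, d].Nodup ∧ [c, d, a].Nodup ∧ [c, d, b].Nodup := by
    revert a b c d; decide
  obtain ⟨⟨hab, hac, had⟩, ⟨hbc, hbd⟩, hcd⟩ :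
      (a ≠ b ∧ a ≠ c ∧ a ≠ d) ∧ (b ≠ c ∧ b ≠ d) ∧ c ≠ d := by simpa [and_assoc] using h
  have h_square := logIncrement_add_logIncrement_of_disjoint (hγ.continuous a b hab)
    (hγ.continuous c d hcd) (hγ.disjoint a b c d h)
  simp only [hγ.source _ _ hab, hγ.target _ _ hab, hγ.source _ _ hcd, hγ.target _ _ hcd,
    hN c a b h_triples.1, hN d a b h_triples.2.1, hN a c d h_triples.2.2.1,
    hN b c d h_triples.2.2.2] at h_square
  have h_mul : ((2 * (N c a b + N b c d - N d a b - N a c d) : ℤ) : ℂ) * (Real.pi * I) =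
      ((-(orderSign c b + orderSign a c + orderSign b d + orderSign d a) : ℤ) : ℂ) *
        (Real.pi * I) := by
    push_cast
    linear_combination h_square - directionLog_sub_swap z hbc.symm - directionLog_sub_swap z hac -
      directionLog_sub_swap z hbd - directionLog_sub_swap z had.symm
  have hpi : (Real.pi * I : ℂ) ≠ 0 := by simp [Real.pi_ne_zero]
  exact_mod_cast mul_right_cancel₀ hpi h_mul

end IsCompleteDrawing

/-- Summed over the fifteen pairs of disjoint edges, every `N v a b` is counted twice, so that the
left-hand sides add up to a multiple of `4`; the right-hand sides do not. -/
theorem not_winding_relation (N : Fin 5 → Fin 5 → Fin 5 → ℤ)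
    (hN : ∀ a b c d, [a, b, c, d].Nodup → 2 * (N c a b + N b c d - N d a b - N a c d) =
      -(orderSign c b + orderSign a c + orderSign b d + orderSign d a)) : False := by
  have h₁ := hN 0 1 2 3 (by decide)
  have h₂ := hN 0 2 1 3 (by decide)
  have h₃ := hN 0 3 1 2 (by decide)
  have h₄ := hN 0 1 2 4 (by decide)
  have h₅ := hN 0 2 1 4 (by decide)
  have h₆ := hN 0 4 1 2 (by decide)
  have h₇ := hN 0 1 3 4 (by decide)
  have h₈ := hN 0 3 1 4 (by decide)
  have h₉ := hN 0 4 1 3 (by decide)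
  have h₁₀ := hN 0 2 3 4 (by decide)
  have h₁₁ := hN 0 3 2 4 (by decide)
  have h₁₂ := hN 0 4 2 3 (by decide)
  have h₁₃ := hN 1 2 3 4 (by decide)
  have h₁₄ := hN 1 3 2 4 (by decide)
  have h₁₅ := hN 1 4 2 3 (by decide)
  have lt_sign {u v : Fin 5} (h : u < v) : orderSign u v = -1 := if_pos h
  have gt_sign {u v : Fin 5} (h : v < u) : orderSign u v = 1 := if_neg h.not_gt
  simp (disch := decide) only [lt_sign, gt_sign] at *
  omega

theorem not_isCompleteDrawing (z : Fin 5 → ℂ) (γ : Fin 5 → Fin 5 → ℝ → ℂ) :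
    ¬ IsCompleteDrawing z γ := fun hγ =>
  let ⟨N, hN⟩ := hγ.exists_winding_relation
  not_winding_relation N hN

end CompleteGraph

section Necessity

theorem arcBody_eq_insert_insert (γ : ℝ → Pt) :
    arcBody γ = insert (γ 0) (insert (γ 1) (arcInterior γ)) := by
  rw [arcBody, arcInterior, ← Ioc_insert_left zero_le_one, ← Ioo_insert_right zero_lt_one,
    image_insert_eq, image_insert_eq]

namespace IsPlanarDrawingOn

variable {n : ℕ} {G : SimpleGraph (Fin n)} {S : Set (Fin n)} {P : Set Pt} {D : RawDrawing n}

theorem disjoint_arcBody (hD : IsPlanarDrawingOn n G S P D) {u v x y : Fin n} (hu : u ∈ S)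
    (hv : v ∈ S) (hx : x ∈ S) (hy : y ∈ S) (huv : G.Adj u v) (hxy : G.Adj x y)
    (h : [u, v, x, y].Nodup) : Disjoint (arcBody (D.curve u v)) (arcBody (D.curve x y)) := by
  obtain ⟨⟨-, hux, huy⟩, ⟨hvx, hvy⟩, -⟩ :
      (u ≠ v ∧ u ≠ x ∧ u ≠ y) ∧ (v ≠ x ∧ v ≠ y) ∧ x ≠ y := by simpa [and_assoc] using h
  have hne : s(u, v) ≠ s(x, y) := by simp [hux, huy]
  have h_interior := disjoint_iff_inter_eq_empty.mpr
    (hD.no_cross u hu v hv x hx y hy huv hxy hne)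
  have h_off_uv := hD.vertex_off_arc u hu v hv huv
  have h_off_xy := hD.vertex_off_arc x hx y hy hxy
  obtain ⟨-, -, hu₀, hv₁⟩ := hD.arc u hu v hv huv
  obtain ⟨-, -, hx₀, hy₁⟩ := hD.arc x hx y hy hxy
  simp only [arcBody_eq_insert_insert, hu₀, hv₁, hx₀, hy₁, disjoint_insert_left,
    disjoint_insert_right, mem_insert_iff, not_or]
  exact ⟨⟨hD.pos_inj.ne hx hu hux.symm, hD.pos_inj.ne hx hv hvx.symm, h_off_uv x hx⟩,
    ⟨hD.pos_inj.ne hy hu huy.symm, hD.pos_inj.ne hy hv hvy.symm, h_off_uv y hy⟩,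
    h_off_xy u hu, h_off_xy v hv, h_interior⟩

theorem isCompleteDrawing (hD : IsPlanarDrawingOn n G S P D) {f : Fin 5 → Fin n}
    (hf : Function.Injective f) (hS : ∀ i, f i ∈ S) (hA : ∀ i j, i ≠ j → G.Adj (f i) (f j)) :
    IsCompleteDrawing (fun i => Complex.equivRealProdCLM.symm (D.pos (f i))) fun i j t =>
      Complex.equivRealProdCLM.symm (D.curve (f i) (f j) (projIcc 0 1 zero_le_one t)) := by
  have arc (i j : Fin 5) (h : i ≠ j) := hD.arc (f i) (hS i) (f j) (hS j) (hA i j h)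
  refine ⟨fun i j h => ?_, fun i j h => ?_, fun i j h => ?_, fun i j k l h s t hst => ?_⟩
  · exact Complex.equivRealProdCLM.symm.continuous.comp
      ((arc i j h).1.comp_continuous (continuous_subtype_val.comp continuous_projIcc)
        fun t => Subtype.coe_prop _)
  · simp [(arc i j h).2.2.1]
  · simp [(arc i j h).2.2.2]
  · have hij : i ≠ j ∧ k ≠ l := by simp at h; tauto
    exact disjoint_left.mp
      (hD.disjoint_arcBody (hS i) (hS j) (hS k) (hS l) (hA i j hij.1) (hA k l hij.2) (h.map hf))
      ⟨_, Subtype.coe_prop _, rfl⟩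
      ⟨_, Subtype.coe_prop _, Complex.equivRealProdCLM.symm.injective hst.symm⟩

end IsPlanarDrawingOn

theorem Visible.exists_forall_mem_window {n ω : ℕ} {G : SimpleGraph (Fin n)}
    (hvis : Visible n ω G) {ι : Type*} [Finite ι] [Nonempty ι] {f : ι → Fin n} (hω : 0 < ω)
    (hA : ∀ i j, i ≠ j → G.Adj (f i) (f j)) :
    ∃ m, ∀ i, f i ∈ window n ω ((f m).val + 1) := by
  obtain ⟨m, hm⟩ := Finite.exists_max f
  refine ⟨m, fun i => ⟨Nat.succ_le_succ (hm i), ?_⟩⟩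
  rcases eq_or_ne i m with rfl | him
  · omega
  · exact (hvis _ _ (hA i m him)).2

theorem RerouteRealizable.not_containsK5 {n k h : ℕ} {G : SimpleGraph (Fin n)} {ω : ℕ}
    (hω : 0 < ω) (hvis : Visible n ω G) (hG : RerouteRealizable n ω k h G) :
    ¬ ContainsK5 n G := by
  rintro ⟨f, hf, hA⟩
  obtain ⟨P, -, ⟨R⟩⟩ := hG
  obtain ⟨m, hm⟩ := hvis.exists_forall_mem_window hω hA
  exact not_isCompleteDrawing _ _
    ((R.planar _ (Nat.le_add_left _ _) (f m).isLt).isCompleteDrawing hf hm hA)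

end Necessity

section Push

variable {E ι : Type*} [AddCommGroup E] [Module ℝ E] [TopologicalSpace E]
  {w : ι → E →ᴬ[ℝ] ℝ} {x x' : E}

theorem le_zero_of_mem_segment {f : E →ᴬ[ℝ] ℝ} {u v z : E} (hu : f u ≤ 0) (hv : f v ≤ 0)
    (hz : z ∈ segment ℝ u v) : f z ≤ 0 :=
  ((convex_Iic (0 : ℝ)).affine_preimage f.toAffineMap).segment_subset hu hv hz

/-- The part of the polyhedron lying under the `i`-th side of the pyramid over `x`; `pyramid w x`
is affine there. -/
def pyramidPiece (w : ι → E →ᴬ[ℝ] ℝ) (x : E) (i : ι) (z : E) : Prop :=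
  0 ≤ w i z ∧ ∀ j, w i z * w j x ≤ w j z * w i x

theorem pyramidPiece_self (hx : ∀ i, 0 < w i x) (i : ι) : pyramidPiece w x i x :=
  ⟨(hx i).le, fun _ => (mul_comm _ _).le⟩

theorem pyramidPiece_of_eq_zero (hx : ∀ i, 0 < w i x) {i : ι} {z : E} (hi : w i z = 0)
    (hz : ∀ j, 0 ≤ w j z) : pyramidPiece w x i z :=
  ⟨hi.ge, fun j => by simpa [hi] using mul_nonneg (hz j) (hx i).le⟩

variable [Fintype ι] [Nonempty ι]

/-- The function whose graph is the pyramid with apex of height `1` over `x` and with base the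
polyhedron `{z | ∀ i, 0 ≤ w i z}`, extended by `0`. -/
noncomputable def pyramid (w : ι → E →ᴬ[ℝ] ℝ) (x z : E) : ℝ :=
  max 0 (Finset.univ.inf' Finset.univ_nonempty fun i => w i z / w i x)

theorem pyramid_eq_iff {z : E} {g : ℝ} :
    pyramid w x z = g ↔
      0 ≤ g ∧ (∃ i, w i z / w i x ≤ g) ∧ (g = 0 ∨ ∀ i, g ≤ w i z / w i x) := by
  obtain ⟨i₀, -, hi₀⟩ := Finset.exists_mem_eq_inf' Finset.univ_nonempty fun i => w i z / w i x
  have le_slope (i : ι) : w i₀ z / w i₀ x ≤ w i z / w i x :=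
    hi₀ ▸ Finset.inf'_le _ (Finset.mem_univ i)
  rw [pyramid, hi₀]
  constructor
  · rintro rfl
    refine ⟨le_max_left _ _, ⟨i₀, le_max_right _ _⟩, ?_⟩
    rcases le_total (w i₀ z / w i₀ x) 0 with h | h
    · exact Or.inl (max_eq_left h)
    · exact Or.inr fun i => (max_eq_right h).trans_le (le_slope i)
  · rintro ⟨hg, ⟨i, hi⟩, rfl | hle⟩
    · exact max_eq_left ((le_slope i).trans hi)
    · rw [((le_slope i).trans hi).antisymm (hle i₀), max_eq_right hg]

theorem continuous_pyramid : Continuous (pyramid w x) :=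
  continuous_const.max <| Continuous.finset_inf'_apply _ fun i _ => (w i).continuous.div_const _

theorem pyramid_pos (hx : ∀ i, 0 < w i x) {z : E} (hz : ∀ i, 0 < w i z) : 0 < pyramid w x z :=
  lt_max_of_lt_right <| (Finset.lt_inf'_iff _).mpr fun i _ => div_pos (hz i) (hx i)

theorem pyramid_eq_zero (hx : ∀ i, 0 < w i x) {z : E} {i : ι} (hz : w i z ≤ 0) :
    pyramid w x z = 0 :=
  pyramid_eq_iff.mpr ⟨le_rfl, ⟨i, div_nonpos_of_nonpos_of_nonneg hz (hx i).le⟩, Or.inl rfl⟩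

theorem pyramid_self (hx : ∀ i, 0 < w i x) : pyramid w x x = 1 := by
  have slope (i : ι) : w i x / w i x = 1 := div_self (hx i).ne'
  exact pyramid_eq_iff.mpr
    ⟨zero_le_one, ⟨Classical.arbitrary ι, (slope _).le⟩, Or.inr fun i => (slope i).ge⟩

/-- The piecewise affine map dragging `x` to `x'` inside the polyhedron `{z | ∀ i, 0 ≤ w i z}`. -/
noncomputable def push (w : ι → E →ᴬ[ℝ] ℝ) (x x' z : E) : E := z + pyramid w x z • (x' - x)

theorem pyramid_eq_div (hx : ∀ i, 0 < w i x) {i : ι} {z : E} (hz : pyramidPiece w x i z) :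
    pyramid w x z = w i z / w i x :=
  pyramid_eq_iff.mpr ⟨div_nonneg hz.1 (hx i).le, ⟨i, le_rfl⟩,
    Or.inr fun j => (div_le_div_iff₀ (hx i) (hx j)).mpr (hz.2 j)⟩

theorem push_self (hx : ∀ i, 0 < w i x) : push w x x' x = x' := by
  rw [push, pyramid_self hx]; module

theorem push_eq_self (hx : ∀ i, 0 < w i x) {z : E} {i : ι} (hz : w i z ≤ 0) :
    push w x x' z = z := by
  rw [push, pyramid_eq_zero hx hz, zero_smul, add_zero]

theorem push_lineMap (hx : ∀ i, 0 < w i x) {i : ι} {u v : E} (hu : pyramidPiece w x i u)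
    (hv : pyramidPiece w x i v) {t : ℝ} (ht : t ∈ Icc (0 : ℝ) 1) :
    push w x x' (AffineMap.lineMap u v t) =
      AffineMap.lineMap (push w x x' u) (push w x x' v) t := by
  have apply_lineMap (j : ι) : w j (AffineMap.lineMap u v t) = (1 - t) * w j u + t * w j v := by
    rw [← ContinuousAffineMap.coe_toAffineMap, AffineMap.apply_lineMap,
      AffineMap.lineMap_apply_module]
    simp
  have ht' : 0 ≤ 1 - t := sub_nonneg.mpr ht.2
  have h_line : pyramidPiece w x i (AffineMap.lineMap u v t) := by
    simp only [pyramidPiece, apply_lineMap]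
    refine ⟨by linarith [mul_nonneg ht' hu.1, mul_nonneg ht.1 hv.1], fun j => ?_⟩
    linarith [mul_le_mul_of_nonneg_left (hu.2 j) ht', mul_le_mul_of_nonneg_left (hv.2 j) ht.1]
  rw [push, push, push, pyramid_eq_div hx hu, pyramid_eq_div hx hv, pyramid_eq_div hx h_line,
    apply_lineMap, AffineMap.lineMap_apply_module, AffineMap.lineMap_apply_module]
  module

variable [IsTopologicalAddGroup E]

theorem apply_push (f : E →ᴬ[ℝ] ℝ) (z : E) :
    f (push w x x' z) = f z + pyramid w x z * (f x' - f x) := by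
  have h_sub : f.contLinear (x' - x) = f x' - f x := by
    rw [← vsub_eq_sub x' x, ContinuousAffineMap.contLinear_map_vsub, vsub_eq_sub]
  rw [push, add_comm, ← vadd_eq_add, ContinuousAffineMap.map_vadd, map_smul, h_sub, smul_eq_mul,
    vadd_eq_add, add_comm]

theorem pyramid_push (hx : ∀ i, 0 < w i x) (hx' : ∀ i, 0 < w i x') (z : E) :
    pyramid w x' (push w x x' z) = pyramid w x z := by
  obtain ⟨hg, ⟨i, hi⟩, hle⟩ := pyramid_eq_iff.mp (rfl : pyramid w x z = _)
  simp only [div_le_iff₀ (hx _), le_div_iff₀ (hx _)] at hi hle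
  rw [pyramid_eq_iff]
  simp only [apply_push, div_le_iff₀ (hx' _), le_div_iff₀ (hx' _)]
  exact ⟨hg, ⟨i, by linarith⟩, hle.imp_right fun h j => by linarith [h j]⟩

theorem apply_push_pos (hx : ∀ i, 0 < w i x) (hx' : ∀ i, 0 < w i x') {z : E}
    (hz : ∀ i, 0 < w i z) (i : ι) : 0 < w i (push w x x' z) := by
  obtain ⟨-, -, h0 | hle⟩ := pyramid_eq_iff.mp (rfl : pyramid w x z = _)
  · exact absurd h0 (pyramid_pos hx hz).ne'
  · have h_slope := (le_div_iff₀ (hx i)).mp (hle i)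
    rw [apply_push]
    linarith [mul_pos (pyramid_pos hx hz) (hx' i)]

variable [ContinuousSMul ℝ E]

/-- `push` as a homeomorphism, the inverse dragging `x'` back to `x`. -/
noncomputable def pushHomeomorph (hx : ∀ i, 0 < w i x) (hx' : ∀ i, 0 < w i x') : E ≃ₜ E where
  toFun := push w x x'
  invFun := push w x' x
  left_inv z := by rw [push, pyramid_push hx hx', push]; module
  right_inv z := by rw [push, pyramid_push hx' hx, push]; module
  continuous_toFun := continuous_id.add (continuous_pyramid.smul continuous_const)
  continuous_invFun := continuous_id.add (continuous_pyramid.smul continuous_const)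

theorem pushHomeomorph_image_segment (hx : ∀ i, 0 < w i x) (hx' : ∀ i, 0 < w i x') {i : ι}
    {u v : E} (hu : pyramidPiece w x i u) (hv : pyramidPiece w x i v) :
    pushHomeomorph hx hx' '' segment ℝ u v = segment ℝ (push w x x' u) (push w x x' v) := by
  simp only [segment_eq_image_lineMap, image_image]
  exact image_congr fun t ht => push_lineMap hx hu hv ht

theorem pushHomeomorph_eqOn_segment (hx : ∀ i, 0 < w i x) (hx' : ∀ i, 0 < w i x') {i : ι}
    {u v : E} (hu : w i u ≤ 0) (hv : w i v ≤ 0) :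
    EqOn (pushHomeomorph hx hx') id (segment ℝ u v) :=
  fun _ hz => push_eq_self hx (le_zero_of_mem_segment hu hv hz)

end Push

section Configurations

variable {R : Type*}

/-- Twice the signed area of the triangle `p q z`. -/
def orient [CommRing R] (p q z : R × R) : R :=
  (q.1 - p.1) * (z.2 - p.2) - (q.2 - p.2) * (z.1 - p.1)

theorem orient_self_left [CommRing R] (p q : R × R) : orient p q p = 0 := by simp [orient]

theorem orient_self_right [CommRing R] (p q : R × R) : orient p q q = 0 := by
  rw [orient]; ring

theorem orient_rotate [CommRing R] (p q z : R × R) : orient q z p = orient p q z := by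
  simp only [orient]; ring

/-- An integer point, seen in the plane. The concrete configurations below have integer vertices, so
that their properties can be decided. -/
def castPt (z : ℤ × ℤ) : Pt := (z.1, z.2)

theorem orient_castPt (p q z : ℤ × ℤ) :
    orient (castPt p) (castPt q) (castPt z) = orient p q z := by
  simp [orient, castPt]

/-- `orient p q` as a continuous affine form. -/
def orientForm (p q : Pt) : Pt →ᴬ[ℝ] ℝ where
  toFun := orient p q
  linear := (q.1 - p.1) • LinearMap.snd ℝ ℝ ℝ - (q.2 - p.2) • LinearMap.fst ℝ ℝ ℝ
  map_vadd' z v := by simp [orient]; ring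
  cont := by unfold orient; fun_prop

@[simp]
theorem orientForm_apply (p q z : Pt) : orientForm p q z = orient p q z := rfl

/-- The oriented area spanned by the `i`-th side of the triangle `T` and a point; for a
counterclockwise triangle these three numbers are positive exactly at the interior points. -/
def side [CommRing R] (T : Fin 3 → R × R) (i : Fin 3) (z : R × R) : R :=
  orient (T i) (T (i + 1)) z

theorem side_castPt (T : Fin 3 → ℤ × ℤ) (i : Fin 3) (z : ℤ × ℤ) :
    side (castPt ∘ T) i (castPt z) = side T i z := orient_castPt _ _ _

/-- `side T i` as a continuous affine form. -/
def sideForm (T : Fin 3 → Pt) (i : Fin 3) : Pt →ᴬ[ℝ] ℝ := orientForm (T i) (T (i + 1))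

@[simp]
theorem sideForm_apply (T : Fin 3 → Pt) (i : Fin 3) (z : Pt) : sideForm T i z = side T i z := rfl

/-- The homeomorphism `Ψ` of the plane carries the vertices `X` to `Y`, and all segments between
them with the exception of those in `E` to the corresponding segments. -/
structure Carries (Ψ : Pt ≃ₜ Pt) (X Y : Fin 5 → Pt) (E : Finset (Sym2 (Fin 5))) : Prop where
  apply : ∀ k, Ψ (X k) = Y k
  image_segment : ∀ k l, s(k, l) ∉ E →
    Ψ '' segment ℝ (X k) (X l) = segment ℝ (Y k) (Y l)

theorem Carries.refl (X : Fin 5 → Pt) (E : Finset (Sym2 (Fin 5))) :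
    Carries (Homeomorph.refl Pt) X X E :=
  ⟨fun _ => rfl, fun _ _ _ => image_id _⟩

theorem Carries.trans {Ψ Φ : Pt ≃ₜ Pt} {X Y Z : Fin 5 → Pt} {E : Finset (Sym2 (Fin 5))}
    (h : Carries Ψ X Y E) (h' : Carries Φ Y Z E) : Carries (Ψ.trans Φ) X Z E where
  apply k := by rw [Homeomorph.trans_apply, h.apply, h'.apply]
  image_segment k l hE := by
    change (Φ ∘ Ψ) '' _ = _
    rw [image_comp, h.image_segment k l hE, h'.image_segment k l hE]

theorem Carries.symm {Ψ : Pt ≃ₜ Pt} {X Y : Fin 5 → Pt} {E : Finset (Sym2 (Fin 5))}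
    (h : Carries Ψ X Y E) : Carries Ψ.symm Y X E where
  apply k := by rw [← h.apply, Homeomorph.symm_apply_apply]
  image_segment k l hE := by
    rw [← h.image_segment k l hE, Homeomorph.image_symm, Ψ.injective.preimage_image]

/-- In the configuration `X`, the vertex `r` can be dragged inside the triangle `T` to its place in
`X'`, without affecting the other vertices, so that the segments outside of `E` remain straight:
those not at `r` because they lie beyond one side of `T`, those at `r` because their other end is on
the boundary of `T`. -/
structure IsPush [CommRing R] [LinearOrder R] (T : Fin 3 → R × R) (r : Fin 5)
    (X X' : Fin 5 → R × R) (E : Finset (Sym2 (Fin 5))) : Prop where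
  eq_of_ne : ∀ k, k ≠ r → X' k = X k
  source : ∀ i, 0 < side T i (X r)
  target : ∀ i, 0 < side T i (X' r)
  fixed : ∀ k, k ≠ r → ∃ i, side T i (X k) ≤ 0
  beyond : ∀ k l, k ≠ r → l ≠ r → s(k, l) ∉ E → ∃ i, side T i (X k) ≤ 0 ∧ side T i (X l) ≤ 0
  boundary : ∀ k, k ≠ r → s(r, k) ∉ E →
    ∃ i, side T i (X k) = 0 ∧ ∀ j, 0 ≤ side T j (X k)

theorem IsPush.symm [CommRing R] [LinearOrder R] {T : Fin 3 → R × R} {r : Fin 5}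
    {X X' : Fin 5 → R × R} {E : Finset (Sym2 (Fin 5))} (h : IsPush T r X X' E) :
    IsPush T r X' X E where
  eq_of_ne k hk := (h.eq_of_ne k hk).symm
  source := h.target
  target := h.source
  fixed k hk := h.eq_of_ne k hk ▸ h.fixed k hk
  beyond k l hk hl hE := h.eq_of_ne k hk ▸ h.eq_of_ne l hl ▸ h.beyond k l hk hl hE
  boundary k hk hE := h.eq_of_ne k hk ▸ h.boundary k hk hE

theorem IsPush.castPt_comp {T : Fin 3 → ℤ × ℤ} {r : Fin 5} {X X' : Fin 5 → ℤ × ℤ}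
    {E : Finset (Sym2 (Fin 5))} (h : IsPush T r X X' E) :
    IsPush (castPt ∘ T) r (castPt ∘ X) (castPt ∘ X') E where
  eq_of_ne k hk := congrArg _ (h.eq_of_ne k hk)
  source i := by simpa only [Function.comp_apply, side_castPt, Int.cast_pos] using h.source i
  target i := by simpa only [Function.comp_apply, side_castPt, Int.cast_pos] using h.target i
  fixed k hk := by simpa only [Function.comp_apply, side_castPt, Int.cast_nonpos] using h.fixed k hk
  beyond k l hk hl hE := by
    simpa only [Function.comp_apply, side_castPt, Int.cast_nonpos] using h.beyond k l hk hl hE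
  boundary k hk hE := by
    simpa only [Function.comp_apply, side_castPt, Int.cast_eq_zero, Int.cast_nonneg_iff]
      using h.boundary k hk hE

namespace IsPush

variable {T : Fin 3 → Pt} {r : Fin 5} {X X' : Fin 5 → Pt} {E : Finset (Sym2 (Fin 5))}

/-- The homeomorphism dragging the vertex `r`. -/
noncomputable def homeomorph (h : IsPush T r X X' E) : Pt ≃ₜ Pt :=
  pushHomeomorph (w := sideForm T) h.source h.target

theorem homeomorph_eqOn_segment (h : IsPush T r X X' E) {k l : Fin 5} (hk : k ≠ r) (hl : l ≠ r)
    (hE : s(k, l) ∉ E) : EqOn h.homeomorph id (segment ℝ (X k) (X l)) :=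
  let ⟨_, hki, hli⟩ := h.beyond k l hk hl hE
  pushHomeomorph_eqOn_segment (w := sideForm T) h.source h.target hki hli

theorem homeomorph_apply_of_ne (h : IsPush T r X X' E) {k : Fin 5} (hk : k ≠ r) :
    h.homeomorph (X k) = X k :=
  let ⟨_, hki⟩ := h.fixed k hk
  push_eq_self (w := sideForm T) h.source hki

theorem homeomorph_apply_self (h : IsPush T r X X' E) : h.homeomorph (X r) = X' r :=
  push_self (w := sideForm T) h.source

theorem homeomorph_apply (h : IsPush T r X X' E) (k : Fin 5) : h.homeomorph (X k) = X' k := by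
  rcases eq_or_ne k r with rfl | hk
  · exact h.homeomorph_apply_self
  · rw [h.homeomorph_apply_of_ne hk, h.eq_of_ne k hk]

theorem image_segment_self (h : IsPush T r X X' E) {k : Fin 5} (hk : k ≠ r) (hE : s(r, k) ∉ E) :
    h.homeomorph '' segment ℝ (X r) (X k) = segment ℝ (X' r) (X' k) := by
  obtain ⟨i, hi, hj⟩ := h.boundary k hk hE
  rw [← h.homeomorph_apply r, ← h.homeomorph_apply k]
  exact pushHomeomorph_image_segment (w := sideForm T) h.source h.target
    (pyramidPiece_self h.source i) (pyramidPiece_of_eq_zero h.source hi hj)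

theorem congr_source (h : IsPush T r X X' E) {Y : Fin 5 → Pt} (hY : ∀ k, k ≠ r → Y k = X k)
    (h_source : ∀ i, 0 < side T i (Y r)) : IsPush T r Y X' E where
  eq_of_ne k hk := (h.eq_of_ne k hk).trans (hY k hk).symm
  source := h_source
  target := h.target
  fixed k hk := hY k hk ▸ h.fixed k hk
  beyond k l hk hl hE := hY k hk ▸ hY l hl ▸ h.beyond k l hk hl hE
  boundary k hk hE := hY k hk ▸ h.boundary k hk hE

theorem carries (h : IsPush T r X X' E) : Carries h.homeomorph X X' E where
  apply := h.homeomorph_apply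
  image_segment k l hE := by
    rcases eq_or_ne k r with rfl | hk
    · rcases eq_or_ne l k with rfl | hl
      · simp only [segment_same, image_singleton, h.homeomorph_apply]
      · exact h.image_segment_self hl hE
    · rcases eq_or_ne l r with rfl | hl
      · rw [segment_symm, h.image_segment_self hk (by rwa [Sym2.eq_swap]), segment_symm]
      · rw [(h.homeomorph_eqOn_segment hk hl hE).image_eq, image_id, h.eq_of_ne k hk,
          h.eq_of_ne l hl]

end IsPush

/-- The point `z` lies inside the triangle `p q u`, which may have either orientation. -/
def InTriangle [CommRing R] [LinearOrder R] (p q u z : R × R) : Prop :=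
  0 < orient p q u * orient p q z ∧ 0 < orient p q u * orient q u z ∧
    0 < orient p q u * orient u p z

instance [CommRing R] [LinearOrder R] (p q u z : R × R) : Decidable (InTriangle p q u z) :=
  inferInstanceAs (Decidable (_ ∧ _ ∧ _))

theorem inTriangle_castPt {p q u z : ℤ × ℤ} :
    InTriangle (castPt p) (castPt q) (castPt u) (castPt z) ↔ InTriangle p q u z := by
  simp only [InTriangle, orient_castPt, ← Int.cast_mul, Int.cast_pos]

/-- The shape of a straight-line drawing of `K₅` without the edge `04`: the triangle `012` contains
the vertex `3`, and the triangle `123` contains the vertex `4`. -/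
def IsCanonical [CommRing R] [LinearOrder R] (X : Fin 5 → R × R) : Prop :=
  InTriangle (X 0) (X 1) (X 2) (X 3) ∧ InTriangle (X 1) (X 2) (X 3) (X 4)

instance [CommRing R] [LinearOrder R] (X : Fin 5 → R × R) : Decidable (IsCanonical X) :=
  inferInstanceAs (Decidable (_ ∧ _))

theorem IsCanonical.castPt_comp {X : Fin 5 → ℤ × ℤ} (h : IsCanonical X) :
    IsCanonical (castPt ∘ X) :=
  h.imp inTriangle_castPt.mpr inTriangle_castPt.mpr

/-- A canonical configuration to which all others are compared. -/
def standard : Fin 5 → ℤ × ℤ := ![(0, 6), (0, 0), (6, 0), (2, 2), (3, 1)]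

/-- The affine map taking the triangle `a b c` to the first three vertices of `standard`. -/
noncomputable def affineFrame (a b c : Pt) (h : orient a b c ≠ 0) : Pt ≃ₜ Pt where
  toFun z := (6 * orient a b z / orient a b c, 6 * orient b c z / orient a b c)
  invFun z := b + (z.1 / 6) • (c - b) + (z.2 / 6) • (a - b)
  left_inv z := by
    ext <;> simp <;> field_simp <;> simp only [orient] <;> ring
  right_inv z := by
    ext <;> simp only [div_eq_iff h] <;> simp [orient] <;> ring
  continuous_toFun := by unfold orient; fun_prop
  continuous_invFun := by fun_prop

section AffineFrame

variable {a b c : Pt} (h : orient a b c ≠ 0)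

theorem affineFrame_apply (z : Pt) :
    affineFrame a b c h z =
      (6 * orient a b z / orient a b c, 6 * orient b c z / orient a b c) := rfl

theorem carries_affineFrame (X : Fin 5 → Pt) (E : Finset (Sym2 (Fin 5))) :
    Carries (affineFrame a b c h) X (affineFrame a b c h ∘ X) E where
  apply _ := rfl
  image_segment k l _ := by
    simp only [segment_eq_image_lineMap, image_image, Function.comp_apply]
    refine image_congr fun t _ => ?_
    ext <;> simp [affineFrame_apply, AffineMap.lineMap_apply_module, orient] <;> ring

theorem orient_affineFrame (p q z : Pt) :
    orient (affineFrame a b c h p) (affineFrame a b c h q) (affineFrame a b c h z) =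
      36 / orient a b c * orient p q z := by
  have h' := h
  simp only [orient] at h'
  simp only [affineFrame_apply, orient]
  field_simp
  ring

theorem IsCanonical.affineFrame_comp {X : Fin 5 → Pt} (hX : IsCanonical X) :
    IsCanonical (affineFrame a b c h ∘ X) := by
  have hpos : 0 < (36 / orient a b c) ^ 2 := by positivity
  have inTriangle {p q u z : Pt} (hz : InTriangle p q u z) :
      InTriangle (affineFrame a b c h p) (affineFrame a b c h q) (affineFrame a b c h u)
        (affineFrame a b c h z) := by
    simp only [InTriangle, orient_affineFrame, mul_mul_mul_comm _ (orient p q u), ← sq,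
      mul_pos_iff_of_pos_left hpos]
    exact hz
  exact hX.imp inTriangle inTriangle

end AffineFrame

theorem isCanonical_iff {p q : Pt} :
    IsCanonical ![(0, 6), (0, 0), (6, 0), p, q] ↔
      (0 < p.1 ∧ 0 < p.2 ∧ p.1 + p.2 < 6) ∧
        0 < q.2 ∧ q.2 * p.1 < q.1 * p.2 ∧ q.2 * (6 - p.1) < (6 - q.1) * p.2 := by
  simp only [IsCanonical, InTriangle, Matrix.cons_val]
  have h_first : orient (0, 6) (0, 0) (6, 0) = (36 : ℝ) ∧ orient (0, 6) (0, 0) p = 6 * p.1 ∧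
      orient (0, 0) (6, 0) p = 6 * p.2 ∧ orient (6, 0) (0, 6) p = 6 * (6 - p.1 - p.2) := by
    refine ⟨?_, ?_, ?_, ?_⟩ <;> simp only [orient] <;> ring
  have h_second : orient (0, 0) (6, 0) q = 6 * q.2 ∧
      orient (6, 0) p q = (6 - q.1) * p.2 - q.2 * (6 - p.1) ∧
      orient p (0, 0) q = q.1 * p.2 - q.2 * p.1 := by
    refine ⟨?_, ?_, ?_⟩ <;> simp only [orient] <;> ring
  simp only [h_first, h_second, mul_pos_iff_of_pos_left (by norm_num : (0 : ℝ) < 36),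
    mul_pos_iff_of_pos_left (by norm_num : (0 : ℝ) < 6)]
  constructor
  · rintro ⟨⟨hp₁, hp₂, hp₃⟩, hq₁, hq₂, hq₃⟩
    have hp₂' : 0 < 6 * p.2 := by positivity
    rw [mul_pos_iff_of_pos_left hp₂'] at hq₁ hq₂ hq₃
    exact ⟨⟨hp₁, hp₂, by linarith⟩, by linarith, by linarith, by linarith⟩
  · rintro ⟨⟨hp₁, hp₂, hp₃⟩, hq₁, hq₂, hq₃⟩
    have hp₂' : 0 < 6 * p.2 := by positivity
    simp only [mul_pos_iff_of_pos_left hp₂']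
    exact ⟨⟨hp₁, hp₂, by linarith⟩, by linarith, by linarith, by linarith⟩

section PushThree

/-- The first three vertices of `standard`. -/
def frameTriangle : Fin 3 → Pt := ![(0, 6), (0, 0), (6, 0)]

/-- The pairs of a side of `frameTriangle` and a vertex lying in the piece of the triangle at that
side, for a canonical configuration. -/
def framePieces : List (Fin 3 × Fin 5) :=
  [(0, 3), (1, 3), (2, 3), (1, 4), (0, 0), (0, 1), (1, 1), (1, 2), (2, 0), (2, 2)]

theorem sideForm_frameTriangle (z : Pt) (i : Fin 3) :
    sideForm frameTriangle i z = 6 * ![z.1, z.2, 6 - z.1 - z.2] i := by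
  fin_cases i <;> simp [side, orient, frameTriangle]
  ring

theorem sideForm_frameTriangle_pos {p : Pt} (h₁ : 0 < p.1) (h₂ : 0 < p.2) (h₃ : p.1 + p.2 < 6)
    (i : Fin 3) : 0 < sideForm frameTriangle i p := by
  rw [sideForm_frameTriangle]
  fin_cases i <;> simp <;> linarith

variable {p q : Pt} (h : IsCanonical ![(0, 6), (0, 0), (6, 0), p, q])
include h

theorem IsCanonical.sideForm_frameTriangle_three_pos (i : Fin 3) :
    0 < sideForm frameTriangle i p :=
  let ⟨⟨h₁, h₂, h₃⟩, _⟩ := isCanonical_iff.mp h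
  sideForm_frameTriangle_pos h₁ h₂ h₃ i

theorem IsCanonical.pyramidPiece_four : pyramidPiece (sideForm frameTriangle) p 1 q := by
  obtain ⟨-, h₁, h₂, h₃⟩ := isCanonical_iff.mp h
  simp only [pyramidPiece, sideForm_frameTriangle]
  refine ⟨by simpa using h₁.le, fun j => ?_⟩
  fin_cases j <;> simp <;> linarith

theorem IsCanonical.pyramidPiece_of_mem_framePieces {i : Fin 3} {k : Fin 5}
    (hik : (i, k) ∈ framePieces) :
    pyramidPiece (sideForm frameTriangle) p i (![(0, 6), (0, 0), (6, 0), p, q] k) := by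
  have hp := h.sideForm_frameTriangle_three_pos
  simp only [framePieces, List.mem_cons, List.not_mem_nil, or_false, Prod.mk.injEq] at hik
  obtain ⟨rfl, rfl⟩ | ⟨rfl, rfl⟩ | ⟨rfl, rfl⟩ | ⟨rfl, rfl⟩ | h_corner := hik
  iterate 3 exact pyramidPiece_self hp _
  · exact h.pyramidPiece_four
  · refine pyramidPiece_of_eq_zero hp ?_ fun j => ?_
    all_goals
      rw [sideForm_frameTriangle]
      rcases h_corner with ⟨rfl, rfl⟩ | ⟨rfl, rfl⟩ | ⟨rfl, rfl⟩ | ⟨rfl, rfl⟩ | ⟨rfl, rfl⟩ |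
        ⟨rfl, rfl⟩
    iterate 6 simp
    all_goals fin_cases j <;> simp

theorem IsCanonical.push_four (c : Pt) :
    push (sideForm frameTriangle) p c q = q + (q.2 / p.2) • (c - p) := by
  rw [push, pyramid_eq_div h.sideForm_frameTriangle_three_pos h.pyramidPiece_four,
    sideForm_frameTriangle, sideForm_frameTriangle, mul_div_mul_left _ _ (by norm_num)]
  rfl

theorem IsCanonical.push_three {c : Pt} (hc : ∀ i, 0 < sideForm frameTriangle i c) :
    IsCanonical ![(0, 6), (0, 0), (6, 0), c, push (sideForm frameTriangle) p c q] := by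
  obtain ⟨⟨-, hp₂, -⟩, hq₁, hq₂, hq₃⟩ := isCanonical_iff.mp h
  have hc₁ : 0 < c.1 := by simpa [sideForm_frameTriangle, -sideForm_apply] using hc 0
  have hc₂ : 0 < c.2 := by simpa [sideForm_frameTriangle, -sideForm_apply] using hc 1
  have hc₃ : c.1 + c.2 < 6 := by
    simpa [sideForm_frameTriangle, -sideForm_apply, lt_sub_iff_add_lt'] using hc 2
  have ht : 0 < q.2 / p.2 := div_pos hq₁ hp₂
  rw [h.push_four, isCanonical_iff]
  have h_snd : q.2 = q.2 / p.2 * p.2 := (div_mul_cancel₀ _ hp₂.ne').symm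
  generalize q.2 / p.2 = t at ht h_snd ⊢
  have h_left : 0 < (q.1 - t * p.1) * c.2 := by
    refine mul_pos (pos_of_mul_pos_left (b := p.2) ?_ hp₂.le) hc₂
    linear_combination hq₂ - p.1 * h_snd
  have h_right : 0 < (6 - q.1 - t * (6 - p.1)) * c.2 := by
    refine mul_pos (pos_of_mul_pos_left (b := p.2) ?_ hp₂.le) hc₂
    linear_combination hq₃ - (6 - p.1) * h_snd
  have h_apply : q + t • (c - p) = (q.1 + t * (c.1 - p.1), t * c.2) := by
    ext <;> simp [h_snd]
    ring
  rw [h_apply]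
  exact ⟨⟨hc₁, hc₂, hc₃⟩, mul_pos ht hc₂, by linear_combination h_left,
    by linear_combination h_right⟩

theorem IsCanonical.carries_push_three {c : Pt} (hc : ∀ i, 0 < sideForm frameTriangle i c) :
    Carries (pushHomeomorph h.sideForm_frameTriangle_three_pos hc)
      ![(0, 6), (0, 0), (6, 0), p, q]
      ![(0, 6), (0, 0), (6, 0), c, push (sideForm frameTriangle) p c q] {s(0, 4)} := by
  let X : Fin 5 → Pt := ![(0, 6), (0, 0), (6, 0), p, q]
  have hp := h.sideForm_frameTriangle_three_pos
  have h_apply (k : Fin 5) : push (sideForm frameTriangle) p c (X k) =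
      ![(0, 6), (0, 0), (6, 0), c, push (sideForm frameTriangle) p c q] k := by
    fin_cases k
    · exact push_eq_self hp (i := 0) (by simp [sideForm_frameTriangle, X, -sideForm_apply])
    · exact push_eq_self hp (i := 0) (by simp [sideForm_frameTriangle, X, -sideForm_apply])
    · exact push_eq_self hp (i := 1) (by simp [sideForm_frameTriangle, X, -sideForm_apply])
    · exact push_self hp
    · rfl
  have h_common : ∀ k l, s(k, l) ∉ ({s(0, 4)} : Finset (Sym2 (Fin 5))) →
      ∃ i, (i, k) ∈ framePieces ∧ (i, l) ∈ framePieces := by decide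
  refine ⟨h_apply, fun k l hE => ?_⟩
  obtain ⟨i, hk, hl⟩ := h_common k l hE
  rw [← h_apply, ← h_apply]
  exact pushHomeomorph_image_segment hp hc (h.pyramidPiece_of_mem_framePieces hk)
    (h.pyramidPiece_of_mem_framePieces hl)

end PushThree

theorem isPush_four {q : Pt} (h : IsCanonical ![(0, 6), (0, 0), (6, 0), (2, 2), q]) :
    IsPush (castPt ∘ ![(0, 0), (6, 0), (2, 2)]) 4 ![(0, 6), (0, 0), (6, 0), (2, 2), q]
      (castPt ∘ standard) {s(0, 4)} := by
  have h_standard : IsPush ![(0, 0), (6, 0), (2, 2)] 4 standard standard {s(0, 4)} := by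
    constructor <;> decide
  refine h_standard.castPt_comp.congr_source (fun k hk => ?_) fun i => ?_
  · fin_cases k <;> simp_all [castPt, standard]
  · obtain ⟨-, hq₁, hq₂, hq₃⟩ := isCanonical_iff.mp h
    simp only at hq₂ hq₃
    fin_cases i <;> simp [side, castPt, orient] <;> linarith

theorem IsCanonical.exists_carries_standard {X : Fin 5 → Pt} (hX : IsCanonical X) :
    ∃ Ψ, Carries Ψ X (castPt ∘ standard) {s(0, 4)} := by
  have h_orient : orient (X 0) (X 1) (X 2) ≠ 0 := left_ne_zero_of_mul hX.1.1.ne'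
  have h_frame : affineFrame _ _ _ h_orient ∘ X = ![(0, 6), (0, 0), (6, 0),
      affineFrame _ _ _ h_orient (X 3), affineFrame _ _ _ h_orient (X 4)] := by
    funext k
    fin_cases k
    · simp [affineFrame_apply, orient_self_left, orient_rotate, h_orient]
    · simp [affineFrame_apply, orient_self_left, orient_self_right]
    · simp [affineFrame_apply, orient_self_right, h_orient]
    · rfl
    · rfl
  have h_canonical := hX.affineFrame_comp h_orient
  have h_carries := carries_affineFrame h_orient X {s(0, 4)}
  rw [h_frame] at h_canonical h_carries
  have hc := sideForm_frameTriangle_pos (p := (2, 2)) two_pos two_pos (by norm_num)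
  exact ⟨_, (h_carries.trans (h_canonical.carries_push_three hc)).trans
    (isPush_four (h_canonical.push_three hc)).carries⟩

end Configurations

section Rerouting

variable {m n : ℕ}

/-- The drawing placing the vertices and edges of `Fin n` as `D` does those of `Fin m` assigned to
them by `f`. -/
def RawDrawing.comap (f : Fin n → Fin m) (D : RawDrawing m) : RawDrawing n where
  pos v := D.pos (f v)
  curve u v := D.curve (f u) (f v)

/-- The drawings `D` and `D'` differ in the curve of `uv` only, and `uv` is rerouted with respect to
the point `p`. Distinctness of the faces containing `p` is recorded as a property of the point sets,
which is stable under the removal of vertices and edges. -/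
structure IsCleanReroute (n : ℕ) (G : SimpleGraph (Fin n)) (S : Set (Fin n)) (D D' : RawDrawing n)
    (u v : Fin n) (p : Pt) : Prop where
  left_mem : u ∈ S
  right_mem : v ∈ S
  adj : G.Adj u v
  notMem_source : p ∉ drawingImage n G S D
  notMem_target : p ∉ drawingImage n G S D'
  subset_source : arcInterior (D.curve u v) ⊆ closure (faceOf (drawingImage n G S D) p)
  subset_target : arcInterior (D'.curve u v) ⊆ closure (faceOf (drawingImage n G S D') p)
  not_subset : ¬ arcInterior (D.curve u v) ⊆ drawingImage n G S D'
  curve_eq : ∀ x ∈ S, ∀ y ∈ S, G.Adj x y → s(x, y) ≠ s(u, v) → D'.curve x y = D.curve x y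
  embedding : SameMarkedEmbedding n G S D D' ∅ ∅

variable {G : SimpleGraph (Fin n)} {S : Set (Fin n)} {H : SimpleGraph (Fin m)} {T : Set (Fin m)}
  {f : Fin n → Fin m}

theorem sym2_eq_of_injOn {α β : Type*} {f : α → β} {s : Set α} (hf : InjOn f s) {a b c d : α}
    (ha : a ∈ s) (hb : b ∈ s) (hc : c ∈ s) (hd : d ∈ s) (h : s(f a, f b) = s(f c, f d)) :
    s(a, b) = s(c, d) :=
  Sym2.eq_iff.mpr <| (Sym2.eq_iff.mp h).imp (And.imp (hf ha hc) (hf hb hd))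
    (And.imp (hf ha hd) (hf hb hc))

theorem arcBody_subset_drawingImage {D : RawDrawing n} {u v : Fin n} (hu : u ∈ S) (hv : v ∈ S)
    (huv : G.Adj u v) : arcBody (D.curve u v) ⊆ drawingImage n G S D :=
  fun _ hz => Or.inr <| by simp only [mem_iUnion]; exact ⟨u, v, hu, hv, huv, hz⟩

theorem arcInterior_subset_arcBody (γ : ℝ → Pt) : arcInterior γ ⊆ arcBody γ :=
  image_mono Ioo_subset_Icc_self

theorem drawingImage_subset_iff {D : RawDrawing n} {X : Set Pt} :
    drawingImage n G S D ⊆ X ↔ (∀ v ∈ S, D.pos v ∈ X) ∧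
      ∀ u ∈ S, ∀ v ∈ S, G.Adj u v → arcBody (D.curve u v) ⊆ X := by
  simp only [drawingImage, union_subset_iff, image_subset_iff, iUnion_subset_iff]
  exact and_congr Iff.rfl ⟨fun h u hu v hv => h u v hu hv, fun h u v hu hv => h u hu v hv⟩

theorem drawingImage_congr {D D' : RawDrawing n} (h_pos : ∀ v ∈ S, D'.pos v = D.pos v)
    (h_curve : ∀ u ∈ S, ∀ v ∈ S, G.Adj u v → D'.curve u v = D.curve u v) :
    drawingImage n G S D' = drawingImage n G S D := by
  refine congrArg₂ (· ∪ ·) (image_congr h_pos) ?_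
  refine iUnion₂_congr fun u v => iUnion_congr fun hu => iUnion₂_congr fun hv huv => ?_
  rw [h_curve u hu v hv huv]

theorem drawingImage_comap_subset (D : RawDrawing m) (hS : MapsTo f S T)
    (hG : ∀ u ∈ S, ∀ v ∈ S, G.Adj u v → H.Adj (f u) (f v)) :
    drawingImage n G S (D.comap f) ⊆ drawingImage m H T D :=
  drawingImage_subset_iff.mpr ⟨fun _ hv => Or.inl (mem_image_of_mem _ (hS hv)),
    fun u hu v hv huv => arcBody_subset_drawingImage (hS hu) (hS hv) (hG u hu v hv huv)⟩

theorem faceOf_subset_faceOf {X Y : Set Pt} (h : X ⊆ Y) (p : Pt) : faceOf Y p ⊆ faceOf X p :=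
  connectedComponentIn_mono p (compl_subset_compl.mpr h)

theorem faceOf_ne_faceOf {X Y : Set Pt} {p z : Pt} (hp : p ∉ Y) (hz : z ∈ closure (faceOf X p))
    (hzX : z ∈ X) (hzY : z ∉ Y) : faceOf X p ≠ faceOf Y p := by
  intro h
  rw [h] at hz
  have h_preconnected : IsPreconnected (insert z (faceOf Y p)) :=
    isPreconnected_connectedComponentIn.subset_closure (subset_insert _ _)
      (insert_subset hz subset_closure)
  have h_mem : z ∈ faceOf Y p :=
    h_preconnected.subset_connectedComponentIn (mem_insert_of_mem _ (mem_connectedComponentIn hp))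
      (insert_subset hzY (connectedComponentIn_subset _ _)) (mem_insert _ _)
  rw [← h] at h_mem
  exact connectedComponentIn_subset _ _ h_mem hzX

theorem SameMarkedEmbedding.comap {D D' : RawDrawing m} {Q Q' : Set Pt}
    (h : SameMarkedEmbedding m H T D D' Q Q') (hS : MapsTo f S T)
    (hG : ∀ u ∈ S, ∀ v ∈ S, G.Adj u v → H.Adj (f u) (f v)) :
    SameMarkedEmbedding n G S (D.comap f) (D'.comap f) Q Q' :=
  let ⟨Φ, h_pos, h_body, h_marks⟩ := h
  ⟨Φ, fun _ hv => h_pos _ (hS hv),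
    fun u hu v hv huv => h_body _ (hS hu) _ (hS hv) (hG u hu v hv huv), h_marks⟩

theorem IsPlanarDrawingOn.comap {D : RawDrawing m} {P : Set Pt} (h : IsPlanarDrawingOn m H T P D)
    (hS : MapsTo f S T) (hf : InjOn f S)
    (hG : ∀ u ∈ S, ∀ v ∈ S, G.Adj u v → H.Adj (f u) (f v)) :
    IsPlanarDrawingOn n G S P (D.comap f) where
  pos_mem _ hv := h.pos_mem _ (hS hv)
  pos_inj := h.pos_inj.comp hf hS
  curve_symm _ _ := h.curve_symm _ _
  arc _ hu _ hv huv := h.arc _ (hS hu) _ (hS hv) (hG _ hu _ hv huv)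
  vertex_off_arc _ hu _ hv huv _ hw :=
    h.vertex_off_arc _ (hS hu) _ (hS hv) (hG _ hu _ hv huv) _ (hS hw)
  no_cross u hu v hv x hx y hy huv hxy hne :=
    h.no_cross _ (hS hu) _ (hS hv) _ (hS hx) _ (hS hy) (hG u hu v hv huv) (hG x hx y hy hxy)
      (fun h_eq => hne (sym2_eq_of_injOn hf hu hv hx hy h_eq))

namespace IsCleanReroute

theorem isRerouteStep {D D' : RawDrawing n} {u v : Fin n} {p : Pt}
    (h : IsCleanReroute n G S D D' u v p) : IsRerouteStep n G S D D' s(u, v) p := by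
  obtain ⟨z, hz, hz'⟩ := Set.not_subset.mp h.not_subset
  have hz_source : z ∈ drawingImage n G S D :=
    arcBody_subset_drawingImage h.left_mem h.right_mem h.adj (arcInterior_subset_arcBody _ hz)
  exact ⟨u, v, rfl, h.left_mem, h.right_mem, h.adj, h.notMem_source, h.notMem_target,
    h.subset_source, h.subset_target,
    faceOf_ne_faceOf h.notMem_target (h.subset_source hz) hz_source hz', h.embedding⟩

theorem comap {D D' : RawDrawing m} {u v : Fin n} {p : Pt}
    (h : IsCleanReroute m H T D D' (f u) (f v) p) (hS : MapsTo f S T) (hf : InjOn f S)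
    (hG : ∀ u ∈ S, ∀ v ∈ S, G.Adj u v → H.Adj (f u) (f v)) (hu : u ∈ S) (hv : v ∈ S)
    (huv : G.Adj u v) :
    IsCleanReroute n G S (D.comap f) (D'.comap f) u v p :=
  have h_source := drawingImage_comap_subset D hS hG
  have h_target := drawingImage_comap_subset D' hS hG
  { left_mem := hu
    right_mem := hv
    adj := huv
    notMem_source := fun hp => h.notMem_source (h_source hp)
    notMem_target := fun hp => h.notMem_target (h_target hp)
    subset_source := h.subset_source.trans (closure_mono (faceOf_subset_faceOf h_source p))
    subset_target := h.subset_target.trans (closure_mono (faceOf_subset_faceOf h_target p))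
    not_subset := fun hz => h.not_subset (hz.trans h_target)
    curve_eq := fun x hx y hy hxy hne => h.curve_eq _ (hS hx) _ (hS hy) (hG x hx y hy hxy)
      (fun h_eq => hne (sym2_eq_of_injOn hf hx hy hu hv h_eq))
    embedding := h.embedding.comap hS hG }

theorem congr {D₀ D₀' D D' : RawDrawing n} {u v : Fin n} {p : Pt}
    (h : IsCleanReroute n G S D₀ D₀' u v p)
    (h_pos : ∀ x ∈ S, D.pos x = D₀.pos x)
    (h_curve : ∀ x ∈ S, ∀ y ∈ S, G.Adj x y → D.curve x y = D₀.curve x y)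
    (h_pos' : ∀ x ∈ S, D'.pos x = D₀'.pos x)
    (h_curve' : ∀ x ∈ S, ∀ y ∈ S, G.Adj x y → D'.curve x y = D₀'.curve x y) :
    IsCleanReroute n G S D D' u v p := by
  have h_source := drawingImage_congr h_pos h_curve
  have h_target := drawingImage_congr h_pos' h_curve'
  obtain ⟨Φ, h_vertex, h_body, h_marks⟩ := h.embedding
  refine ⟨h.left_mem, h.right_mem, h.adj, ?_, ?_, ?_, ?_, ?_, ?_, ?_⟩
  · exact h_source ▸ h.notMem_source
  · exact h_target ▸ h.notMem_target
  · rw [h_curve u h.left_mem v h.right_mem h.adj, h_source]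
    exact h.subset_source
  · rw [h_curve' u h.left_mem v h.right_mem h.adj, h_target]
    exact h.subset_target
  · rw [h_curve u h.left_mem v h.right_mem h.adj, h_target]
    exact h.not_subset
  · intro x hx y hy hxy hne
    rw [h_curve' x hx y hy hxy, h_curve x hx y hy hxy, h.curve_eq x hx y hy hxy hne]
  · refine ⟨Φ, fun x hx => ?_, fun x hx y hy hxy => ?_, h_marks⟩
    · rw [h_pos x hx, h_pos' x hx, h_vertex x hx]
    · rw [h_curve x hx y hy hxy, h_curve' x hx y hy hxy, h_body x hx y hy hxy]

end IsCleanReroute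

end Rerouting

section Models

theorem image_Ioo_eq_sdiff {α : Type*} {γ : ℝ → α} (h : InjOn γ (Icc 0 1)) :
    γ '' Ioo 0 1 = γ '' Icc 0 1 \ {γ 0, γ 1} := by
  have h_ends : {0, 1} ⊆ Icc (0 : ℝ) 1 :=
    pair_subset (left_mem_Icc.mpr zero_le_one) (right_mem_Icc.mpr zero_le_one)
  rw [← Icc_sdiff_both, h.image_sdiff_subset h_ends, image_pair]

theorem openSegment_eq_segment_sdiff {a b : Pt} (hab : a ≠ b) :
    openSegment ℝ a b = segment ℝ a b \ {a, b} := by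
  rw [openSegment_eq_image_lineMap, segment_eq_image_lineMap,
    image_Ioo_eq_sdiff (AffineMap.lineMap_injective ℝ hab).injOn, AffineMap.lineMap_apply_zero,
    AffineMap.lineMap_apply_one]

/-- Up to the homeomorphism `φ` of the plane, `D` is the straight-line drawing of `K₅` with vertices
`X`, with the exception of the edges in `E`. -/
structure Models (D : RawDrawing 5) (E : Finset (Sym2 (Fin 5))) (φ : Pt ≃ₜ Pt)
    (X : Fin 5 → Pt) : Prop where
  pos : ∀ k, D.pos k = φ (X k)
  curve_symm : ∀ k l, D.curve l k = fun t => D.curve k l (1 - t)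
  arc : ∀ k l, k ≠ l → s(k, l) ∉ E → IsArcFrom (D.curve k l) (D.pos k) (D.pos l)
  arcBody : ∀ k l, k ≠ l → s(k, l) ∉ E → arcBody (D.curve k l) = φ '' segment ℝ (X k) (X l)

/-- The image under `φ` of the straight-line drawing of `K₅` with vertices `X`. -/
def straight (φ : Pt ≃ₜ Pt) (X : Fin 5 → Pt) : RawDrawing 5 where
  pos k := φ (X k)
  curve k l t := φ (AffineMap.lineMap (X k) (X l) t)

theorem models_straight (φ : Pt ≃ₜ Pt) {X : Fin 5 → Pt} (hX : Function.Injective X) :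
    Models (straight φ X) ∅ φ X where
  pos _ := rfl
  curve_symm k l := by
    funext t
    simp only [straight, AffineMap.lineMap_apply_one_sub]
  arc k l hkl _ := by
    refine ⟨(φ.continuous.comp AffineMap.lineMap_continuous).continuousOn,
      (φ.injective.comp (AffineMap.lineMap_injective ℝ (hX.ne hkl))).injOn, ?_, ?_⟩
    · simp only [straight, AffineMap.lineMap_apply_zero]
    · simp only [straight, AffineMap.lineMap_apply_one]
  arcBody k l _ _ := by
    simp only [GraphStories.arcBody, straight, segment_eq_image_lineMap, image_image]

namespace Models

variable {D : RawDrawing 5} {E M : Finset (Sym2 (Fin 5))} {φ : Pt ≃ₜ Pt} {X : Fin 5 → Pt}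

theorem injective (h : Models D E φ X) {k l : Fin 5} (hkl : k ≠ l) (hE : s(k, l) ∉ E) :
    X k ≠ X l := by
  obtain ⟨-, h_inj, h₀, h₁⟩ := h.arc k l hkl hE
  intro h_eq
  refine zero_ne_one (h_inj (left_mem_Icc.mpr zero_le_one) (right_mem_Icc.mpr zero_le_one) ?_)
  rw [h₀, h₁, h.pos, h.pos, h_eq]

theorem arcInterior_eq (h : Models D E φ X) {k l : Fin 5} (hkl : k ≠ l) (hE : s(k, l) ∉ E) :
    arcInterior (D.curve k l) = φ '' openSegment ℝ (X k) (X l) := by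
  obtain ⟨-, h_inj, h₀, h₁⟩ := h.arc k l hkl hE
  have h_body : D.curve k l '' Icc 0 1 = _ := h.arcBody k l hkl hE
  rw [arcInterior, image_Ioo_eq_sdiff h_inj, h₀, h₁, h_body, h.pos, h.pos,
    openSegment_eq_segment_sdiff (h.injective hkl hE), image_sdiff φ.injective, image_pair]

theorem mono (h : Models D E φ X) (hEM : E ⊆ M) : Models D M φ X :=
  ⟨h.pos, h.curve_symm, fun k l hkl hM => h.arc k l hkl fun hE => hM (hEM hE),
    fun k l hkl hM => h.arcBody k l hkl fun hE => hM (hEM hE)⟩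

theorem comap (h : Models D E φ X) (σ : Equiv.Perm (Fin 5)) :
    Models (D.comap σ) (E.image (Sym2.map σ.symm)) φ (X ∘ σ) := by
  have h_notMem {k l : Fin 5} (hE : s(k, l) ∉ E.image (Sym2.map σ.symm)) : s(σ k, σ l) ∉ E :=
    fun h_mem => hE (Finset.mem_image.mpr ⟨_, h_mem, by simp⟩)
  exact ⟨fun _ => h.pos _, fun _ _ => h.curve_symm _ _,
    fun _ _ hkl hE => h.arc _ _ (σ.injective.ne hkl) (h_notMem hE),
    fun _ _ hkl hE => h.arcBody _ _ (σ.injective.ne hkl) (h_notMem hE)⟩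

theorem of_carries (h : Models D E φ X) {Ψ : Pt ≃ₜ Pt} {Y : Fin 5 → Pt}
    (hΨ : Carries Ψ X Y E) : Models D E (Ψ.symm.trans φ) Y where
  pos k := by rw [h.pos, Homeomorph.trans_apply, hΨ.symm.apply]
  curve_symm := h.curve_symm
  arc := h.arc
  arcBody k l hkl hE := by
    rw [h.arcBody k l hkl hE, ← hΨ.symm.image_segment k l hE, image_image]
    rfl

theorem exists_redraw (h : Models D M φ X) {Ψ : Pt ≃ₜ Pt} {Y : Fin 5 → Pt}
    (hΨ : Carries Ψ X Y E) (hM : M ⊆ E) (hY : Function.Injective Y) :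
    ∃ D', Models D' ∅ (Ψ.symm.trans φ) Y ∧ D'.pos = D.pos ∧
      ∀ k l, s(k, l) ∉ E → D'.curve k l = D.curve k l := by
  have h' := (h.mono hM).of_carries hΨ
  have h_straight := models_straight (Ψ.symm.trans φ) hY
  let D' : RawDrawing 5 :=
    ⟨D.pos, fun k l => if s(k, l) ∈ E then (straight (Ψ.symm.trans φ) Y).curve k l else D.curve k l⟩
  refine ⟨D', ⟨h'.pos, fun k l => ?_, fun k l hkl _ => ?_, fun k l hkl _ => ?_⟩, rfl,
    fun k l hE => if_neg hE⟩
  all_goals by_cases hE : s(k, l) ∈ E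
  · simp only [D', Sym2.eq_swap (a := l), if_pos hE]
    exact h_straight.curve_symm k l
  · simp only [D', Sym2.eq_swap (a := l), if_neg hE]
    exact h'.curve_symm k l
  · simp only [D', if_pos hE, h'.pos]
    exact h_straight.arc k l hkl (Finset.notMem_empty _)
  · simp only [D', if_neg hE]
    exact h'.arc k l hkl hE
  · simp only [D', if_pos hE]
    exact h_straight.arcBody k l hkl (Finset.notMem_empty _)
  · simp only [D', if_neg hE]
    exact h'.arcBody k l hkl hE

end Models

end Models

section Crossings

/-- The pairs containing `r`. -/
def star (r : Fin 5) : Finset (Sym2 (Fin 5)) := {e | r ∈ e}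

theorem mk_mem_star {r k l : Fin 5} : s(k, l) ∈ star r ↔ k = r ∨ l = r := by
  rw [star, Finset.mem_filter_univ, Sym2.mem_iff, eq_comm, eq_comm (a := r)]

/-- Each segment between two vertices other than `r` can be separated by a line through two vertices
from the triangle `r b d`, except that it may touch the side `b d`. Hence `r` sees all of that
side. -/
def Sees {R : Type*} [CommRing R] [LinearOrder R] (X : Fin 5 → R × R) (r b d : Fin 5) : Prop :=
  ∀ k l, k ≠ r → l ≠ r → ∃ p q, 0 < orient (X p) (X q) (X r) ∧
    (∀ m ∈ [k, l], orient (X p) (X q) (X m) ≤ 0) ∧ ∀ m ∈ [b, d], 0 ≤ orient (X p) (X q) (X m)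

instance {R : Type*} [CommRing R] [LinearOrder R] (X : Fin 5 → R × R) (r b d : Fin 5) :
    Decidable (Sees X r b d) :=
  inferInstanceAs (Decidable (∀ _ _, _))

theorem Sees.castPt_comp {X : Fin 5 → ℤ × ℤ} {r b d : Fin 5} (h : Sees X r b d) :
    Sees (castPt ∘ X) r b d := by
  simpa only [Sees, Function.comp_apply, orient_castPt, Int.cast_nonpos, Int.cast_pos,
    Int.cast_nonneg_iff] using h

/-- Dragging the vertex `r` inside the triangle `T` to its place in `X'` sweeps it over the edge
`b d`, so that redrawing this edge straight amounts to rerouting it with respect to `r`. -/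
structure IsCrossing {R : Type*} [CommRing R] [LinearOrder R] (T : Fin 3 → R × R) (r b d : Fin 5)
    (X X' : Fin 5 → R × R) : Prop where
  isPush : IsPush T r X X' (insert s(b, d) (star r))
  ne_left : b ≠ r
  ne_right : d ≠ r
  midpoint_pos : ∀ i, 0 < side T i (X b) + side T i (X d)
  orient_ne : orient (X b) (X d) (X r) ≠ orient (X b) (X d) (X' r)
  sees_source : Sees X r b d
  sees_target : Sees X' r b d

namespace IsCrossing

theorem symm {R : Type*} [CommRing R] [LinearOrder R] {T : Fin 3 → R × R} {r b d : Fin 5}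
    {X X' : Fin 5 → R × R} (h : IsCrossing T r b d X X') : IsCrossing T r b d X' X where
  isPush := h.isPush.symm
  ne_left := h.ne_left
  ne_right := h.ne_right
  midpoint_pos i := by
    rw [h.isPush.eq_of_ne b h.ne_left, h.isPush.eq_of_ne d h.ne_right]
    exact h.midpoint_pos i
  orient_ne := by
    rw [h.isPush.eq_of_ne b h.ne_left, h.isPush.eq_of_ne d h.ne_right]
    exact h.orient_ne.symm
  sees_source := h.sees_target
  sees_target := h.sees_source

theorem castPt_comp {T : Fin 3 → ℤ × ℤ} {r b d : Fin 5} {X X' : Fin 5 → ℤ × ℤ}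
    (h : IsCrossing T r b d X X') :
    IsCrossing (castPt ∘ T) r b d (castPt ∘ X) (castPt ∘ X') where
  isPush := h.isPush.castPt_comp
  ne_left := h.ne_left
  ne_right := h.ne_right
  midpoint_pos i := by
    simpa only [Function.comp_apply, side_castPt, ← Int.cast_add, Int.cast_pos]
      using h.midpoint_pos i
  orient_ne := by
    simpa only [Function.comp_apply, orient_castPt, ne_eq, Int.cast_inj] using h.orient_ne
  sees_source := h.sees_source.castPt_comp
  sees_target := h.sees_target.castPt_comp

variable {T : Fin 3 → Pt} {r b d : Fin 5} {X X' : Fin 5 → Pt}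

theorem ne (h : IsCrossing T r b d X X') : b ≠ d := by
  rintro rfl
  exact h.orient_ne (by simp only [orient, sub_self, zero_mul])

theorem homeomorph_midpoint_notMem_segment (h : IsCrossing T r b d X X') {k l : Fin 5}
    (hk : k ≠ r) (hl : l ≠ r) :
    h.isPush.homeomorph (midpoint ℝ (X b) (X d)) ∉ segment ℝ (X k) (X l) := by
  have apply_midpoint (f : Pt →ᴬ[ℝ] ℝ) : f (midpoint ℝ (X b) (X d)) = (f (X b) + f (X d)) / 2 := by
    rw [← ContinuousAffineMap.coe_toAffineMap, AffineMap.map_midpoint, midpoint_eq_smul_add,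
      smul_eq_mul, invOf_eq_inv, inv_mul_eq_div]
  have h_midpoint (i : Fin 3) : 0 < sideForm T i (midpoint ℝ (X b) (X d)) := by
    rw [apply_midpoint]
    exact half_pos (h.midpoint_pos i)
  intro h_mem
  by_cases hkl : s(k, l) = s(b, d)
  · have h_segment : segment ℝ (X k) (X l) = segment ℝ (X b) (X d) := by
      rcases Sym2.eq_iff.mp hkl with ⟨rfl, rfl⟩ | ⟨rfl, rfl⟩
      · rfl
      · exact segment_symm ℝ _ _
    have h_line : orientForm (X b) (X d) (h.isPush.homeomorph (midpoint ℝ (X b) (X d))) = 0 := by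
      obtain ⟨t, -, ht⟩ := segment_eq_image_lineMap ℝ (X b) (X d) ▸ h_segment ▸ h_mem
      rw [← ht, ← ContinuousAffineMap.coe_toAffineMap, AffineMap.apply_lineMap]
      simp [orient_self_left, orient_self_right]
    change orientForm (X b) (X d) (push (sideForm T) (X r) (X' r) _) = 0 at h_line
    rw [apply_push, apply_midpoint] at h_line
    simp only [orientForm_apply, orient_self_left, orient_self_right, add_zero, zero_div, zero_add,
      mul_eq_zero, sub_eq_zero] at h_line
    exact h_line.elim (pyramid_pos h.isPush.source h_midpoint).ne' h.orient_ne.symm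
  · have h_notMem : s(k, l) ∉ insert s(b, d) (star r) := by
      simp [mk_mem_star, hkl, hk, hl]
    obtain ⟨i, hki, hli⟩ := h.isPush.beyond k l hk hl h_notMem
    exact (le_zero_of_mem_segment (f := sideForm T i) hki hli h_mem).not_gt
      (apply_push_pos h.isPush.source h.isPush.target h_midpoint i)

end IsCrossing

theorem apply_mem_closure_faceOf {I : Set Pt} (φ : Pt ≃ₜ Pt) {x y : Pt}
    (h : ∀ t ∈ Ico (0 : ℝ) 1, φ (AffineMap.lineMap x y t) ∉ I) :
    φ y ∈ closure (faceOf I (φ x)) := by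
  let γ : ℝ → Pt := fun t => φ (AffineMap.lineMap x y t)
  have hγ : Continuous γ := φ.continuous.comp AffineMap.lineMap_continuous
  have h_face : γ '' Ico 0 1 ⊆ faceOf I (φ x) :=
    (isPreconnected_Ico.image γ hγ.continuousOn).subset_connectedComponentIn
      ⟨0, left_mem_Ico.mpr zero_lt_one, by simp [γ]⟩ (image_subset_iff.mpr h)
  refine closure_mono h_face (image_closure_subset_closure_image hγ ⟨1, ?_, by simp [γ]⟩)
  rw [closure_Ico zero_ne_one]
  exact right_mem_Icc.mpr zero_le_one

namespace Models

variable {D : RawDrawing 5} {M : Finset (Sym2 (Fin 5))} {φ : Pt ≃ₜ Pt} {X X' : Fin 5 → Pt}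
  {T : Fin 3 → Pt} {r b d : Fin 5}

theorem exists_mem_segment (h : Models D M φ X) (hM : M ⊆ star r) {z : Pt}
    (hz : φ z ∈ drawingImage 5 ⊤ {r}ᶜ D) :
    ∃ k l, k ≠ r ∧ l ≠ r ∧ z ∈ segment ℝ (X k) (X l) := by
  suffices h_subset : drawingImage 5 ⊤ {r}ᶜ D ⊆
      φ '' {z | ∃ k l, k ≠ r ∧ l ≠ r ∧ z ∈ segment ℝ (X k) (X l)} from
    φ.injective.mem_set_image.mp (h_subset hz)
  refine drawingImage_subset_iff.mpr ⟨fun k hk => ?_, fun k hk l hl hkl => ?_⟩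
  · rw [h.pos]
    exact mem_image_of_mem φ ⟨k, k, hk, hk, left_mem_segment ℝ _ _⟩
  · rw [h.arcBody k l hkl fun hE => (mk_mem_star.mp (hM hE)).elim hk hl]
    exact image_mono fun z hz => ⟨k, l, hk, hl, hz⟩

theorem lineMap_notMem_drawingImage (h : Models D M φ X) (hM : M ⊆ star r) (hX : Sees X r b d)
    {y : Pt} (hy : y ∈ segment ℝ (X b) (X d)) {t : ℝ} (ht : t ∈ Ico (0 : ℝ) 1) :
    φ (AffineMap.lineMap (X r) y t) ∉ drawingImage 5 ⊤ {r}ᶜ D := by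
  intro h_mem
  obtain ⟨k, l, hk, hl, hz⟩ := h.exists_mem_segment hM h_mem
  obtain ⟨p, q, hr, hkl, hbd⟩ := hX k l hk hl
  simp only [List.mem_cons, List.not_mem_nil, or_false, forall_eq_or_imp, forall_eq] at hkl hbd
  have hz' := le_zero_of_mem_segment (f := orientForm (X p) (X q)) hkl.1 hkl.2 hz
  have hy' := le_zero_of_mem_segment (f := -orientForm (X p) (X q)) (neg_nonpos.mpr hbd.1)
    (neg_nonpos.mpr hbd.2) hy
  have h_line : orientForm (X p) (X q) (AffineMap.lineMap (X r) y t) =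
      (1 - t) * orient (X p) (X q) (X r) + t * orient (X p) (X q) y := by
    rw [← ContinuousAffineMap.coe_toAffineMap, AffineMap.apply_lineMap,
      AffineMap.lineMap_apply_module]
    simp
  have h_pos : 0 < (1 - t) * orient (X p) (X q) (X r) := mul_pos (sub_pos.mpr ht.2) hr
  have h_nonneg : 0 ≤ t * orient (X p) (X q) y := mul_nonneg ht.1 (neg_nonpos.mp hy')
  linarith

theorem pos_notMem_drawingImage (h : Models D M φ X) (hM : M ⊆ star r) (hX : Sees X r b d) :
    D.pos r ∉ drawingImage 5 ⊤ {r}ᶜ D := by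
  have h_zero := h.lineMap_notMem_drawingImage hM hX (left_mem_segment ℝ _ _)
    (left_mem_Ico.mpr zero_lt_one)
  rwa [AffineMap.lineMap_apply_zero, ← h.pos] at h_zero

theorem arcInterior_subset_closure_faceOf (h : Models D M φ X) (hM : M ⊆ star r)
    (hX : Sees X r b d) (hbd : b ≠ d) (hb : b ≠ r) (hd : d ≠ r) :
    arcInterior (D.curve b d) ⊆ closure (faceOf (drawingImage 5 ⊤ {r}ᶜ D) (D.pos r)) := by
  refine (arcInterior_subset_arcBody _).trans ?_
  rw [h.arcBody b d hbd fun hE => (mk_mem_star.mp (hM hE)).elim hb hd, h.pos]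
  rintro _ ⟨y, hy, rfl⟩
  exact apply_mem_closure_faceOf φ fun t ht => h.lineMap_notMem_drawingImage hM hX hy ht

theorem apply_midpoint_mem_arcInterior (h : Models D M φ X) (hbd : b ≠ d) (hE : s(b, d) ∉ M) :
    φ (midpoint ℝ (X b) (X d)) ∈ arcInterior (D.curve b d) := by
  rw [h.arcInterior_eq hbd hE]
  exact mem_image_of_mem φ (midpoint_mem_openSegment _ _)

theorem sameMarkedEmbedding {D' : RawDrawing 5} {φ' : Pt ≃ₜ Pt} (h : Models D M φ X)
    (h' : Models D' M φ' X') (hM : M ⊆ star r) (hX : ∀ k, k ≠ r → X' k = X k) :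
    SameMarkedEmbedding 5 ⊤ {r}ᶜ D D' ∅ ∅ := by
  refine ⟨φ.symm.trans φ', fun k hk => ?_, fun k hk l hl hkl => ?_, image_empty _⟩
  · rw [h.pos, h'.pos, hX k hk, Homeomorph.trans_apply, Homeomorph.symm_apply_apply]
  · have hE : s(k, l) ∉ M := fun hE => (mk_mem_star.mp (hM hE)).elim hk hl
    rw [h.arcBody k l hkl hE, h'.arcBody k l hkl hE, hX k hk, hX l hl, image_image]
    simp only [Homeomorph.trans_apply, Homeomorph.symm_apply_apply]

theorem exists_isCleanReroute (h : Models D M φ X) (hM : M ⊆ star r)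
    (hX' : Function.Injective X') (hX : IsCrossing T r b d X X') :
    ∃ D' φ', Models D' ∅ φ' X' ∧ D'.pos = D.pos ∧
      IsCleanReroute 5 ⊤ {r}ᶜ D D' b d (D.pos r) := by
  have h_star := Finset.subset_insert s(b, d) (star r)
  obtain ⟨D', h', h_pos, h_curve⟩ := h.exists_redraw hX.isPush.carries (hM.trans h_star) hX'
  have hbd : s(b, d) ∉ M := fun hE => (mk_mem_star.mp (hM hE)).elim hX.ne_left hX.ne_right
  refine ⟨D', _, h', h_pos, hX.ne_left, hX.ne_right, hX.ne,
    h.pos_notMem_drawingImage hM hX.sees_source, ?_,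
    h.arcInterior_subset_closure_faceOf hM hX.sees_source hX.ne hX.ne_left hX.ne_right, ?_, ?_, ?_,
    h.sameMarkedEmbedding (h'.mono (Finset.empty_subset _)) hM hX.isPush.eq_of_ne⟩
  · rw [← h_pos]
    exact h'.pos_notMem_drawingImage (Finset.empty_subset _) hX.sees_target
  · rw [← h_pos]
    exact h'.arcInterior_subset_closure_faceOf (Finset.empty_subset _) hX.sees_target hX.ne
      hX.ne_left hX.ne_right
  · intro h_subset
    have h_mem := h_subset (h.apply_midpoint_mem_arcInterior hX.ne hbd)
    rw [← hX.isPush.homeomorph.symm_apply_apply (midpoint ℝ (X b) (X d))] at h_mem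
    obtain ⟨k, l, hk, hl, hz⟩ := h'.exists_mem_segment (Finset.empty_subset _) h_mem
    rw [hX.isPush.eq_of_ne k hk, hX.isPush.eq_of_ne l hl] at hz
    exact hX.homeomorph_midpoint_notMem_segment hk hl hz
  · intro k hk l hl _ hne
    refine h_curve k l fun hE => ?_
    rcases Finset.mem_insert.mp hE with h_eq | hE
    · exact hne h_eq
    · exact (mk_mem_star.mp hE).elim hk hl

end Models

end Crossings

section Moves

/-- Up to a relabelling `σ` of the vertices and a homeomorphism of the plane, `D` is the
straight-line drawing of `K₅` with vertices `standard`, with the exception of the edge `M`, which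
corresponds to `04`. -/
def IsStandard (D : RawDrawing 5) (M : Sym2 (Fin 5)) : Prop :=
  ∃ (σ : Equiv.Perm (Fin 5)) (φ : Pt ≃ₜ Pt), M = s(σ 0, σ 4) ∧
    Models (D.comap σ) {s(0, 4)} φ (castPt ∘ standard)

/-- In the drawing `D`, where the missing edge has `r` as an end, one edge can be rerouted with
respect to the vertex `r`, and the edges at `r` can be redrawn, so that the missing edge becomes
`r x`. -/
def CanReroute (D : RawDrawing 5) (r x : Fin 5) : Prop :=
  ∃ D', IsStandard D' s(r, x) ∧ D'.pos = D.pos ∧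
    ∃ b d, IsCleanReroute 5 ⊤ {r}ᶜ D D' b d (D.pos r)

/-- In the drawing `D`, where `M` is the missing edge, `M` can be drawn so that `N` becomes the
missing edge. -/
def CanFlip (D : RawDrawing 5) (M N : Sym2 (Fin 5)) : Prop :=
  ∃ D', IsStandard D' N ∧ D'.pos = D.pos ∧
    ∀ k l, s(k, l) ≠ M → s(k, l) ≠ N → D'.curve k l = D.curve k l

variable {D : RawDrawing 5} {φ : Pt ≃ₜ Pt} {σ : Equiv.Perm (Fin 5)}

theorem RawDrawing.comap_comap_symm (D : RawDrawing 5) (σ : Equiv.Perm (Fin 5)) :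
    (D.comap σ).comap σ.symm = D := by
  simp only [RawDrawing.comap, Equiv.apply_symm_apply]

theorem RawDrawing.comap_symm_comap (D : RawDrawing 5) (σ : Equiv.Perm (Fin 5)) :
    (D.comap σ.symm).comap σ = D := D.comap_comap_symm σ.symm

theorem IsStandard.of_comap {M : Sym2 (Fin 5)} (h : IsStandard (D.comap σ) M) :
    IsStandard D (M.map σ) := by
  obtain ⟨τ, φ, rfl, hφ⟩ := h
  exact ⟨τ.trans σ, φ, rfl, hφ⟩

theorem IsStandard.comap_symm {M : Sym2 (Fin 5)} (h : IsStandard D M) :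
    IsStandard (D.comap σ.symm) (M.map σ) :=
  .of_comap (by rwa [D.comap_symm_comap])

theorem CanReroute.of_comap {r x : Fin 5} (h : CanReroute (D.comap σ) r x) :
    CanReroute D (σ r) (σ x) := by
  obtain ⟨D', h_standard, h_pos, b, d, h⟩ := h
  refine ⟨D'.comap σ.symm, h_standard.comap_symm, ?_, σ b, σ d, ?_⟩
  · funext k
    simp only [RawDrawing.comap, h_pos, Equiv.apply_symm_apply]
  have h_clean : IsCleanReroute 5 ⊤ {r}ᶜ (D.comap σ) D' (σ.symm (σ b)) (σ.symm (σ d))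
      (D.pos (σ r)) := by
    rwa [Equiv.symm_apply_apply, Equiv.symm_apply_apply]
  have h_comap := h_clean.comap (G := ⊤) (S := {σ r}ᶜ)
    (fun _ hk h_eq => hk (σ.symm_apply_eq.mp h_eq)) σ.symm.injective.injOn
    (fun _ _ _ _ hkl => σ.symm.injective.ne hkl) (σ.injective.ne h.left_mem)
    (σ.injective.ne h.right_mem) (σ.injective.ne h.adj)
  rwa [D.comap_comap_symm σ] at h_comap

theorem CanFlip.of_comap {M N : Sym2 (Fin 5)} (h : CanFlip (D.comap σ) M N) :
    CanFlip D (M.map σ) (N.map σ) := by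
  obtain ⟨D', h_standard, h_pos, h_curve⟩ := h
  refine ⟨D'.comap σ.symm, h_standard.comap_symm, ?_, fun k l hM hN => ?_⟩
  · funext k
    simp only [RawDrawing.comap, h_pos, Equiv.apply_symm_apply]
  · have h_ne {e : Sym2 (Fin 5)} (he : s(k, l) ≠ e.map σ) : s(σ.symm k, σ.symm l) ≠ e := by
      rintro rfl
      simp only [Sym2.map_mk, Equiv.apply_symm_apply, ne_eq, not_true_eq_false] at he
    change D'.curve (σ.symm k) (σ.symm l) = _
    rw [h_curve _ _ (h_ne hM) (h_ne hN)]
    simp only [RawDrawing.comap, Equiv.apply_symm_apply]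

theorem castPt_injective : Function.Injective castPt := fun p q h => by
  simpa only [castPt, Prod.mk.injEq, Int.cast_inj, ← Prod.ext_iff] using h

theorem Models.exists_models_standard {X : Fin 5 → ℤ × ℤ} (h : Models D ∅ φ (castPt ∘ X))
    (hX : IsCanonical (X ∘ σ)) :
    ∃ φ', Models (D.comap σ) {s(0, 4)} φ' (castPt ∘ standard) :=
  let ⟨_, hΨ⟩ := hX.castPt_comp.exists_carries_standard
  ⟨_, ((h.comap σ).mono (Finset.empty_subset _)).of_carries hΨ⟩

theorem IsStandard.of_isCanonical {X : Fin 5 → ℤ × ℤ} (h : Models D ∅ φ (castPt ∘ X))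
    (hX : IsCanonical (X ∘ σ)) : IsStandard D s(σ 0, σ 4) :=
  let ⟨φ', h'⟩ := h.exists_models_standard hX
  ⟨σ, φ', rfl, h'⟩

theorem CanReroute.of_isCrossing {M : Finset (Sym2 (Fin 5))} {X X' : Fin 5 → ℤ × ℤ}
    {T : Fin 3 → ℤ × ℤ} {r b d x : Fin 5} (h : Models D M φ (castPt ∘ X)) (hM : M ⊆ star r)
    (hX : IsCrossing T r b d X X') (hX' : Function.Injective X') (σ : Equiv.Perm (Fin 5))
    (h_canonical : IsCanonical (X' ∘ σ)) (hσ : s(σ 0, σ 4) = s(r, x)) : CanReroute D r x := by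
  obtain ⟨D', φ', h', h_pos, h_clean⟩ :=
    h.exists_isCleanReroute hM (castPt_injective.comp hX') hX.castPt_comp
  exact ⟨D', hσ ▸ .of_isCanonical h' h_canonical, h_pos, b, d, h_clean⟩

theorem CanFlip.of_carries {Ψ : Pt ≃ₜ Pt} {M N : Sym2 (Fin 5)} {X X' : Fin 5 → ℤ × ℤ}
    (h : Models D {M} φ (castPt ∘ X)) (hΨ : Carries Ψ (castPt ∘ X) (castPt ∘ X') {M, N})
    (hX' : Function.Injective X') (σ : Equiv.Perm (Fin 5)) (h_canonical : IsCanonical (X' ∘ σ))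
    (hσ : s(σ 0, σ 4) = N) : CanFlip D M N := by
  obtain ⟨D', h', h_pos, h_curve⟩ := h.exists_redraw hΨ
    (Finset.singleton_subset_iff.mpr (Finset.mem_insert_self _ _)) (castPt_injective.comp hX')
  exact ⟨D', hσ ▸ .of_isCanonical h' h_canonical, h_pos, fun k l hM hN =>
    h_curve k l fun hE =>
      (Finset.mem_insert.mp hE).elim hM fun hE => hN (Finset.mem_singleton.mp hE)⟩

/-- The configuration `standard` with the vertex `4` dragged across the side `12`. -/
def standardDragged : Fin 5 → ℤ × ℤ := ![(0, 6), (0, 0), (6, 0), (2, 2), (-1, -3)]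

theorem isCrossing_standardDragged :
    IsCrossing ![(-10, -10), (26, -10), (2, 2)] 4 1 2 standard standardDragged :=
  ⟨by constructor <;> decide, by decide, by decide, by decide, by decide, by decide, by decide⟩

/-- A labelling exhibiting `standardDragged` as canonical, with missing edge `34`. -/
def draggedPerm : Equiv.Perm (Fin 5) := .swap 0 4 * .swap 4 3 * .swap 3 1

theorem isCanonical_standardDragged : IsCanonical (standardDragged ∘ draggedPerm) := by decide

/-- The configuration `standard` with the vertex `0` dragged around the vertex `2`. -/
def standardTurned : Fin 5 → ℤ × ℤ := ![(10, -1), (0, 0), (6, 0), (2, 2), (3, 1)]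

theorem isPush_standardTurned :
    IsPush ![(26, -10), (20, 20), (-14, 10)] 0 standard standardTurned (star 0) := by
  constructor <;> decide

namespace Models

variable (h : Models D {s(0, 4)} φ (castPt ∘ standard))
include h

theorem exists_comap_symm (σ : Equiv.Perm (Fin 5)) {X : Fin 5 → ℤ × ℤ} (hX : IsCanonical (X ∘ σ)) :
    ∃ φ', Models (D.comap σ.symm) {s(σ 0, σ 4)} φ' (castPt ∘ X) := by
  obtain ⟨Ψ, hΨ⟩ := hX.castPt_comp.exists_carries_standard
  have h_models := (h.of_carries hΨ.symm).comap σ.symm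
  have hX_comp : (castPt ∘ X ∘ σ) ∘ σ.symm = castPt ∘ X := by
    rw [← Function.comp_assoc, Function.comp_assoc, Equiv.self_comp_symm, Function.comp_id]
  rw [hX_comp, Finset.image_singleton, Sym2.map_mk, Equiv.symm_symm] at h_models
  exact ⟨_, h_models⟩

theorem exists_comap_swap :
    ∃ φ', Models (D.comap (Equiv.swap 1 2)) {s(0, 4)} φ' (castPt ∘ standard) :=
  h.exists_comap_symm (.swap 1 2) (X := standard) (by decide)

theorem canReroute_four_one : CanReroute D 4 1 := by
  have h_crossing : IsCrossing ![(2, 0), (6, 0), (2, 4)] 4 2 3 standard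
      ![(0, 6), (0, 0), (6, 0), (2, 2), (3, 2)] :=
    ⟨by constructor <;> decide, by decide, by decide, by decide, by decide, by decide, by decide⟩
  exact .of_isCrossing h (by decide) h_crossing (by decide) (.swap 0 1) (by decide) (by decide)

theorem canReroute_four_two : CanReroute D 4 2 :=
  let ⟨_, h'⟩ := h.exists_comap_swap
  h'.canReroute_four_one.of_comap

theorem canReroute_four_three : CanReroute D 4 3 :=
  .of_isCrossing h (by decide) isCrossing_standardDragged (by decide) draggedPerm
    isCanonical_standardDragged (by decide)

theorem canReroute_zero_one : CanReroute D 0 1 := by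
  obtain ⟨φ', h'⟩ := h.exists_comap_symm draggedPerm isCanonical_standardDragged
  have h_reroute : CanReroute (D.comap draggedPerm.symm) 4 0 :=
    .of_isCrossing h' (by decide) isCrossing_standardDragged.symm (by decide) 1 (by decide)
      (by decide)
  exact h_reroute.of_comap

theorem canReroute_zero_two : CanReroute D 0 2 :=
  let ⟨_, h'⟩ := h.exists_comap_swap
  h'.canReroute_zero_one.of_comap

/- The edges at `0` are first redrawn as they are in `standardTurned`, where `2` and `3` have
changed their roles. -/
theorem canReroute_zero_three : CanReroute D 0 3 := by
  obtain ⟨D₁, h₁, h₁_pos, h₁_curve⟩ := h.exists_redraw isPush_standardTurned.castPt_comp.carries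
    (by decide) (castPt_injective.comp (by decide))
  obtain ⟨φ', h'⟩ := h₁.exists_models_standard (σ := .swap 2 3) (by decide)
  have h_reroute : CanReroute D₁ 0 3 := h'.canReroute_zero_two.of_comap
  obtain ⟨D', h_standard, h_pos, b, d, h_clean⟩ := h_reroute
  rw [h₁_pos] at h_clean h_pos
  refine ⟨D', h_standard, h_pos, b, d, h_clean.congr (fun k _ => congrFun h₁_pos.symm k)
    (fun k hk l hl _ => (h₁_curve k l ?_).symm) (fun _ _ => rfl) fun _ _ _ _ _ => rfl⟩
  exact fun hE => (mk_mem_star.mp hE).elim hk hl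

theorem canFlip_two_three : CanFlip D s(0, 4) s(2, 3) :=
  .of_carries h (Carries.refl _ _) (by decide) (.swap 0 2 * .swap 3 4) (by decide) (by decide)

theorem canFlip_one_two : CanFlip D s(0, 4) s(1, 2) := by
  have h_push : IsPush ![(-10, -10), (26, -10), (2, 2)] 4 standard standardDragged
      {s(0, 4), s(1, 2)} := by
    constructor <;> decide
  exact .of_carries h h_push.castPt_comp.carries (by decide) (.swap 0 2 * .swap 1 4) (by decide)
    (by decide)

theorem canFlip_one_three : CanFlip D s(0, 4) s(1, 3) :=
  let ⟨_, h'⟩ := h.exists_comap_swap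
  h'.canFlip_two_three.of_comap

end Models

theorem IsStandard.canReroute {r u x : Fin 5} (h : IsStandard D s(r, u)) (hr : x ≠ r) (hu : x ≠ u) :
    CanReroute D r x := by
  obtain ⟨σ, φ, hσ, h⟩ := h
  obtain ⟨x, rfl⟩ := σ.surjective x
  rcases Sym2.eq_iff.mp hσ with ⟨rfl, rfl⟩ | ⟨rfl, rfl⟩
  all_goals
    refine CanReroute.of_comap ?_
    fin_cases x
  · exact (hr rfl).elim
  · exact h.canReroute_zero_one
  · exact h.canReroute_zero_two
  · exact h.canReroute_zero_three
  · exact (hu rfl).elim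
  · exact (hu rfl).elim
  · exact h.canReroute_four_one
  · exact h.canReroute_four_two
  · exact h.canReroute_four_three
  · exact (hr rfl).elim

theorem IsStandard.canFlip {M : Sym2 (Fin 5)} {x y : Fin 5} (h : IsStandard D M) (hxy : x ≠ y)
    (hx : x ∉ M) (hy : y ∉ M) : CanFlip D M s(x, y) := by
  obtain ⟨σ, φ, rfl, h⟩ := h
  obtain ⟨x, rfl⟩ := σ.surjective x
  obtain ⟨y, rfl⟩ := σ.surjective y
  have h_disjoint : ∀ x y : Fin 5, x ≠ y → x ∉ s(0, 4) → y ∉ s(0, 4) →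
      s(x, y) = s(1, 2) ∨ s(x, y) = s(1, 3) ∨ s(x, y) = s(2, 3) := by decide
  suffices CanFlip (D.comap σ) s(0, 4) s(x, y) from this.of_comap
  have h_notMem {x : Fin 5} (hx : σ x ∉ s(σ 0, σ 4)) : x ∉ s(0, 4) := by
    simpa only [Sym2.mem_iff, σ.injective.eq_iff] using hx
  rcases h_disjoint x y (ne_of_apply_ne σ hxy) (h_notMem hx) (h_notMem hy) with h_eq | h_eq | h_eq
  all_goals rw [h_eq]
  · exact h.canFlip_one_two
  · exact h.canFlip_one_three
  · exact h.canFlip_two_three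

end Moves

section Planarity

/-- The graph `K₅` with the edge `M` removed. -/
def completeMinus (M : Sym2 (Fin 5)) : SimpleGraph (Fin 5) :=
  (⊤ : SimpleGraph (Fin 5)).deleteEdges {M}

theorem completeMinus_adj {M : Sym2 (Fin 5)} {k l : Fin 5} :
    (completeMinus M).Adj k l ↔ k ≠ l ∧ s(k, l) ≠ M := by
  rw [completeMinus, SimpleGraph.deleteEdges_adj, SimpleGraph.top_adj, mem_singleton_iff]

/-- The open segment `a b` lies strictly to the left of the line `c d`: both ends lie weakly to the
left, one of them strictly. -/
def IsLeftOf {R : Type*} [CommRing R] [LinearOrder R] (a b c d : R × R) : Prop :=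
  0 ≤ orient c d a ∧ 0 ≤ orient c d b ∧ 0 < orient c d a + orient c d b

instance (a b c d : ℤ × ℤ) : Decidable (IsLeftOf a b c d) := inferInstanceAs (Decidable (_ ∧ _))

theorem IsLeftOf.castPt {a b c d : ℤ × ℤ} (h : IsLeftOf a b c d) :
    IsLeftOf (castPt a) (castPt b) (castPt c) (castPt d) := by
  simp only [IsLeftOf, orient_castPt]
  exact_mod_cast h

theorem orient_combo (c d a b : Pt) {s t : ℝ} (hst : s + t = 1) :
    orient c d (s • a + t • b) = s * orient c d a + t * orient c d b :=
  Convex.combo_affine_apply (f := (orientForm c d : Pt →ᵃ[ℝ] ℝ)) hst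

theorem orient_eq_zero_of_mem_openSegment {a b z : Pt} (hz : z ∈ openSegment ℝ a b) :
    orient a b z = 0 := by
  obtain ⟨s, t, -, -, hst, rfl⟩ := hz
  rw [orient_combo a b a b hst, orient_self_left, orient_self_right, mul_zero, mul_zero, add_zero]

theorem IsLeftOf.orient_pos {a b c d z : Pt} (h : IsLeftOf a b c d) (hz : z ∈ openSegment ℝ a b) :
    0 < orient c d z := by
  obtain ⟨s, t, hs, ht, hst, rfl⟩ := hz
  obtain ⟨ha, hb, hab⟩ := h
  rw [orient_combo c d a b hst]
  rcases ha.lt_or_eq with ha | ha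
  · exact add_pos_of_pos_of_nonneg (mul_pos hs ha) (mul_nonneg ht.le hb)
  · rw [← ha, zero_add] at hab
    rw [← ha, mul_zero, zero_add]
    exact mul_pos ht hab

theorem IsLeftOf.disjoint_openSegment {a b c d : Pt} (h : IsLeftOf a b c d) :
    Disjoint (openSegment ℝ a b) (openSegment ℝ c d) :=
  disjoint_left.mpr fun _ hz hz' => (h.orient_pos hz).ne' (orient_eq_zero_of_mem_openSegment hz')

theorem isLeftOf_standard : ∀ i j k l : Fin 5, i ≠ j → s(i, j) ≠ s(0, 4) → k ≠ l →
    s(k, l) ≠ s(0, 4) → s(i, j) ≠ s(k, l) →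
    IsLeftOf (standard i) (standard j) (standard k) (standard l) ∨
      IsLeftOf (standard i) (standard j) (standard l) (standard k) ∨
      IsLeftOf (standard k) (standard l) (standard i) (standard j) ∨
      IsLeftOf (standard k) (standard l) (standard j) (standard i) := by
  decide +kernel

theorem orient_standard_ne_zero : ∀ i j k : Fin 5, [i, j, k].Nodup →
    orient (standard i) (standard j) (standard k) ≠ 0 := by decide

theorem castPt_standard_injective : Function.Injective (castPt ∘ standard) :=
  castPt_injective.comp (by decide)

theorem disjoint_openSegment_standard {i j k l : Fin 5} (hij : (completeMinus s(0, 4)).Adj i j)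
    (hkl : (completeMinus s(0, 4)).Adj k l) (hne : s(i, j) ≠ s(k, l)) :
    Disjoint (openSegment ℝ (castPt (standard i)) (castPt (standard j)))
      (openSegment ℝ (castPt (standard k)) (castPt (standard l))) := by
  rw [completeMinus_adj] at hij hkl
  rcases isLeftOf_standard i j k l hij.1 hij.2 hkl.1 hkl.2 hne with h | h | h | h
  · exact h.castPt.disjoint_openSegment
  · rw [openSegment_symm ℝ (castPt (standard k))]
    exact h.castPt.disjoint_openSegment
  · exact h.castPt.disjoint_openSegment.symm
  · rw [openSegment_symm ℝ (castPt (standard i))]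
    exact h.castPt.disjoint_openSegment.symm

theorem standard_notMem_openSegment {i j k : Fin 5} (hij : i ≠ j) :
    castPt (standard k) ∉ openSegment ℝ (castPt (standard i)) (castPt (standard j)) := by
  intro h
  have h_ne : castPt (standard i) ≠ castPt (standard j) := castPt_standard_injective.ne hij
  rcases eq_or_ne k i with rfl | hki
  · exact h_ne (left_mem_openSegment_iff.mp h)
  rcases eq_or_ne k j with rfl | hkj
  · exact h_ne (right_mem_openSegment_iff.mp h)
  have h_orient := orient_eq_zero_of_mem_openSegment h
  rw [orient_castPt, Int.cast_eq_zero] at h_orient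
  exact orient_standard_ne_zero i j k (by simp [hij, hki.symm, hkj.symm]) h_orient

theorem Models.isPlanarDrawingOn {D : RawDrawing 5} {φ : Pt ≃ₜ Pt}
    (h : Models D {s(0, 4)} φ (castPt ∘ standard)) :
    IsPlanarDrawingOn 5 (completeMinus s(0, 4)) univ (range D.pos) D := by
  have h_interior {k l : Fin 5} (hkl : (completeMinus s(0, 4)).Adj k l) :
      arcInterior (D.curve k l) =
        φ '' openSegment ℝ (castPt (standard k)) (castPt (standard l)) :=
    let ⟨h_ne, hM⟩ := completeMinus_adj.mp hkl
    h.arcInterior_eq h_ne (Finset.notMem_singleton.mpr hM)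
  refine ⟨fun _ _ => mem_range_self _, ?_, h.curve_symm, fun k _ l _ hkl => ?_,
    fun k _ l _ hkl j _ => ?_, fun i _ j _ k _ l _ hij hkl hne => ?_⟩
  · rw [injOn_univ, funext h.pos]
    exact φ.injective.comp castPt_standard_injective
  · exact h.arc k l hkl.ne (Finset.notMem_singleton.mpr (completeMinus_adj.mp hkl).2)
  · rw [h_interior hkl, h.pos, φ.injective.mem_set_image]
    exact standard_notMem_openSegment hkl.ne
  · rw [h_interior hij, h_interior hkl, ← disjoint_iff_inter_eq_empty,
      disjoint_image_iff φ.injective]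
    exact disjoint_openSegment_standard hij hkl hne

theorem IsStandard.isPlanarDrawingOn {D : RawDrawing 5} {M : Sym2 (Fin 5)} (h : IsStandard D M) :
    IsPlanarDrawingOn 5 (completeMinus M) univ (range D.pos) D := by
  obtain ⟨σ, φ, rfl, h⟩ := h
  have h_comap := h.isPlanarDrawingOn.comap (f := σ.symm) (G := completeMinus s(σ 0, σ 4))
    (mapsTo_univ _ univ) σ.symm.injective.injOn fun k _ l _ hkl => ?_
  · rwa [D.comap_comap_symm, show (D.comap σ).pos = D.pos ∘ σ from rfl,
      σ.surjective.range_comp] at h_comap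
  · rw [completeMinus_adj] at hkl ⊢
    refine ⟨σ.symm.injective.ne hkl.1, fun h_eq => hkl.2 ?_⟩
    have h_map := congrArg (Sym2.map σ) h_eq
    rwa [Sym2.map_mk, Sym2.map_mk, Equiv.apply_symm_apply, Equiv.apply_symm_apply] at h_map

end Planarity

section Placement

/-- The vertical shear of the plane by the amount `f` depending on the abscissa. -/
def shear (f : C(ℝ, ℝ)) : Pt ≃ₜ Pt where
  toFun z := (z.1, z.2 + f z.1)
  invFun z := (z.1, z.2 - f z.1)
  left_inv z := by simp
  right_inv z := by simp

variable {ι : Type*} [Finite ι] {p q : ι → Pt}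

theorem exists_continuousMap_apply_eq {v : ι → ℝ} (hv : Function.Injective v) (r : ι → ℝ) :
    ∃ f : C(ℝ, ℝ), ∀ k, f (v k) = r k := by
  classical
  have := Fintype.ofFinite ι
  exact ⟨(Lagrange.interpolate Finset.univ v r).toContinuousMap,
    fun k => Lagrange.eval_interpolate_at_node r hv.injOn (Finset.mem_univ k)⟩

theorem exists_homeomorph_eq_fst (hp : Function.Injective fun k => (p k).1) (r : ι → ℝ) :
    ∃ φ : Pt ≃ₜ Pt, ∀ k, φ (p k) = ((p k).1, r k) := by
  obtain ⟨f, hf⟩ := exists_continuousMap_apply_eq hp (fun k => r k - (p k).2)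
  refine ⟨shear f, fun k => ?_⟩
  change ((p k).1, (p k).2 + f (p k).1) = _
  rw [hf, add_sub_cancel]

theorem exists_homeomorph_apply_eq_of_injective_fst (hp : Function.Injective fun k => (p k).1)
    (hq : Function.Injective fun k => (q k).1) : ∃ φ : Pt ≃ₜ Pt, ∀ k, φ (p k) = q k := by
  obtain ⟨φ, hφ⟩ := exists_homeomorph_eq_fst hp fun k => (q k).1
  obtain ⟨ψ, hψ⟩ := exists_homeomorph_eq_fst (p := fun k => ((q k).1, (p k).1)) hq fun k => (q k).2
  refine ⟨φ.trans ((Homeomorph.prodComm ℝ ℝ).trans ψ), fun k => ?_⟩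
  change ψ (φ (p k)).swap = q k
  rw [hφ]
  exact hψ k

theorem exists_homeomorph_injective_fst (hp : Function.Injective p) :
    ∃ φ : Pt ≃ₜ Pt, Function.Injective fun k => (φ (p k)).1 := by
  obtain ⟨a, ha⟩ := (finite_range fun kl : ι × ι =>
    ((p kl.2).1 - (p kl.1).1) / ((p kl.1).2 - (p kl.2).2)).exists_notMem
  refine ⟨(Homeomorph.prodComm ℝ ℝ).trans
    ((shear ⟨fun y => a * y, by fun_prop⟩).trans (Homeomorph.prodComm ℝ ℝ)), fun k l h => ?_⟩
  change (p k).1 + a * (p k).2 = (p l).1 + a * (p l).2 at h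
  have h_snd : (p k).2 = (p l).2 := by
    by_contra h_ne
    refine ha ⟨(k, l), (div_eq_iff (sub_ne_zero.mpr h_ne)).mpr ?_⟩
    linear_combination -h
  refine hp (Prod.ext ?_ h_snd)
  rwa [h_snd, add_left_inj] at h

theorem exists_homeomorph_apply_eq (hp : Function.Injective p) (hq : Function.Injective q) :
    ∃ φ : Pt ≃ₜ Pt, ∀ k, φ (p k) = q k := by
  obtain ⟨φ, hφ⟩ := exists_homeomorph_injective_fst hp
  obtain ⟨ψ, hψ⟩ := exists_homeomorph_injective_fst hq
  obtain ⟨χ, hχ⟩ := exists_homeomorph_apply_eq_of_injective_fst hφ hψ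
  refine ⟨φ.trans (χ.trans ψ.symm), fun k => ?_⟩
  rw [Homeomorph.trans_apply, Homeomorph.trans_apply, hχ, ψ.symm_apply_apply]

theorem exists_isStandard {q : Fin 5 → Pt} (hq : Function.Injective q) {x y : Fin 5} (hxy : x ≠ y) :
    ∃ D, IsStandard D s(x, y) ∧ D.pos = q := by
  obtain ⟨σ, rfl, rfl⟩ : ∃ σ : Equiv.Perm (Fin 5), σ 0 = x ∧ σ 4 = y :=
    let ⟨σ, hσ⟩ := Equiv.Perm.exists_extending_pair ![0, 4] ![x, y] (by decide)
      (by simpa [Function.Injective, Fin.forall_fin_two] using ⟨hxy, hxy.symm⟩)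
    ⟨σ, hσ 0, hσ 1⟩
  obtain ⟨φ, hφ⟩ := exists_homeomorph_apply_eq castPt_standard_injective (hq.comp σ.injective)
  refine ⟨(straight φ (castPt ∘ standard)).comap σ.symm, ?_, ?_⟩
  · have h_models := (models_straight φ castPt_standard_injective).mono
      (Finset.empty_subset {s(0, 4)})
    exact IsStandard.comap_symm (M := s(0, 4)) ⟨1, φ, rfl, h_models⟩
  · funext k
    exact (hφ _).trans (congrArg q (σ.apply_symm_apply k))

end Placement

section Steps

variable {m n : ℕ} {G : SimpleGraph (Fin n)} {S : Set (Fin n)} {H : SimpleGraph (Fin m)}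
  {T : Set (Fin m)} {f : Fin n → Fin m} {p : Pt}

/-- On the subgraph of `G` induced by `S`, the curves of `D'` are those of `D`, with the exception
of at most one edge, which is rerouted with respect to `p`. -/
def IsReroutedAtMostOnce (n : ℕ) (G : SimpleGraph (Fin n)) (S : Set (Fin n)) (D D' : RawDrawing n)
    (p : Pt) : Prop :=
  (∀ u ∈ S, ∀ v ∈ S, G.Adj u v → D'.curve u v = D.curve u v) ∨
    ∃ u v, IsCleanReroute n G S D D' u v p

theorem IsCleanReroute.isReroutedAtMostOnce_comap {D D' : RawDrawing m} {a b : Fin m}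
    (h : IsCleanReroute m H T D D' a b p) (hS : MapsTo f S T) (hf : InjOn f S)
    (hG : ∀ u ∈ S, ∀ v ∈ S, G.Adj u v → H.Adj (f u) (f v)) :
    IsReroutedAtMostOnce n G S (D.comap f) (D'.comap f) p := by
  by_cases h_edge : ∃ u ∈ S, ∃ v ∈ S, G.Adj u v ∧ s(f u, f v) = s(a, b)
  · obtain ⟨u, hu, v, hv, huv, h_eq⟩ := h_edge
    rcases Sym2.eq_iff.mp h_eq with ⟨rfl, rfl⟩ | ⟨rfl, rfl⟩
    · exact .inr ⟨u, v, h.comap hS hf hG hu hv huv⟩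
    · exact .inr ⟨v, u, h.comap hS hf hG hv hu huv.symm⟩
  · exact .inl fun u hu v hv huv => h.curve_eq _ (hS hu) _ (hS hv) (hG u hu v hv huv)
      fun h_eq => h_edge ⟨u, hu, v, hv, huv, h_eq⟩

namespace IsReroutedAtMostOnce

theorem comap {D D' : RawDrawing m} (h : IsReroutedAtMostOnce m H T D D' p) (hS : MapsTo f S T)
    (hf : InjOn f S) (hG : ∀ u ∈ S, ∀ v ∈ S, G.Adj u v → H.Adj (f u) (f v)) :
    IsReroutedAtMostOnce n G S (D.comap f) (D'.comap f) p := by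
  rcases h with h_curve | ⟨a, b, h⟩
  · exact .inl fun u hu v hv huv => h_curve _ (hS hu) _ (hS hv) (hG u hu v hv huv)
  · exact h.isReroutedAtMostOnce_comap hS hf hG

theorem congr_right {D D' D'' : RawDrawing n} (h : IsReroutedAtMostOnce n G S D D' p)
    (h_pos : ∀ x ∈ S, D''.pos x = D'.pos x)
    (h_curve : ∀ x ∈ S, ∀ y ∈ S, G.Adj x y → D''.curve x y = D'.curve x y) :
    IsReroutedAtMostOnce n G S D D'' p := by
  rcases h with h_curve' | ⟨u, v, h⟩
  · exact .inl fun x hx y hy hxy => (h_curve x hx y hy hxy).trans (h_curve' x hx y hy hxy)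
  · exact .inr ⟨u, v, h.congr (fun _ _ => rfl) (fun _ _ _ _ _ => rfl) h_pos h_curve⟩

theorem exists_finset {D D' : RawDrawing n} (h : IsReroutedAtMostOnce n G S D D' p) :
    ∃ F : Finset (Sym2 (Fin n)), F.card ≤ 1 ∧
      (∀ u ∈ S, ∀ v ∈ S, G.Adj u v → s(u, v) ∉ F → D'.curve u v = D.curve u v) ∧
      ∀ e ∈ F, IsRerouteStep n G S D D' e p := by
  rcases h with h_curve | ⟨u, v, h⟩
  · exact ⟨∅, Nat.zero_le 1, fun u hu v hv huv _ => h_curve u hu v hv huv,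
      fun e he => (Finset.notMem_empty e he).elim⟩
  · refine ⟨{s(u, v)}, (Finset.card_singleton _).le, fun x hx y hy hxy hF => ?_, fun e he => ?_⟩
    · exact h.curve_eq x hx y hy hxy (Finset.notMem_singleton.mp hF)
    · exact Finset.mem_singleton.mp he ▸ h.isRerouteStep

end IsReroutedAtMostOnce

/-- In the drawing `D`, the missing edge can be changed to `N` by rerouting at most one edge which
is not incident to the vertex `r`, with respect to `r`, and redrawing the edges at `r`. -/
def CanStep (D : RawDrawing 5) (r : Fin 5) (N : Sym2 (Fin 5)) : Prop :=
  ∃ D', IsStandard D' N ∧ D'.pos = D.pos ∧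
    IsReroutedAtMostOnce 5 (completeMinus N) {r}ᶜ D D' (D.pos r)

variable {D : RawDrawing 5} {r x y z : Fin 5} {M N : Sym2 (Fin 5)}

theorem IsStandard.canStep_self (h : IsStandard D M) (r : Fin 5) : CanStep D r M :=
  ⟨D, h, rfl, .inl fun _ _ _ _ _ => rfl⟩

theorem CanFlip.exists_curve_eq (h : CanFlip D M N) (hr : r ∈ M) :
    ∃ D', IsStandard D' N ∧ D'.pos = D.pos ∧ ∀ k ∈ ({r}ᶜ : Set (Fin 5)),
      ∀ l ∈ ({r}ᶜ : Set (Fin 5)), (completeMinus N).Adj k l → D'.curve k l = D.curve k l := by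
  obtain ⟨D', h_standard, h_pos, h_curve⟩ := h
  refine ⟨D', h_standard, h_pos, fun k hk l hl hkl => h_curve k l ?_ (completeMinus_adj.mp hkl).2⟩
  rintro rfl
  exact (Sym2.mem_iff.mp hr).elim (fun h => hk h.symm) fun h => hl h.symm

theorem CanFlip.canStep (h : CanFlip D M N) (hr : r ∈ M) : CanStep D r N :=
  let ⟨D', h_standard, h_pos, h_curve⟩ := h.exists_curve_eq hr
  ⟨D', h_standard, h_pos, .inl h_curve⟩

theorem CanReroute.canStep (h : CanReroute D r x) : CanStep D r s(r, x) := by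
  obtain ⟨D', h_standard, h_pos, b, d, h⟩ := h
  exact ⟨D', h_standard, h_pos, h.isReroutedAtMostOnce_comap (f := id) (mapsTo_id _) (injOn_id _)
    fun _ _ _ _ hkl => (completeMinus_adj.mp hkl).1⟩

theorem CanReroute.canStep_of_notMem (h : CanReroute D r z) (hxy : x ≠ y) (hx : x ∉ s(r, z))
    (hy : y ∉ s(r, z)) : CanStep D r s(x, y) := by
  obtain ⟨D', h_standard, h_pos, b, d, h⟩ := h
  obtain ⟨D'', h_standard', h_pos', h_curve⟩ :=
    (h_standard.canFlip hxy hx hy).exists_curve_eq (Sym2.mem_mk_left r z)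
  have h_rerouted := h.isReroutedAtMostOnce_comap (G := completeMinus s(x, y)) (f := id)
    (mapsTo_id _) (injOn_id _) fun _ _ _ _ hkl => (completeMinus_adj.mp hkl).1
  exact ⟨D'', h_standard', h_pos'.trans h_pos,
    h_rerouted.congr_right (fun _ _ => congrFun h_pos' _) h_curve⟩

theorem IsStandard.canStep_of_mem (h : IsStandard D M) (hr : r ∈ M) (hx : x ∈ M) (hxy : x ≠ y) :
    CanStep D r s(x, y) := by
  by_cases hM : M = s(x, y)
  · exact hM ▸ h.canStep_self r
  obtain ⟨u, rfl⟩ := hr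
  by_cases hxr : x = r
  · subst hxr
    exact (h.canReroute hxy.symm fun hu => hM (hu ▸ rfl)).canStep
  · obtain rfl : x = u := (Sym2.mem_iff.mp hx).resolve_left hxr
    have hyr : y ≠ r := fun hr => hM (hr ▸ Sym2.eq_swap)
    obtain ⟨z, hzr, hzx, hzy⟩ : ∃ z, z ≠ r ∧ z ≠ x ∧ z ≠ y :=
      (by decide : ∀ r x y : Fin 5, ∃ z, z ≠ r ∧ z ≠ x ∧ z ≠ y) r x y
    exact (h.canReroute hzr hzx).canStep_of_notMem hxy
      (fun h => (Sym2.mem_iff.mp h).elim hxr hzx.symm)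
      (fun h => (Sym2.mem_iff.mp h).elim hyr hzy.symm)

theorem IsStandard.canStep (h : IsStandard D M) (hr : r ∈ M) (hxy : x ≠ y) :
    CanStep D r s(x, y) := by
  by_cases hx : x ∈ M
  · exact h.canStep_of_mem hr hx hxy
  · by_cases hy : y ∈ M
    · exact Sym2.eq_swap ▸ h.canStep_of_mem hr hy hxy.symm
    · exact (h.canFlip hxy hx hy).canStep hr

end Steps

section Story

variable {n i : ℕ} {G : SimpleGraph (Fin n)} {q : Fin 5 → Pt}

/-- The label of a vertex of the story: a vertex takes the label, and later the position, of the
vertex it replaces in the viewing window. -/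
def label (v : Fin n) : Fin 5 := Fin.ofNat 5 v.val

theorem label_injOn (n i : ℕ) : InjOn label (window n 5 i) := by
  rintro u ⟨hu, hu'⟩ v ⟨hv, hv'⟩ h
  have h_mod : u.val % 5 = v.val % 5 := congrArg Fin.val h
  exact Fin.ext (by omega)

theorem label_ne {v : Fin n} (hv : v ∈ window n 5 i ∩ window n 5 (i + 1)) :
    label v ≠ Fin.ofNat 5 i := by
  obtain ⟨⟨hv, -⟩, -, hv'⟩ := hv
  intro h
  have h_mod : v.val % 5 = i % 5 := congrArg Fin.val h
  omega

/-- No edge of the window graph `G_i` has the labels of `M`. -/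
def IsFree (n : ℕ) (G : SimpleGraph (Fin n)) (i : ℕ) (M : Sym2 (Fin 5)) : Prop :=
  ∀ u ∈ window n 5 i, ∀ v ∈ window n 5 i, G.Adj u v → s(label u, label v) ≠ M

theorem IsFree.completeMinus_adj {M : Sym2 (Fin 5)} (h : IsFree n G i M) {u v : Fin n}
    (hu : u ∈ window n 5 i) (hv : v ∈ window n 5 i) (huv : G.Adj u v) :
    (completeMinus M).Adj (label u) (label v) :=
  GraphStories.completeMinus_adj.mpr
    ⟨fun h_eq => huv.ne (label_injOn n i hu hv h_eq), h u hu v hv huv⟩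

theorem exists_isFree (hG : ¬ ContainsK5 n G) (i : ℕ) : ∃ x y, x ≠ y ∧ IsFree n G i s(x, y) := by
  by_contra! h_edge
  have h_adj {x y : Fin 5} (hxy : x ≠ y) : ∃ u ∈ window n 5 i, ∃ v ∈ window n 5 i,
      G.Adj u v ∧ label u = x ∧ label v = y := by
    have h_not := h_edge x y hxy
    simp only [IsFree, not_forall, not_not] at h_not
    obtain ⟨u, hu, v, hv, huv, h_eq⟩ := h_not
    rcases Sym2.eq_iff.mp h_eq with ⟨hx, hy⟩ | ⟨hy, hx⟩
    · exact ⟨u, hu, v, hv, huv, hx, hy⟩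
    · exact ⟨v, hv, u, hu, huv.symm, hx, hy⟩
  have h_vertex (x : Fin 5) : ∃ u ∈ window n 5 i, label u = x :=
    let ⟨_, hy⟩ := exists_ne x
    let ⟨u, hu, _, _, _, hx, _⟩ := h_adj hy.symm
    ⟨u, hu, hx⟩
  choose g hg hg_label using h_vertex
  refine hG ⟨g, Function.LeftInverse.injective hg_label, fun x y hxy => ?_⟩
  obtain ⟨u, hu, v, hv, huv, hx, hy⟩ := h_adj hxy
  have h_left : u = g x := label_injOn n i hu (hg x) (hx.trans (hg_label x).symm)
  have h_right : v = g y := label_injOn n i hv (hg y) (hy.trans (hg_label y).symm)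
  exact h_left ▸ h_right ▸ huv

theorem IsFree.succ {M : Sym2 (Fin 5)} (h : IsFree n G i M) (hM : Fin.ofNat 5 i ∉ M) :
    IsFree n G (i + 1) M := by
  have h_label {u : Fin n} (hu : u ∈ window n 5 (i + 1)) (hM : label u ∈ M) :
      u ∈ window n 5 i := by
    have h_ne : u.val ≠ i := by
      rintro rfl
      contradiction
    have := hu.1
    have := hu.2
    exact ⟨by omega, by omega⟩
  rintro u hu v hv huv rfl
  exact h u (h_label hu (Sym2.mem_mk_left _ _)) v (h_label hv (Sym2.mem_mk_right _ _)) huv rfl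

/-- The drawing `D` places the labels at `q`, and it is a drawing of the window graph `G_i` if each
vertex is identified with its label. -/
def IsStage (n : ℕ) (G : SimpleGraph (Fin n)) (q : Fin 5 → Pt) (i : ℕ) (D : RawDrawing 5) : Prop :=
  D.pos = q ∧ ∃ M, IsStandard D M ∧ IsFree n G i M

theorem IsStage.isPlanarDrawingOn {D : RawDrawing 5} {P : Set Pt} (h : IsStage n G q i D)
    (hq : range q ⊆ P) : IsPlanarDrawingOn n G (window n 5 i) P (D.comap label) := by
  obtain ⟨rfl, M, h_standard, h_free⟩ := h
  have h_planar := h_standard.isPlanarDrawingOn.comap (mapsTo_univ label _) (label_injOn n i)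
    fun u hu v hv huv => h_free.completeMinus_adj hu hv huv
  exact { h_planar with pos_mem := fun v hv => hq (h_planar.pos_mem v hv) }

theorem exists_isStage (hG : ¬ ContainsK5 n G) (hq : Function.Injective q) (i : ℕ) :
    ∃ D, IsStage n G q i D :=
  let ⟨_, _, hxy, h_free⟩ := exists_isFree hG i
  let ⟨D, h_standard, h_pos⟩ := exists_isStandard hq hxy
  ⟨D, h_pos, _, h_standard, h_free⟩

theorem IsStage.exists_succ {D : RawDrawing 5} (h : IsStage n G q i D) (hG : ¬ ContainsK5 n G) :
    ∃ D', IsStage n G q (i + 1) D' ∧ IsReroutedAtMostOnce n G (window n 5 i ∩ window n 5 (i + 1))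
      (D.comap label) (D'.comap label) (q (Fin.ofNat 5 i)) := by
  obtain ⟨rfl, M, h_standard, h_free⟩ := h
  obtain ⟨N, h_step, h_free'⟩ :
      ∃ N, CanStep D (Fin.ofNat 5 i) N ∧ IsFree n G (i + 1) N := by
    by_cases hM : Fin.ofNat 5 i ∈ M
    · obtain ⟨x, y, hxy, h_free'⟩ := exists_isFree hG (i + 1)
      exact ⟨s(x, y), h_standard.canStep hM hxy, h_free'⟩
    · exact ⟨M, h_standard.canStep_self _, h_free.succ hM⟩
  obtain ⟨D', h_standard', h_pos, h_rerouted⟩ := h_step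
  exact ⟨D', ⟨h_pos, N, h_standard', h_free'⟩, h_rerouted.comap (fun _ hv => label_ne hv)
    ((label_injOn n i).mono inter_subset_left)
    fun u hu v hv huv => h_free'.completeMinus_adj hu.2 hv.2 huv⟩

theorem exists_stages (hG : ¬ ContainsK5 n G) (hq : Function.Injective q) :
    ∃ D : ℕ → RawDrawing 5, ∀ i, IsStage n G q i (D i) ∧
      IsReroutedAtMostOnce n G (window n 5 i ∩ window n 5 (i + 1)) ((D i).comap label)
        ((D (i + 1)).comap label) (q (Fin.ofNat 5 i)) := by
  obtain ⟨D₀, h₀⟩ := exists_isStage hG hq 0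
  choose! next h_stage h_step using fun i D (h : IsStage n G q i D) => h.exists_succ hG
  have h_all (i : ℕ) : IsStage n G q i (Nat.rec D₀ next i) := by
    induction i with
    | zero => exact h₀
    | succ i ih => exact h_stage i _ ih
  exact ⟨fun i => Nat.rec D₀ next i, fun i => ⟨h_all i, h_step i _ (h_all i)⟩⟩

theorem nonempty_rerouteRealization {P : Set Pt} (hG : ¬ ContainsK5 n G)
    (hq : Function.Injective q) (hP : range q ⊆ P) : Nonempty (RerouteRealization n 5 1 G P) := by
  obtain ⟨D, hD⟩ := exists_stages hG hq
  refine ⟨⟨fun i => (D i).comap label, fun i _ _ => (hD i).1.isPlanarDrawingOn hP, ?_, ?_⟩⟩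
  · intro i _ _ v _
    exact congrFun ((hD i).1.1.trans (hD (i - 1)).1.1.symm) (label v)
  · rintro (_ | i) hi _
    · contradiction
    · obtain ⟨F, h_card, h_curve, h_step⟩ := (hD i).2.exists_finset
      exact ⟨F, h_card, h_curve, fun e he => ⟨_, hP (mem_range_self _), h_step e he⟩⟩

end Story

/-- **Theorem 4.** A minimal graph story `S = (G, 5, τ)` is
1-reroute realizable if and only if `G` does not contain `K₅`; in particular,
if `G` does not contain `K₅` then `S` admits a 1-reroute realization on any
arbitrarily chosen set of `5` points. -/
theorem one_reroute_realizable_iff_no_K5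
    (n : ℕ) (G : SimpleGraph (Fin n)) (hn : 5 ≤ n) (hvis : Visible n 5 G) :
    (RerouteRealizable n 5 0 1 G ↔ ¬ ContainsK5 n G) ∧
      (¬ ContainsK5 n G → ∀ P : Finset Pt, P.card = 5 →
        Nonempty (RerouteRealization n 5 1 G ↑P)) := by
  have h_realization (hG : ¬ ContainsK5 n G) (P : Finset Pt) (hP : P.card = 5) :
      Nonempty (RerouteRealization n 5 1 G ↑P) := by
    let q : Fin 5 → Pt := fun k => (P.equivFinOfCardEq hP).symm k
    have hq : Function.Injective q :=
      Subtype.val_injective.comp (P.equivFinOfCardEq hP).symm.injective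
    exact nonempty_rerouteRealization hG hq (range_subset_iff.mpr fun k => Subtype.prop _)
  refine ⟨⟨RerouteRealizable.not_containsK5 (by decide) hvis, fun hG => ?_⟩, h_realization⟩
  obtain ⟨P, hP⟩ := Infinite.exists_subset_card_eq Pt 5
  exact ⟨P, hP, h_realization hG P hP⟩

end GraphStories
end

section
/- Every minimal graph story S = (G, 5, τ) in which G is an n-vertex planar triconnected cubic graph is realizable. Moreover, a sequence of pairwise compatible planar embeddings for S can be computed in O(n) time. -/
open Set

namespace GraphStories

/-- `G` (on `Fin n`) is a planar graph: it admits a planar drawing. -/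
def PlanarGraph (n : ℕ) (G : SimpleGraph (Fin n)) : Prop :=
  ∃ D : RawDrawing n, IsPlanarDrawing n G univ D

/-- `G` is triconnected: it has at least `4` vertices and removing any at most
two vertices leaves it connected. -/
def ThreeConnected (n : ℕ) (G : SimpleGraph (Fin n)) : Prop :=
  4 ≤ n ∧ ∀ s : Finset (Fin n), s.card ≤ 2 →
    (SimpleGraph.induce {v : Fin n | v ∉ s} G).Connected

/-- `G` is cubic: every vertex has degree three. -/
def Cubic (n : ℕ) (G : SimpleGraph (Fin n)) : Prop :=
  ∀ v : Fin n, (G.neighborSet v).ncard = 3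

/-!
Draw `v_i` at the corner `i mod 5` of a pentagon (unrolled onto a line, with the two sides of the
line as its interior and exterior), so that an arriving vertex takes the place of the one that
leaves. Edges of length one and four become sides of the pentagon, edges of length two and three
diagonals, and it remains to put interleaving diagonals of a window on opposite sides. Where this
fails, an edge `v_{t-2} v_{t+1}` is twisted: it changes from one side to the other through the
pentagon side between `v_{t-1}` and `v_t`, which is possible if these are not adjacent. The sides
are chosen greedily with an invariant that looks a few vertices ahead; the situations in which no
choice would be left are excluded because every vertex has degree three and at least three edges
join an initial segment to its complement.
-/

section Counting

variable {n : ℕ} {G : SimpleGraph (Fin n)}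

open Classical in
lemma ThreeConnected.three_le_card_interedges (h3 : ThreeConnected n G) {S : Finset (Fin n)}
    (hS : 3 ≤ S.card) (hSc : Sᶜ.Nonempty) : 3 ≤ (G.interedges S Sᶜ).card := by
  by_contra! hlt
  set T := (G.interedges S Sᶜ).image Prod.fst
  have hTcard : T.card ≤ 2 := Finset.card_image_le.trans (by omega)
  obtain ⟨a, haS, haT⟩ := Finset.exists_mem_notMem_of_card_lt_card (show T.card < S.card by omega)
  obtain ⟨b, hb⟩ := hSc
  have hbS : b ∉ S := Finset.mem_compl.1 hb
  have hbT : b ∉ T := by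
    intro hb'
    obtain ⟨e, he, rfl⟩ := Finset.mem_image.1 hb'
    exact hbS ((G.mem_interedges_iff).1 he).1
  obtain ⟨w⟩ := (h3.2 T hTcard).preconnected ⟨a, haT⟩ ⟨b, hbT⟩
  obtain ⟨d, -, hd₁, hd₂⟩ := w.exists_boundary_dart {v | v.1 ∈ S} haS hbS
  exact d.fst.2 <| Finset.mem_image.2 ⟨(d.fst, d.snd),
    (G.mem_interedges_iff).2 ⟨hd₁, Finset.mem_compl.2 hd₂, d.adj⟩, rfl⟩

/-- The vertices with indices `t - d` and `t` are adjacent. -/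
def BackAdj (G : SimpleGraph (Fin n)) (t d : ℕ) : Prop :=
  ∃ u v : Fin n, G.Adj u v ∧ (v : ℕ) = t ∧ (u : ℕ) + d = t

open Classical in
/-- The indicator of `BackAdj`, in which degree and cut conditions become linear equations over
a few consecutive indices. -/
noncomputable def backEdge (G : SimpleGraph (Fin n)) (t d : ℕ) : ℕ := if BackAdj G t d then 1 else 0

lemma backEdge_sub {u v : Fin n} (h : G.Adj u v) (huv : u < v) : backEdge G v (v - u) = 1 :=
  if_pos ⟨u, v, h, rfl, by have := Fin.lt_def.1 huv; omega⟩

open Classical in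
lemma sum_backEdge {ι : Type*} (s : Finset ι) (f g : ι → ℕ) :
    ∑ i ∈ s, backEdge G (f i) (g i) = (s.filter fun i => BackAdj G (f i) (g i)).card :=
  (Finset.card_filter _ _).symm

open Classical in
lemma sum_backEdge_lower (hvis : Visible n 5 G) (t : Fin n) :
    ∑ d ∈ Finset.Icc 1 4, backEdge G t d = {w | w < t ∧ G.Adj t w}.ncard := by
  rw [sum_backEdge, ← Set.ncard_coe_finset]
  symm
  refine Set.ncard_congr (fun w _ => (t - w : ℕ)) ?_ ?_ ?_
  · rintro w ⟨hwt, hadj⟩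
    have := hvis _ _ hadj
    have := Fin.lt_def.1 hwt
    simp only [Finset.coe_filter, Finset.mem_Icc, mem_ofPred_eq]
    exact ⟨by omega, w, t, hadj.symm, rfl, by omega⟩
  · rintro w x ⟨hw, -⟩ ⟨hx, -⟩ h
    ext
    have := Fin.lt_def.1 hw
    have := Fin.lt_def.1 hx
    omega
  · rintro d hd
    simp only [Finset.coe_filter, Finset.mem_Icc, mem_ofPred_eq] at hd
    obtain ⟨hd, u, v, hadj, hv, hu⟩ := hd
    obtain rfl := Fin.ext hv
    exact ⟨u, ⟨Fin.lt_def.2 (by omega), hadj.symm⟩, by omega⟩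

open Classical in
lemma sum_backEdge_upper (hvis : Visible n 5 G) (t : Fin n) :
    ∑ d ∈ Finset.Icc 1 4, backEdge G (t + d) d = {w | t < w ∧ G.Adj t w}.ncard := by
  rw [sum_backEdge, ← Set.ncard_coe_finset]
  symm
  refine Set.ncard_congr (fun w _ => (w - t : ℕ)) ?_ ?_ ?_
  · rintro w ⟨htw, hadj⟩
    have := hvis _ _ hadj
    have := Fin.lt_def.1 htw
    simp only [Finset.coe_filter, Finset.mem_Icc, mem_ofPred_eq]
    exact ⟨by omega, t, w, hadj, by omega, by omega⟩
  · rintro w x ⟨hw, -⟩ ⟨hx, -⟩ h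
    ext
    have := Fin.lt_def.1 hw
    have := Fin.lt_def.1 hx
    omega
  · rintro d hd
    simp only [Finset.coe_filter, Finset.mem_Icc, mem_ofPred_eq] at hd
    obtain ⟨hd, u, v, hadj, hv, hu⟩ := hd
    obtain rfl : u = t := Fin.ext (by omega)
    exact ⟨v, ⟨Fin.lt_def.2 (by omega), hadj⟩, by omega⟩

lemma Cubic.sum_backEdge_eq_three (hcubic : Cubic n G) (hvis : Visible n 5 G) (t : Fin n) :
    ∑ d ∈ Finset.Icc 1 4, backEdge G t d + ∑ d ∈ Finset.Icc 1 4, backEdge G (t + d) d = 3 := by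
  have hsplit : G.neighborSet t = {w | w < t ∧ G.Adj t w} ∪ {w | t < w ∧ G.Adj t w} := by
    ext w
    have : G.Adj t w → w < t ∨ t < w := fun h => h.ne'.lt_or_gt
    simp only [SimpleGraph.mem_neighborSet, mem_union, mem_ofPred_eq]
    tauto
  rw [sum_backEdge_lower hvis, sum_backEdge_upper hvis, ← hcubic t, hsplit, Set.ncard_union_eq]
  exact Set.disjoint_left.2 fun w hw hw' => (hw.1.trans hw'.1).false

open Classical in
lemma card_interedges_le_sum_backEdge (hvis : Visible n 5 G) (t : ℕ) :
    (G.interedges (Finset.univ.filter fun v : Fin n => (v : ℕ) < t)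
        (Finset.univ.filter fun v : Fin n => (v : ℕ) < t)ᶜ).card ≤
      ∑ j ∈ Finset.range 4, ∑ d ∈ Finset.Ioc j 4, backEdge G (t + j) d := by
  rw [Finset.sum_sigma', sum_backEdge]
  refine Finset.card_le_card_of_injOn (fun p => ⟨p.2 - t, p.2 - p.1⟩) ?_ ?_
  · rintro ⟨a, b⟩ h
    simp only [Finset.mem_coe, SimpleGraph.mem_interedges_iff, Finset.mem_compl,
      Finset.mem_filter_univ, not_lt] at h
    have := hvis _ _ h.2.2
    simp only [Finset.coe_filter, Finset.mem_sigma, Finset.mem_range, Finset.mem_Ioc, mem_ofPred_eq]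
    exact ⟨by omega, a, b, h.2.2, by omega, by omega⟩
  · rintro ⟨a, b⟩ h ⟨a', b'⟩ h' heq
    simp only [Finset.mem_coe, SimpleGraph.mem_interedges_iff, Finset.mem_compl,
      Finset.mem_filter_univ, not_lt] at h h'
    simp only [Sigma.mk.injEq, heq_eq_eq] at heq
    ext <;> simp only <;> omega

lemma ThreeConnected.three_le_sum_backEdge (h3 : ThreeConnected n G) (hvis : Visible n 5 G)
    (hn : 5 ≤ n) {t : ℕ} (ht : 0 < t) (htn : t < n) :
    3 ≤ ∑ j ∈ Finset.range 4, ∑ d ∈ Finset.Ioc j 4, backEdge G (t + j) d := by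
  classical
  refine le_trans ?_ (card_interedges_le_sum_backEdge hvis t)
  set S : Finset (Fin n) := {v | (v : ℕ) < t} with hS
  have hmem : ⟨0, by omega⟩ ∈ S := by simpa [hS] using ht
  have hnotMem : ⟨t, htn⟩ ∈ Sᶜ := by simp [hS]
  have hcard := S.card_add_card_compl
  rw [Fintype.card_fin] at hcard
  rcases (by omega : 3 ≤ S.card ∨ 3 ≤ Sᶜ.card) with h | h
  · exact h3.three_le_card_interedges h ⟨_, hnotMem⟩
  · rw [← compl_compl S] at hmem
    have hcut := h3.three_le_card_interedges h ⟨_, hmem⟩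
    have : Std.Symm G.Adj := G.symm
    rwa [compl_compl, SimpleGraph.interedges, Rel.card_interedges_comm] at hcut

end Counting

section Story

/-- The numerical conditions satisfied by the indicators `e t d` of the edges `v_{t-d} v_t` of a
cubic triconnected graph on `n` vertices all of whose edges have length at most four: every vertex
has degree three, and at least three edges leave every proper initial segment `v_0, …, v_{t-1}`. -/
structure IsCubicProfile (n : ℕ) (e : ℕ → ℕ → ℕ) : Prop where
  le_one : ∀ t d, e t d ≤ 1
  eq_zero : ∀ t d, t < d ∨ n ≤ t → e t d = 0
  degree : ∀ t < n, e t 1 + e t 2 + e t 3 + e t 4 +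
    (e (t + 1) 1 + e (t + 2) 2 + e (t + 3) 3 + e (t + 4) 4) = 3
  cut : ∀ t, 0 < t → t < n → 3 ≤ e t 1 + e t 2 + e t 3 + e t 4 +
    (e (t + 1) 2 + e (t + 1) 3 + e (t + 1) 4) + (e (t + 2) 3 + e (t + 2) 4) + e (t + 3) 4

lemma isCubicProfile_backEdge {n : ℕ} {G : SimpleGraph (Fin n)} (hn : 5 ≤ n)
    (h3 : ThreeConnected n G) (hcubic : Cubic n G) (hvis : Visible n 5 G) :
    IsCubicProfile n (backEdge G) where
  le_one t d := by unfold backEdge; split_ifs <;> omega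
  eq_zero t d h := if_neg fun ⟨u, v, _, hv, hu⟩ => by omega
  degree t ht := by
    have := hcubic.sum_backEdge_eq_three hvis ⟨t, ht⟩
    simp only [Nat.reduceAdd, Nat.one_le_ofNat, Finset.sum_Icc_succ_top, Finset.Icc_self,
      Finset.sum_singleton] at this
    omega
  cut t ht htn := by
    have := h3.three_le_sum_backEdge hvis hn ht htn
    simp only [Finset.sum_range_succ, Finset.range_one, Finset.sum_singleton, add_zero, zero_le,
      Finset.sum_Ioc_succ_top, Nat.Ioc_succ_singleton, zero_add, Nat.reduceAdd, Nat.one_le_ofNat,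
      Nat.reduceLeDiff] at this
    omega

/-- An edge `v_{v-2} v_{v+1}` can be drawn crossing the pentagon side between `v_{v-1}` and `v_v`
without blocking later edges: this side is not an edge, and the three edges that would leave no
room for `v_{v+1} v_{v+3}` are not all present. -/
def Twistable (e : ℕ → ℕ → ℕ) (v : ℕ) : Prop :=
  e v 1 = 0 ∧ ¬(e (v + 2) 2 = 1 ∧ e (v + 2) 3 = 1 ∧ e (v + 3) 2 = 1)

namespace IsCubicProfile

variable {n : ℕ} {e : ℕ → ℕ → ℕ}

lemma lt_of_eq_one (h : IsCubicProfile n e) {t d : ℕ} (htd : e t d = 1) : t < n := by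
  by_contra hlt
  rw [h.eq_zero t d (Or.inr (not_lt.1 hlt))] at htd
  omega

lemma two_le (h : IsCubicProfile n e) {v : ℕ} (hv : e v 2 = 1) : 2 ≤ v := by
  by_contra hlt
  rw [h.eq_zero v 2 (Or.inl (not_le.1 hlt))] at hv
  omega

lemma sum_four_window_le (h : IsCubicProfile n e) {t : ℕ} (ht : 0 < t) (htn : t + 4 < n) :
    e (t + 1) 1 + e (t + 2) 1 + e (t + 2) 2 + e (t + 3) 1 + e (t + 3) 2 + e (t + 3) 3 ≤ 3 := by
  have d₀ := h.degree t (by omega)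
  have d₁ := h.degree (t + 1) (by omega)
  have d₂ := h.degree (t + 2) (by omega)
  have d₃ := h.degree (t + 3) (by omega)
  have left := h.cut t ht (by omega)
  have right := h.cut (t + 4) (by omega) htn
  simp only [add_assoc, Nat.reduceAdd] at *
  omega

lemma sum_five_window_le (h : IsCubicProfile n e) {t : ℕ} (ht : 0 < t) (htn : t + 5 < n) :
    e (t + 1) 1 + e (t + 2) 1 + e (t + 2) 2 + e (t + 3) 1 + e (t + 3) 2 + e (t + 3) 3 +
      e (t + 4) 1 + e (t + 4) 2 + e (t + 4) 3 + e (t + 4) 4 ≤ 4 := by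
  have d₀ := h.degree t (by omega)
  have d₁ := h.degree (t + 1) (by omega)
  have d₂ := h.degree (t + 2) (by omega)
  have d₃ := h.degree (t + 3) (by omega)
  have d₄ := h.degree (t + 4) (by omega)
  have left := h.cut t ht (by omega)
  have right := h.cut (t + 5) (by omega) htn
  simp only [add_assoc, Nat.reduceAdd] at *
  omega

lemma twistable_or_of_two_three (h : IsCubicProfile n e) {v : ℕ} (h₂ : e (v + 1) 2 = 1)
    (h₃ : e (v + 1) 3 = 1) : Twistable e (v + 1) ∨ Twistable e (v + 2) := by
  have hdeg := h.degree (v + 1) (h.lt_of_eq_one h₂)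
  have := h.le_one (v + 1) 1
  have := h.le_one (v + 2) 1
  simp only [Twistable, add_assoc, Nat.reduceAdd] at *
  omega

lemma twistable_of_two_two (h : IsCubicProfile n e) {v : ℕ} (h₀ : e v 2 = 1)
    (h₁ : e (v + 1) 2 = 1) (h₂ : e (v + 2) 2 = 1) (h₂' : e (v + 2) 3 = 1)
    (h₃ : e (v + 3) 2 = 1) : Twistable e (v + 1) := by
  obtain ⟨k, rfl⟩ := Nat.exists_eq_add_of_le' (h.two_le h₀)
  have four := h.sum_four_window_le k.succ_pos (h.lt_of_eq_one h₃)
  simp only [Nat.succ_eq_add_one, add_assoc, Nat.reduceAdd] at *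
  refine ⟨by have := h.le_one (k + 3) 1; omega, ?_⟩
  rintro ⟨h₃, h₃', h₄⟩
  have five := h.sum_five_window_le k.succ_pos (h.lt_of_eq_one h₄)
  simp only [Nat.succ_eq_add_one, add_assoc, Nat.reduceAdd] at *
  omega

lemma twistable_or_of_two_two (h : IsCubicProfile n e) {v : ℕ} (h₁ : e (v + 1) 2 = 1)
    (h₂ : e (v + 2) 2 = 1) (h₂' : e (v + 2) 3 = 1) (h₃ : e (v + 3) 2 = 1)
    (h₃' : e (v + 3) 3 = 1) : Twistable e (v + 1) ∨ Twistable e (v + 2) := by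
  have hn := h.lt_of_eq_one h₃
  have d₁ := h.degree (v + 1) (by omega)
  have d₂ := h.degree (v + 2) (by omega)
  have d₃ := h.degree (v + 3) (by omega)
  have := h.le_one (v + 1) 1
  have := h.le_one (v + 2) 1
  by_contra! hnot
  simp only [Twistable, add_assoc, Nat.reduceAdd] at *
  have h₅ : e (v + 5) 2 = 1 := by omega
  have cut := h.cut (v + 5) (by omega) (h.lt_of_eq_one h₅)
  have d₄ := h.degree (v + 4) (by have := h.lt_of_eq_one h₅; omega)
  simp only [add_assoc, Nat.reduceAdd] at *
  omega

end IsCubicProfile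

end Story

section Sides

/-- The sides of the pentagon (`true` for its interior) on which the edges ending at a vertex `v_v`
run: `short` for `v_{v-2} v_v`, and `first` and `last` for the initial and final parts of
`v_{v-3} v_v`, which crosses the pentagon between `v_{v-2}` and `v_{v-1}` if these differ. -/
structure Sides where
  short : Bool
  first : Bool
  last : Bool

/-- With sides `a`, `b`, `c` at `v_v`, `v_{v+1}`, `v_{v+2}`, the edge of length three ending at
`v_{v+1}` or `v_{v+2}` runs opposite to the diagonals that interleave with it. -/
structure Fits (e : ℕ → ℕ → ℕ) (v : ℕ) (a b c : Sides) : Prop where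
  short_ne_last : e (v + 1) 3 = 1 → e (v + 2) 2 = 1 → c.short ≠ b.last
  first_ne_short : e v 2 = 1 → e (v + 2) 3 = 1 → c.first ≠ a.short
  last_ne_first : e (v + 1) 3 = 1 → e (v + 2) 3 = 1 → c.last ≠ b.first
  straight : e (v + 1) 3 = 1 → e (v + 2) 3 = 1 → b.first = b.last ∨ c.first = c.last

/-- The invariant of the greedy choice of sides, for the sides `a`, `b` at `v_v`, `v_{v+1}`: what
is required of the diagonals ending there, together with what keeps the next choice possible. -/
structure Extendable (e : ℕ → ℕ → ℕ) (v : ℕ) (a b : Sides) : Prop where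
  short_ne_short : e v 2 = 1 → e (v + 1) 2 = 1 → b.short ≠ a.short
  twistable : e (v + 1) 3 = 1 → b.first ≠ b.last → Twistable e v
  of_last_ne : e (v + 1) 2 = 1 → e (v + 1) 3 = 1 → b.last ≠ b.short →
    b.first = b.last ∧ e (v + 2) 2 ≠ 1
  of_first_ne : e v 2 = 1 → e (v + 1) 3 = 1 → b.first ≠ a.short →
    b.first = b.last ∧ (e (v + 2) 3 = 1 → Twistable e (v + 1))

namespace Extendable

variable {n : ℕ} {e : ℕ → ℕ → ℕ} {v : ℕ} {a b : Sides}

lemma exists_of_no_three (hab : Extendable e v a b) (h₂ : e (v + 2) 3 ≠ 1) :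
    ∃ c, Fits e v a b c ∧ Extendable e (v + 1) b c := by
  have hlast := hab.of_last_ne
  by_cases h₁ : e (v + 1) 3 = 1
  · refine ⟨⟨!b.last, true, true⟩, ⟨?_, ?_, ?_, ?_⟩, ?_, ?_, ?_, ?_⟩ <;> grind
  · refine ⟨⟨!b.short, true, true⟩, ⟨?_, ?_, ?_, ?_⟩, ?_, ?_, ?_, ?_⟩ <;> grind

lemma exists_of_twisted (hab : Extendable e v a b) (h₁ : e (v + 1) 3 = 1)
    (h₂ : e (v + 2) 3 = 1) (htwist : b.first ≠ b.last) :
    ∃ c, Fits e v a b c ∧ Extendable e (v + 1) b c := by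
  obtain ⟨-, htwistable, hlast, hfirst⟩ := hab
  have := htwistable h₁ htwist
  unfold Twistable at *
  refine ⟨⟨!b.last, !b.first, !b.first⟩, ⟨?_, ?_, ?_, ?_⟩, ?_, ?_, ?_, ?_⟩ <;> grind

open Classical in
lemma exists_of_straight (he : IsCubicProfile n e) (hab : Extendable e v a b)
    (h₁ : e (v + 1) 3 = 1) (h₂ : e (v + 2) 3 = 1) (hstraight : b.first = b.last) :
    ∃ c, Fits e v a b c ∧ Extendable e (v + 1) b c := by
  obtain ⟨hshort, -, hlast, hfirst⟩ := hab
  have := fun h => he.twistable_or_of_two_three (v := v) h h₁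
  by_cases htwist : (e v 2 = 1 ∧ a.short ≠ b.last) ∨
      (e (v + 1) 2 = 1 ∧ b.short = b.last ∧ e (v + 3) 3 = 1 ∧ ¬Twistable e (v + 2))
  · refine ⟨⟨!b.last, b.last, !b.last⟩, ⟨?_, ?_, ?_, ?_⟩, ?_, ?_, ?_, ?_⟩ <;>
      cases ha : a.short <;> cases hb : b.short <;> grind
  · refine ⟨⟨!b.last, !b.last, !b.last⟩, ⟨?_, ?_, ?_, ?_⟩, ?_, ?_, ?_, ?_⟩ <;> grind

lemma exists_of_two (he : IsCubicProfile n e) (hab : Extendable e v a b)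
    (h₁ : e (v + 1) 3 ≠ 1) (h₁' : e (v + 1) 2 = 1) (h₂ : e (v + 2) 3 = 1) :
    ∃ c, Fits e v a b c ∧ Extendable e (v + 1) b c := by
  have hshort := hab.short_ne_short
  have := fun h h' => he.twistable_of_two_two (v := v) h h₁' h' h₂
  have := fun h => he.twistable_or_of_two_two (v := v) h₁' h h₂
  by_cases hnext : e (v + 2) 2 = 1 ∧ e (v + 3) 2 = 1
  · by_cases htwist : e v 2 = 1 ∨ e (v + 3) 3 = 1 ∧ ¬Twistable e (v + 2)
    · refine ⟨⟨!b.short, b.short, !b.short⟩, ⟨?_, ?_, ?_, ?_⟩, ?_, ?_, ?_, ?_⟩ <;> grind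
    · refine ⟨⟨!b.short, !b.short, !b.short⟩, ⟨?_, ?_, ?_, ?_⟩, ?_, ?_, ?_, ?_⟩ <;> grind
  · refine ⟨⟨!b.short, b.short, b.short⟩, ⟨?_, ?_, ?_, ?_⟩, ?_, ?_, ?_, ?_⟩ <;> grind

lemma exists_of_no_two (h₁ : e (v + 1) 3 ≠ 1) (h₁' : e (v + 1) 2 ≠ 1) :
    ∃ c, Fits e v a b c ∧ Extendable e (v + 1) b c := by
  refine ⟨⟨!a.short, !a.short, !a.short⟩, ⟨?_, ?_, ?_, ?_⟩, ?_, ?_, ?_, ?_⟩ <;> grind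

lemma exists_next (he : IsCubicProfile n e) (hab : Extendable e v a b) :
    ∃ c, Fits e v a b c ∧ Extendable e (v + 1) b c := by
  by_cases h₂ : e (v + 2) 3 = 1
  · by_cases h₁ : e (v + 1) 3 = 1
    · by_cases hstraight : b.first = b.last
      · exact hab.exists_of_straight he h₁ h₂ hstraight
      · exact hab.exists_of_twisted h₁ h₂ hstraight
    · by_cases h₁' : e (v + 1) 2 = 1
      · exact hab.exists_of_two he h₁ h₁' h₂
      · exact exists_of_no_two h₁ h₁'
  · exact hab.exists_of_no_three h₂

end Extendable

lemma exists_seq_of_step {σ : Type*} {P : ℕ → σ → σ → Prop} {R : ℕ → σ → σ → σ → Prop}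
    {a₀ b₀ : σ} (hP : P 0 a₀ b₀) (step : ∀ v a b, P v a b → ∃ c, R v a b c ∧ P (v + 1) b c) :
    ∃ f : ℕ → σ, ∀ v, P v (f v) (f (v + 1)) ∧ R v (f v) (f (v + 1)) (f (v + 2)) := by
  choose next hR hnext using step
  let pair : ∀ v, {p : σ × σ // P v p.1 p.2} := fun v =>
    Nat.rec ⟨(a₀, b₀), hP⟩ (fun v p => ⟨(p.1.2, next v _ _ p.2), hnext v _ _ p.2⟩) v
  exact ⟨fun v => (pair v).1.1, fun v => ⟨(pair v).2, hR v _ _ (pair v).2⟩⟩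

/-- A choice of sides for all diagonals under which no two edges of a window cross. -/
def IsSideChoice (e : ℕ → ℕ → ℕ) (c : ℕ → Sides) : Prop :=
  ∀ v, Extendable e v (c v) (c (v + 1)) ∧ Fits e v (c v) (c (v + 1)) (c (v + 2))

lemma IsCubicProfile.exists_isSideChoice {n : ℕ} {e : ℕ → ℕ → ℕ} (he : IsCubicProfile n e) :
    ∃ c, IsSideChoice e c := by
  have hstart : Extendable e 0 ⟨true, true, true⟩ ⟨true, true, true⟩ := by
    have := he.eq_zero 0 2
    have := he.eq_zero 1 3
    refine ⟨?_, ?_, ?_, ?_⟩ <;> grind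
  exact exists_seq_of_step hstart fun v a b hab => hab.exists_next he

end Sides

section Arcs

variable {γ δ : ℝ → Pt} {a b c : Pt}

lemma IsArcFrom.reverse (h : IsArcFrom γ a b) : IsArcFrom (fun t => γ (1 - t)) b a := by
  obtain ⟨hcont, hinj, h₀, h₁⟩ := h
  have hmaps : MapsTo (fun t : ℝ => 1 - t) (Icc 0 1) (Icc 0 1) := fun t ht =>
    ⟨by linarith [ht.2], by linarith [ht.1]⟩
  exact ⟨hcont.comp (by fun_prop) hmaps, hinj.comp sub_right_injective.injOn hmaps,
    by simpa using h₁, by simpa using h₀⟩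

lemma arcInterior_reverse (γ : ℝ → Pt) : arcInterior (fun t => γ (1 - t)) = arcInterior γ := by
  have := image_comp γ (fun t => 1 - t) (Ioo (0 : ℝ) 1)
  rwa [image_const_sub_Ioo, sub_self, sub_zero] at this

/-- The path that runs through `γ` on `[0, 1/2]` and through `δ` on `[1/2, 1]`, each at double
speed. -/
noncomputable def concatArc (γ δ : ℝ → Pt) (t : ℝ) : Pt :=
  if t ≤ 1 / 2 then γ (2 * t) else δ (2 * t - 1)

lemma arcInterior_concatArc_subset (hb : γ 1 = b) :
    arcInterior (concatArc γ δ) ⊆ arcInterior γ ∪ {b} ∪ arcInterior δ := by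
  rintro _ ⟨t, ⟨ht₀, ht₁⟩, rfl⟩
  unfold concatArc
  split_ifs with h
  · rcases h.eq_or_lt with rfl | h
    · exact Or.inl (Or.inr (by simpa using hb))
    · exact Or.inl (Or.inl ⟨2 * t, ⟨by linarith, by linarith⟩, rfl⟩)
  · exact Or.inr ⟨2 * t - 1, ⟨by linarith, by linarith⟩, rfl⟩

lemma IsArcFrom.concat (hγ : IsArcFrom γ a b) (hδ : IsArcFrom δ b c)
    (hmeet : arcBody γ ∩ arcBody δ ⊆ {b}) : IsArcFrom (concatArc γ δ) a c := by
  obtain ⟨hγc, hγi, hγ₀, hγ₁⟩ := hγ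
  obtain ⟨hδc, hδi, hδ₀, hδ₁⟩ := hδ
  have hleft : ∀ t ∈ Icc (0 : ℝ) 1, t ≤ 1 / 2 → 2 * t ∈ Icc (0 : ℝ) 1 := fun t ht h =>
    ⟨by linarith [ht.1], by linarith⟩
  have hright : ∀ t ∈ Icc (0 : ℝ) 1, 1 / 2 ≤ t → 2 * t - 1 ∈ Icc (0 : ℝ) 1 := fun t ht h =>
    ⟨by linarith, by linarith [ht.2]⟩
  have hmixed : ∀ s ∈ Icc (0 : ℝ) 1, ∀ t ∈ Icc (0 : ℝ) 1, s ≤ 1 / 2 → ¬t ≤ 1 / 2 →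
      γ (2 * s) ≠ δ (2 * t - 1) := by
    intro s hs t ht hs' ht' h
    have ht'' := hright t ht (not_le.1 ht').le
    have hb : δ (2 * t - 1) = b :=
      hmeet ⟨h ▸ mem_image_of_mem γ (hleft s hs hs'), mem_image_of_mem δ ht''⟩
    have := hδi ht'' ⟨le_rfl, zero_le_one⟩ (hb.trans hδ₀.symm)
    exact ht' (by linarith)
  refine ⟨?_, ?_, ?_, ?_⟩
  · refine ContinuousOn.if ?_ ?_ ?_
    · rintro t ⟨-, ht⟩
      obtain rfl : t = 1 / 2 := frontier_le_subset_eq continuous_id continuous_const ht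
      norm_num [hγ₁, hδ₀]
    · exact hγc.comp (by fun_prop) fun t ht =>
        hleft t ht.1 (closure_minimal (t := Iic (1 / 2)) Subset.rfl isClosed_Iic ht.2)
    · exact hδc.comp (by fun_prop) fun t ht => hright t ht.1 <|
        closure_minimal (t := Ici (1 / 2)) (fun s hs => (not_le.1 hs).le) isClosed_Ici ht.2
  · intro s hs t ht h
    unfold concatArc at h
    split_ifs at h with hs' ht' ht'
    · linarith [hγi (hleft s hs hs') (hleft t ht ht') h]
    · exact absurd h (hmixed s hs t ht hs' ht')
    · exact absurd h.symm (hmixed t ht s hs ht' hs')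
    · linarith [hδi (hright s hs (not_le.1 hs').le) (hright t ht (not_le.1 ht').le) h]
  · simpa [concatArc] using hγ₀
  · norm_num [concatArc, hδ₁]

end Arcs

section Chords

/-- The sign of the second coordinate on the side `up` of the horizontal axis. -/
def sideSign (up : Bool) : ℝ := if up then 1 else -1

/-- A parabolic arc from `(a, 0)` to `(b, 0)` on the side `up` of the horizontal axis. -/
def chord (up : Bool) (a b t : ℝ) : Pt :=
  (a + (b - a) * t, sideSign up * ((b - a) ^ 2 * (t * (1 - t))))

/-- The parabola carrying `chord up a b`, restricted to the side `up` of the horizontal axis. -/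
def openChord (up : Bool) (a b : ℝ) : Set Pt :=
  {p | 0 < (p.1 - a) * (b - p.1) ∧ p.2 = sideSign up * ((p.1 - a) * (b - p.1))}

variable {up up' : Bool} {a b c d g : ℝ}

lemma sideSign_mul_self (up : Bool) : sideSign up * sideSign up = 1 := by
  cases up <;> norm_num [sideSign]

lemma sideSign_not (up : Bool) : sideSign (!up) = -sideSign up := by
  cases up <;> norm_num [sideSign]

lemma sideSign_mul_pos {p : Pt} (hp : p ∈ openChord up a b) : 0 < sideSign up * p.2 := by
  rw [hp.2, ← mul_assoc, sideSign_mul_self, one_mul]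
  exact hp.1

lemma notMem_openChord (x : ℝ) : (x, 0) ∉ openChord up a b := fun h => by
  simpa using sideSign_mul_pos h

lemma disjoint_openChord_of_ne (h : up ≠ up') :
    Disjoint (openChord up a b) (openChord up' c d) := by
  obtain rfl := Bool.eq_not.2 h
  refine Set.disjoint_left.2 fun p hp hp' => ?_
  have hpos := sideSign_mul_pos hp
  rw [sideSign_not] at hpos
  linarith [sideSign_mul_pos hp']

lemma disjoint_openChord (hsign : 0 ≤ (a - c) * (d - a) * ((b - c) * (d - b)))
    (hne : (a - c) * (d - a) ≠ 0 ∨ (b - c) * (d - b) ≠ 0) :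
    Disjoint (openChord up a b) (openChord up c d) := by
  refine Set.disjoint_left.2 fun p hp hp' => ?_
  have heq : (p.1 - a) * (b - p.1) = (p.1 - c) * (d - p.1) := by
    have := congrArg (sideSign up * ·) (hp.2.symm.trans hp'.2)
    simpa only [← mul_assoc, sideSign_mul_self, one_mul] using this
  -- The difference of the two quadratics is affine and vanishes at `p.1`, between `a` and `b`.
  have hbalance : (b - p.1) * ((a - c) * (d - a)) = -((p.1 - a) * ((b - c) * (d - b))) := by
    linear_combination (a - b) * heq
  have hb : (p.1 - a) * ((b - c) * (d - b)) = 0 := by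
    refine pow_eq_zero_iff two_ne_zero |>.1 (le_antisymm ?_ (sq_nonneg _))
    linear_combination mul_nonneg hp.1.le hsign + (p.1 - a) * ((b - c) * (d - b)) * hbalance
  rw [hb, neg_zero] at hbalance
  have hpa : p.1 - a ≠ 0 := left_ne_zero_of_mul hp.1.ne'
  have hbp : b - p.1 ≠ 0 := right_ne_zero_of_mul hp.1.ne'
  exact hne.elim (fun h => mul_ne_zero hbp h hbalance) (fun h => mul_ne_zero hpa h hb)

lemma isArcFrom_chord (h : a ≠ b) : IsArcFrom (chord up a b) (a, 0) (b, 0) := by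
  refine ⟨by unfold chord; fun_prop, fun s _ t _ hst => ?_, by simp [chord], by simp [chord]⟩
  have := congrArg Prod.fst hst
  exact mul_left_cancel₀ (sub_ne_zero.2 h.symm) (add_left_cancel this)

lemma arcInterior_chord_subset (h : a ≠ b) : arcInterior (chord up a b) ⊆ openChord up a b := by
  rintro _ ⟨t, ht, rfl⟩
  have hpos : 0 < (b - a) ^ 2 * (t * (1 - t)) :=
    mul_pos (by have := sub_ne_zero.2 h.symm; positivity) (mul_pos ht.1 (sub_pos.2 ht.2))
  have heq : (a + (b - a) * t - a) * (b - (a + (b - a) * t)) = (b - a) ^ 2 * (t * (1 - t)) := by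
    ring
  exact ⟨heq ▸ hpos, by simp only [chord, heq]⟩

lemma arcBody_eq {γ : ℝ → Pt} {p q : Pt} (h : IsArcFrom γ p q) :
    arcBody γ = arcInterior γ ∪ {p, q} := by
  rw [arcBody, ← Ioo_union_both zero_le_one, image_union, image_pair, h.2.2.1, h.2.2.2]
  rfl

/-- The drawing of an edge from `(a, 0)` to `(b, 0)` that starts on the side `first` and ends on
the side `last` of the horizontal axis, which it crosses in `(g, 0)` if these differ. -/
noncomputable def bentArc (first last : Bool) (a g b : ℝ) : ℝ → Pt :=
  if first = last then chord first a b else concatArc (chord first a g) (chord last g b)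

variable {first last : Bool}

lemma isArcFrom_bentArc (hab : a ≠ b) (hag : a ≠ g) (hgb : g ≠ b) :
    IsArcFrom (bentArc first last a g b) (a, 0) (b, 0) := by
  unfold bentArc
  split_ifs with h
  · exact isArcFrom_chord hab
  · have hfirst := isArcFrom_chord (up := first) hag
    have hlast := isArcFrom_chord (up := last) hgb
    refine hfirst.concat hlast ?_
    rw [arcBody_eq hfirst, arcBody_eq hlast]
    rintro p ⟨hp | hp | rfl, hq | hq | hq⟩
    · exact absurd (arcInterior_chord_subset hgb hq)
        (Set.disjoint_left.1 (disjoint_openChord_of_ne h) (arcInterior_chord_subset hag hp))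
    · exact hq
    · exact absurd (arcInterior_chord_subset hag (hq ▸ hp)) (notMem_openChord b)
    · exact absurd (arcInterior_chord_subset hgb (hp ▸ hq)) (notMem_openChord a)
    · exact hq
    · exact absurd (congrArg Prod.fst (hp.symm.trans hq)) hab
    all_goals rfl

lemma arcInterior_bentArc_subset (h : first ≠ last) (hag : a ≠ g) (hgb : g ≠ b) :
    arcInterior (bentArc first last a g b) ⊆
      openChord first a g ∪ {(g, 0)} ∪ openChord last g b := by
  rw [bentArc, if_neg h]
  refine (arcInterior_concatArc_subset (isArcFrom_chord hag).2.2.2).trans ?_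
  gcongr
  · exact arcInterior_chord_subset hag
  · exact arcInterior_chord_subset hgb

end Chords

section Pentagon

/-- The position on the horizontal axis of the index `k`, taken modulo ten: the indices `2 * v`
belong to the vertices, which repeat with period five, and the odd indices to the crossings of the
pentagon sides. -/
def foot (k : ℕ) : ℝ := (k % 10 : ℕ)

/-- The chords from `a` to `b` and from `c` to `d` have alternating endpoints. -/
def Interleave (a b c d : ℕ) : Prop := a < c ∧ c < b ∧ b < d ∨ c < a ∧ a < d ∧ d < b

lemma foot_eq_foot {k l : ℕ} : foot k = foot l ↔ k % 10 = l % 10 := Nat.cast_inj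

lemma disjoint_openChord_foot {up up' : Bool} {N a b c d : ℕ} (ha : N ≤ a) (hab : a < b)
    (hb : b < N + 10) (hc : N ≤ c) (hcd : c < d) (hd : d < N + 10) (hne : a ≠ c ∨ b ≠ d)
    (hside : Interleave a b c d → up ≠ up') :
    Disjoint (openChord up (foot a) (foot b)) (openChord up' (foot c) (foot d)) := by
  by_cases hup : up = up'
  · subst hup
    have hnot : ¬Interleave a b c d := fun h => hside h rfl
    refine disjoint_openChord ?_ ?_
    · by_contra! hneg
      simp only [foot, mul_neg_iff, mul_pos_iff, sub_pos, sub_neg, Nat.cast_lt] at hneg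
      unfold Interleave at hnot
      omega
    · simp only [mul_ne_zero_iff, sub_ne_zero, ne_eq, foot_eq_foot]
      omega
  · exact disjoint_openChord_of_ne hup

/-- The side of the pentagon on which the edge of length `d` ending at a vertex with sides `s`
starts. Pentagon sides and edges of length four are drawn inside. -/
def Sides.initial (s : Sides) : ℕ → Bool
  | 2 => s.short
  | 3 => s.first
  | _ => true

/-- The side of the pentagon on which the edge of length `d` ending at a vertex with sides `s`
arrives. -/
def Sides.terminal (s : Sides) : ℕ → Bool
  | 2 => s.short
  | 3 => s.last
  | _ => true

lemma Sides.initial_eq_terminal (s : Sides) {d : ℕ} (hd : d ≠ 3) : s.initial d = s.terminal d := by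
  unfold Sides.initial Sides.terminal
  split <;> trivial

/-- The vertices `v_u` and `v_v`, where `u < v`, are adjacent and belong to the window
`v_j, …, v_{j+4}`. -/
structure WindowEdge (e : ℕ → ℕ → ℕ) (j u v : ℕ) : Prop where
  le : j ≤ u
  lt : u < v
  le_add : v ≤ j + 4
  eq_one : e v (v - u) = 1

lemma WindowEdge.le_add_four {e : ℕ → ℕ → ℕ} {j u v : ℕ} (h : WindowEdge e j u v) : v ≤ u + 4 :=
  h.le_add.trans (Nat.add_le_add_right h.le 4)

/-- The edge from `v_u` to `v_v`, where `u < v`, does not cross the pentagon. -/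
def IsStraight (c : ℕ → Sides) (u v : ℕ) : Prop :=
  (c v).initial (v - u) = (c v).terminal (v - u)

variable {e : ℕ → ℕ → ℕ} {c : ℕ → Sides} {j u v x y : ℕ}

lemma eq_add_three_of_not_isStraight (huv : u < v) (h : ¬IsStraight c u v) : v = u + 3 := by
  by_contra hne
  exact h ((c v).initial_eq_terminal (by omega))

namespace IsSideChoice

lemma initial_ne_initial (hc : IsSideChoice e c) (huv : WindowEdge e j u v)
    (hxy : WindowEdge e j x y) (hux : u < x) (hxv : x < v) (hvy : v < y)
    (hv : IsStraight c u v) (hy : IsStraight c x y) :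
    (c v).initial (v - u) ≠ (c y).initial (y - x) := by
  obtain ⟨hju, -, -, huv⟩ := huv
  obtain ⟨-, -, hyj, hxy⟩ := hxy
  have hcases : (v = u + 2 ∧ x = u + 1 ∧ y = u + 3) ∨ (v = u + 2 ∧ x = u + 1 ∧ y = u + 4) ∨
      (v = u + 3 ∧ x = u + 1 ∧ y = u + 4) ∨ (v = u + 3 ∧ x = u + 2 ∧ y = u + 4) := by
    omega
  have h := hc (u + 2)
  rcases hcases with ⟨rfl, rfl, rfl⟩ | ⟨rfl, rfl, rfl⟩ | ⟨rfl, rfl, rfl⟩ | ⟨rfl, rfl, rfl⟩ <;>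
    simp only [IsStraight, Nat.add_sub_cancel_left, Nat.reduceSubDiff] at huv hxy hv hy ⊢
  · exact (h.1.short_ne_short huv hxy).symm
  · exact (h.2.first_ne_short huv hxy).symm
  · exact hy ▸ (h.2.last_ne_first huv hxy).symm
  · exact hv ▸ (h.2.short_ne_last huv hxy).symm

lemma isStraight_of_not_isStraight (hc : IsSideChoice e c) (huv : WindowEdge e j u v)
    (hxy : WindowEdge e j x y) (hne : u ≠ x ∨ v ≠ y) (hv : ¬IsStraight c u v) :
    IsStraight c x y := by
  by_contra hy
  obtain rfl := eq_add_three_of_not_isStraight huv.lt hv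
  obtain rfl := eq_add_three_of_not_isStraight hxy.lt hy
  obtain ⟨hju, -, huj, huv⟩ := huv
  obtain ⟨hjx, -, hxj, hxy⟩ := hxy
  simp only [IsStraight, Nat.add_sub_cancel_left] at huv hxy hv hy
  obtain rfl | rfl : u = x + 1 ∨ x = u + 1 := by omega
  · exact ((hc (x + 2)).2.straight hxy huv).elim hy hv
  · exact ((hc (u + 2)).2.straight huv hxy).elim hv hy

lemma initial_ne_first (hc : IsSideChoice e c) (hu : WindowEdge e j u (u + 3))
    (hxy : WindowEdge e j x y) (htwist : (c (u + 3)).first ≠ (c (u + 3)).last)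
    (hcross : Interleave (2 * u) (2 * u + 3) (2 * x) (2 * y)) (hy : IsStraight c x y) :
    (c y).initial (y - x) ≠ (c (u + 3)).first := by
  obtain ⟨hju, -, huj, hu⟩ := hu
  obtain ⟨hjx, -, hyj, hxy⟩ := hxy
  have hcases : (u = x + 1 ∧ y = x + 2) ∨ (x = u + 1 ∧ y = u + 2) ∨ (x = u + 1 ∧ y = u + 3) ∨
      (x = u + 1 ∧ y = u + 4) := by
    unfold Interleave at hcross
    omega
  rw [Nat.add_sub_cancel_left] at hu
  have hgate := ((hc (u + 2)).1.twistable hu htwist).1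
  rcases hcases with ⟨rfl, rfl⟩ | ⟨rfl, rfl⟩ | ⟨rfl, rfl⟩ | ⟨rfl, rfl⟩ <;>
    simp only [IsStraight, Nat.add_sub_cancel_left, Nat.reduceSubDiff] at hxy hy ⊢
  · exact ((hc (x + 2)).2.first_ne_short hxy hu).symm
  · omega
  · have := (hc (u + 2)).1.of_last_ne hxy hu
    grind [Sides.initial]
  · exact hy ▸ (hc (u + 2)).2.last_ne_first hu hxy

lemma initial_ne_last (hc : IsSideChoice e c) (hu : WindowEdge e j u (u + 3))
    (hxy : WindowEdge e j x y) (htwist : (c (u + 3)).first ≠ (c (u + 3)).last)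
    (hcross : Interleave (2 * u + 3) (2 * (u + 3)) (2 * x) (2 * y)) :
    (c y).initial (y - x) ≠ (c (u + 3)).last := by
  obtain ⟨hju, -, huj, hu⟩ := hu
  obtain ⟨hjx, -, hyj, hxy⟩ := hxy
  have hcases : (u = x + 1 ∧ y = x + 3) ∨ (x = u ∧ y = u + 2) ∨ (x = u + 1 ∧ y = u + 2) ∨
      (x = u + 2 ∧ y = u + 4) := by
    unfold Interleave at hcross
    omega
  rw [Nat.add_sub_cancel_left] at hu
  have hgate := ((hc (u + 2)).1.twistable hu htwist).1
  rcases hcases with ⟨rfl, rfl⟩ | ⟨rfl, rfl⟩ | ⟨rfl, rfl⟩ | ⟨rfl, rfl⟩ <;>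
    simp only [Nat.add_sub_cancel_left, Nat.reduceSubDiff] at hxy ⊢
  · exact ((hc (x + 2)).2.last_ne_first hxy hu).symm
  · have := (hc (x + 2)).1.of_first_ne hxy hu
    grind [Sides.initial]
  · omega
  · exact (hc (u + 2)).2.short_ne_last hu hxy

end IsSideChoice

/-- The drawing of the edge from `v_u` to `v_v`, where `u < v`; a twisted edge crosses the pentagon
side between `v_{u+1}` and `v_{u+2}`. -/
noncomputable def edgeArc (c : ℕ → Sides) (u v : ℕ) : ℝ → Pt :=
  bentArc ((c v).initial (v - u)) ((c v).terminal (v - u)) (foot (2 * u)) (foot (2 * u + 3))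
    (foot (2 * v))

lemma isArcFrom_edgeArc (huv : u < v) (hvu : v ≤ u + 4) :
    IsArcFrom (edgeArc c u v) (foot (2 * u), 0) (foot (2 * v), 0) := by
  apply isArcFrom_bentArc <;> rw [ne_eq, foot_eq_foot] <;> omega

lemma arcInterior_edgeArc_subset (huv : u < v) (hvu : v ≤ u + 4) (h : IsStraight c u v) :
    arcInterior (edgeArc c u v) ⊆
      openChord ((c v).initial (v - u)) (foot (2 * u)) (foot (2 * v)) := by
  rw [IsStraight] at h
  rw [edgeArc, bentArc, if_pos h]
  exact arcInterior_chord_subset (foot_eq_foot.not.2 (by omega))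

lemma arcInterior_edgeArc_subset_of_not_isStraight (h : ¬IsStraight c u (u + 3)) :
    arcInterior (edgeArc c u (u + 3)) ⊆
      openChord (c (u + 3)).first (foot (2 * u)) (foot (2 * u + 3)) ∪ {(foot (2 * u + 3), 0)} ∪
        openChord (c (u + 3)).last (foot (2 * u + 3)) (foot (2 * (u + 3))) := by
  rw [IsStraight, Nat.add_sub_cancel_left] at h
  rw [edgeArc, Nat.add_sub_cancel_left]
  exact arcInterior_bentArc_subset h (foot_eq_foot.not.2 (by omega)) (foot_eq_foot.not.2 (by omega))

lemma notMem_arcInterior_edgeArc (huv : u < v) (hvu : v ≤ u + 4) (w : ℕ) :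
    (foot (2 * w), 0) ∉ arcInterior (edgeArc c u v) := by
  intro hmem
  by_cases h : IsStraight c u v
  · exact notMem_openChord _ (arcInterior_edgeArc_subset huv hvu h hmem)
  · obtain rfl := eq_add_three_of_not_isStraight huv h
    rcases arcInterior_edgeArc_subset_of_not_isStraight h hmem with (hw | hw) | hw
    · exact notMem_openChord _ hw
    · have := foot_eq_foot.1 (congrArg Prod.fst hw)
      omega
    · exact notMem_openChord _ hw

namespace IsSideChoice

lemma disjoint_openChord_of_isStraight (hc : IsSideChoice e c) (huv : WindowEdge e j u v)
    (hxy : WindowEdge e j x y) (hne : u ≠ x ∨ v ≠ y) (hv : IsStraight c u v)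
    (hy : IsStraight c x y) :
    Disjoint (openChord ((c v).initial (v - u)) (foot (2 * u)) (foot (2 * v)))
      (openChord ((c y).initial (y - x)) (foot (2 * x)) (foot (2 * y))) := by
  have hside : Interleave (2 * u) (2 * v) (2 * x) (2 * y) →
      (c v).initial (v - u) ≠ (c y).initial (y - x) := by
    rintro (h | h)
    · exact hc.initial_ne_initial huv hxy (by omega) (by omega) (by omega) hv hy
    · exact (hc.initial_ne_initial hxy huv (by omega) (by omega) (by omega) hy hv).symm
  obtain ⟨hju, huv, hvj, -⟩ := huv
  obtain ⟨hjx, hxy, hyj, -⟩ := hxy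
  exact disjoint_openChord_foot (N := 2 * j) (by omega) (by omega) (by omega) (by omega)
    (by omega) (by omega) (by omega) hside

lemma disjoint_openChord_of_twisted (hc : IsSideChoice e c) (hu : WindowEdge e j u (u + 3))
    (htwist : (c (u + 3)).first ≠ (c (u + 3)).last) (hxy : WindowEdge e j x y)
    (hy : IsStraight c x y) :
    Disjoint (openChord (c (u + 3)).first (foot (2 * u)) (foot (2 * u + 3)) ∪
        {(foot (2 * u + 3), 0)} ∪
        openChord (c (u + 3)).last (foot (2 * u + 3)) (foot (2 * (u + 3))))
      (openChord ((c y).initial (y - x)) (foot (2 * x)) (foot (2 * y))) := by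
  have hfirst := fun h => (hc.initial_ne_first hu hxy htwist h hy).symm
  have hlast := fun h => (hc.initial_ne_last hu hxy htwist h).symm
  obtain ⟨hju, -, huj, -⟩ := hu
  obtain ⟨hjx, hxy, hyj, -⟩ := hxy
  rw [disjoint_union_left, disjoint_union_left, disjoint_singleton_left]
  refine ⟨⟨?_, notMem_openChord _⟩, ?_⟩
  · exact disjoint_openChord_foot (N := 2 * j) (by omega) (by omega) (by omega) (by omega)
      (by omega) (by omega) (by omega) hfirst
  · exact disjoint_openChord_foot (N := 2 * j) (by omega) (by omega) (by omega) (by omega)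
      (by omega) (by omega) (by omega) hlast

lemma disjoint_edgeArc_of_not_isStraight (hc : IsSideChoice e c) (huv : WindowEdge e j u v)
    (hxy : WindowEdge e j x y) (hne : u ≠ x ∨ v ≠ y) (hv : ¬IsStraight c u v) :
    Disjoint (arcInterior (edgeArc c u v)) (arcInterior (edgeArc c x y)) := by
  have hy := hc.isStraight_of_not_isStraight huv hxy hne hv
  obtain rfl := eq_add_three_of_not_isStraight huv.lt hv
  have htwist : (c (u + 3)).first ≠ (c (u + 3)).last := by
    rwa [IsStraight, Nat.add_sub_cancel_left] at hv
  exact (hc.disjoint_openChord_of_twisted huv htwist hxy hy).mono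
    (arcInterior_edgeArc_subset_of_not_isStraight hv)
    (arcInterior_edgeArc_subset hxy.lt hxy.le_add_four hy)

lemma disjoint_edgeArc (hc : IsSideChoice e c) (huv : WindowEdge e j u v)
    (hxy : WindowEdge e j x y) (hne : u ≠ x ∨ v ≠ y) :
    Disjoint (arcInterior (edgeArc c u v)) (arcInterior (edgeArc c x y)) := by
  by_cases hv : IsStraight c u v
  · by_cases hy : IsStraight c x y
    · exact (hc.disjoint_openChord_of_isStraight huv hxy hne hv hy).mono
        (arcInterior_edgeArc_subset huv.lt huv.le_add_four hv)
        (arcInterior_edgeArc_subset hxy.lt hxy.le_add_four hy)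
    · exact (hc.disjoint_edgeArc_of_not_isStraight hxy huv (hne.imp Ne.symm Ne.symm) hy).symm
  · exact hc.disjoint_edgeArc_of_not_isStraight huv hxy hne hv

end IsSideChoice

end Pentagon

section Drawing

variable {n : ℕ} {G : SimpleGraph (Fin n)} {c : ℕ → Sides}

/-- The point of the plane at which every vertex `v_u` is drawn: the five vertices of a window
occupy five different points, and a vertex entering the window replaces the one leaving it. -/
def vertexPoint (u : ℕ) : Pt := (foot (2 * u), 0)

/-- The drawing of the edge between `v_u` and `v_v` as an arc from `v_u` to `v_v`. -/
noncomputable def edgeCurve (c : ℕ → Sides) (u v : ℕ) : ℝ → Pt :=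
  if u < v then edgeArc c u v
  else if v < u then fun t => edgeArc c v u (1 - t)
  else fun _ => vertexPoint u

/-- The drawing of all vertices and edges whose restrictions to the windows realize the story. -/
noncomputable def storyDrawing (n : ℕ) (c : ℕ → Sides) : RawDrawing n where
  pos u := vertexPoint u
  curve u v := edgeCurve c u v

lemma vertexPoint_eq_vertexPoint {u v : ℕ} : vertexPoint u = vertexPoint v ↔ u % 5 = v % 5 := by
  rw [vertexPoint, vertexPoint, Prod.mk_left_inj, foot_eq_foot]
  omega

lemma edgeCurve_symm (c : ℕ → Sides) (u v : ℕ) :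
    edgeCurve c v u = fun t => edgeCurve c u v (1 - t) := by
  unfold edgeCurve
  rcases lt_trichotomy u v with h | rfl | h
  · simp only [if_pos h, if_neg h.not_gt]
  · simp only [lt_irrefl, if_false]
  · simp only [if_pos h, if_neg h.not_gt, sub_sub_cancel]

lemma isArcFrom_edgeCurve {u v : ℕ} (hne : u ≠ v) (hvu : v ≤ u + 4) (huv : u ≤ v + 4) :
    IsArcFrom (edgeCurve c u v) (vertexPoint u) (vertexPoint v) := by
  wlog h : u < v generalizing u v
  · rw [edgeCurve_symm]
    exact (this hne.symm huv hvu (by omega)).reverse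
  · rw [edgeCurve, if_pos h]
    exact isArcFrom_edgeArc h hvu

lemma exists_windowEdge {i : ℕ} {u v : Fin n} (hu : u ∈ window n 5 i) (hv : v ∈ window n 5 i)
    (hadj : G.Adj u v) : ∃ a b : Fin n, s(a, b) = s(u, v) ∧ WindowEdge (backEdge G) (i - 5) a b ∧
      arcInterior (edgeCurve c u v) = arcInterior (edgeArc c a b) := by
  wlog h : u < v generalizing u v
  · rw [edgeCurve_symm, arcInterior_reverse, Sym2.eq_swap]
    exact this hv hu hadj.symm (hadj.ne'.lt_of_le (not_lt.1 h))
  · obtain ⟨hu₁, hu₂⟩ := hu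
    obtain ⟨hv₁, hv₂⟩ := hv
    refine ⟨u, v, rfl, ⟨by omega, h, by omega, backEdge_sub hadj h⟩, ?_⟩
    rw [edgeCurve, if_pos (Fin.lt_def.1 h)]

lemma isPlanarDrawingOn_storyDrawing (hc : IsSideChoice (backEdge G) c) {P : Set Pt}
    (hP : ∀ u, vertexPoint u ∈ P) (i : ℕ) :
    IsPlanarDrawingOn n G (window n 5 i) P (storyDrawing n c) where
  pos_mem u _ := hP u
  pos_inj u hu v hv h := by
    have := vertexPoint_eq_vertexPoint.1 h
    obtain ⟨hu₁, hu₂⟩ := hu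
    obtain ⟨hv₁, hv₂⟩ := hv
    omega
  curve_symm u v := edgeCurve_symm c u v
  arc u hu v hv hadj := by
    obtain ⟨hu₁, hu₂⟩ := hu
    obtain ⟨hv₁, hv₂⟩ := hv
    exact isArcFrom_edgeCurve (Fin.val_ne_of_ne hadj.ne) (by omega) (by omega)
  vertex_off_arc u hu v hv hadj w _ := by
    obtain ⟨a, b, -, hab, heq⟩ := exists_windowEdge (c := c) hu hv hadj
    exact heq ▸ notMem_arcInterior_edgeArc hab.lt hab.le_add_four w
  no_cross u hu v hv x hx y hy huv hxy hne := by
    obtain ⟨a, b, hs, hab, heq⟩ := exists_windowEdge (c := c) hu hv huv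
    obtain ⟨a', b', hs', hab', heq'⟩ := exists_windowEdge (c := c) hx hy hxy
    have hne' : (a : ℕ) ≠ a' ∨ (b : ℕ) ≠ b' := by
      rw [← hs, ← hs'] at hne
      by_contra! h
      exact hne (by rw [Fin.ext h.1, Fin.ext h.2])
    exact (heq ▸ heq' ▸ hc.disjoint_edgeArc hab hab' hne').inter_eq

/-- The five points at which the vertices are drawn. -/
noncomputable def vertexPoints : Finset Pt := (Finset.range 5).image vertexPoint

lemma card_vertexPoints : vertexPoints.card = 5 := by
  refine (Finset.card_image_of_injOn fun u hu v hv h => ?_).trans (Finset.card_range 5)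
  have := vertexPoint_eq_vertexPoint.1 h
  rw [Finset.coe_range, mem_Iio] at hu hv
  omega

lemma vertexPoint_mem_vertexPoints (u : ℕ) : vertexPoint u ∈ vertexPoints :=
  Finset.mem_image.2 ⟨u % 5, Finset.mem_range.2 (Nat.mod_lt u (by norm_num)),
    vertexPoint_eq_vertexPoint.2 (Nat.mod_mod u 5)⟩

/-- The restriction of the drawing to a window; there are no extra points to mark. -/
noncomputable def windowDrawing (hc : IsSideChoice (backEdge G) c) (i : ℕ) :
    WeightedDrawing n 0 G (window n 5 i) where
  D := storyDrawing n c
  planar := isPlanarDrawingOn_storyDrawing hc (fun _ => mem_univ _) i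
  marks := ∅
  marks_card := rfl
  marks_off _ hp := absurd hp (Finset.notMem_empty _)

lemma realizable_of_isSideChoice (hc : IsSideChoice (backEdge G) c) : Realizable n 5 0 G :=
  ⟨vertexPoints, card_vertexPoints, ⟨{
    Γ := fun _ => storyDrawing n c
    planar := fun i _ _ => isPlanarDrawingOn_storyDrawing hc vertexPoint_mem_vertexPoints i
    pos_eq := fun _ _ _ _ _ => rfl
    curve_eq := fun _ _ _ _ _ _ _ _ => rfl }⟩⟩

lemma compatiblePair_windowDrawing (hc : IsSideChoice (backEdge G) c) {i : ℕ} (hi : 6 ≤ i)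
    (hin : i ≤ n) : CompatiblePair n 5 0 G i (windowDrawing hc (i - 1)) (windowDrawing hc i) := by
  refine ⟨⟨i - 6, by omega⟩, ⟨i - 1, by omega⟩, Nat.sub_add_cancel hi,
    Nat.sub_add_cancel (by omega), Homeomorph.refl _, fun _ _ => rfl, fun _ _ _ _ _ => image_id _,
    ?_⟩
  have hreplace : vertexPoint (i - 6) = vertexPoint (i - 1) :=
    vertexPoint_eq_vertexPoint.2 (by omega)
  simp only [windowDrawing, storyDrawing, hreplace]
  exact image_id _

end Drawing

theorem cubic_triconnected_minimal_story_realizable_general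
    (n : ℕ) (G : SimpleGraph (Fin n)) (hn : 5 ≤ n)
    (h3 : ThreeConnected n G) (hcubic : Cubic n G) (hvis : Visible n 5 G) :
    Realizable n 5 0 G ∧
      ∃ W : (i : ℕ) → WeightedDrawing n 0 G (window n 5 i),
        ∀ i, 6 ≤ i → i ≤ n → CompatiblePair n 5 0 G i (W (i - 1)) (W i) := by
  obtain ⟨c, hc⟩ := (isCubicProfile_backEdge hn h3 hcubic hvis).exists_isSideChoice
  exact ⟨realizable_of_isSideChoice hc, windowDrawing hc,
    fun _ hi hin => compatiblePair_windowDrawing hc hi hin⟩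

/-- **Theorem 5.** Every minimal graph story `S = (G, 5, τ)`
where `G` is an `n`-vertex planar triconnected cubic graph is realizable;
moreover a sequence of pairwise compatible planar embeddings for `S` exists
(the paper shows it can even be computed in `O(n)` time). -/
theorem cubic_triconnected_minimal_story_realizable
    (n : ℕ) (G : SimpleGraph (Fin n)) (hn : 5 ≤ n)
    (hplanar : PlanarGraph n G) (h3 : ThreeConnected n G) (hcubic : Cubic n G)
    (hvis : Visible n 5 G) :
    Realizable n 5 0 G ∧
      ∃ W : (i : ℕ) → 5 ≤ i → i ≤ n → WeightedDrawing n 0 G (window n 5 i),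
        ∀ (i : ℕ) (h1 : 5 + 1 ≤ i) (h2 : i ≤ n),
          CompatiblePair n 5 0 G i
            (W (i - 1) (by omega) (by omega)) (W i (by omega) h2) := by
  obtain ⟨hreal, W, hW⟩ :=
    cubic_triconnected_minimal_story_realizable_general n G hn h3 hcubic hvis
  exact ⟨hreal, fun i _ _ => W i, hW⟩

end GraphStories
end
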